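/- Assume Ω is a bounded C¹ domain with outward normal ν, b is Lipschitz with b(0)=0, the origin is globally asymptotically stable for Ẋ = b(X), b·ν < 0 on ∂Ω, b(x)·x ≤ −b₀|x|² on B_{r₀}, and a^ε ∈ C(Q̄;𝕊ⁿ(θ₀)). For each δ > 0 and C₀ > 0 there exist constants ε₀ ∈ (0,1) and C > 0 such that: if, for ε ∈ (0,ε₀], u^ε is a classical solution of (L) satisfying |u^ε| ≤ C₀ in Ω×[0,∞), then |u^ε(x,t) − u^ε(0,t)| ≤ δ for all (x,t) ∈ Ω_δ × [C|log ε|, ∞). -/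

import Mathlib

open Set Filter Metric Topology
open scoped ENNReal

noncomputable section

/-- `n`-dimensional Euclidean space. -/
abbrev Eu (n : ℕ) := EuclideanSpace ℝ (Fin n)

variable {n : ℕ}

/-- Euclidean dot product. -/
def dotp (x y : Eu n) : ℝ := ∑ i, x i * y i

/-- The quadratic form `A p · p` of a matrix `A`. -/
def mquad (A : Matrix (Fin n) (Fin n) ℝ) (p : Eu n) : ℝ := ∑ i, ∑ j, A i j * p i * p j

/-- `A ∈ 𝕊ⁿ(θ)`: symmetric with `θ I ≤ A ≤ θ⁻¹ I`. -/
def memS (θ : ℝ) (A : Matrix (Fin n) (Fin n) ℝ) : Prop :=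
  A.IsSymm ∧ ∀ p : Eu n, θ * ‖p‖ ^ 2 ≤ mquad A p ∧ mquad A p ≤ θ⁻¹ * ‖p‖ ^ 2

/-- order of symmetric matrices (via quadratic forms). -/
def mle (A B : Matrix (Fin n) (Fin n) ℝ) : Prop := ∀ p : Eu n, mquad A p ≤ mquad B p

/-- trace of the product `A·H`. -/
def trMul (A H : Matrix (Fin n) (Fin n) ℝ) : ℝ := ∑ i, ∑ j, A i j * H j i

/-- the Pucci maximal operator associated with `𝕊ⁿ(θ)`. -/
def pucci (θ : ℝ) (X : Matrix (Fin n) (Fin n) ℝ) : ℝ :=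
  sSup ((fun A => trMul A X) '' {A | memS θ A})

/-- time derivative of `u(x,t)`. -/
def tD (u : Eu n → ℝ → ℝ) (x : Eu n) (t : ℝ) : ℝ := deriv (u x) t

/-- spatial gradient of `u(x,t)`. -/
def sG (u : Eu n → ℝ → ℝ) (x : Eu n) (t : ℝ) : Eu n := gradient (fun y => u y t) x

/-- spatial Hessian matrix of `u(x,t)`. -/
def sH (u : Eu n → ℝ → ℝ) (x : Eu n) (t : ℝ) : Matrix (Fin n) (Fin n) ℝ :=
  fun i j => fderiv ℝ (fun y => sG u y t i) x (EuclideanSpace.single j 1)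

/-- Hessian matrix of a static function. -/
def hessS (v : Eu n → ℝ) (x : Eu n) : Matrix (Fin n) (Fin n) ℝ :=
  fun i j => fderiv ℝ (fun y => gradient v y i) x (EuclideanSpace.single j 1)

/-- closed parabolic cylinder `Q̄_T = closure Ω × [0,T]` (with `T ∈ (0,∞]`). -/
def cylC (Ω : Set (Eu n)) (T : ℝ≥0∞) : Set (Eu n × ℝ) :=
  {p | p.1 ∈ closure Ω ∧ 0 ≤ p.2 ∧ ENNReal.ofReal p.2 ≤ T}

/-- open parabolic cylinder `Q_T = Ω × (0,T)`. -/
def cylO (Ω : Set (Eu n)) (T : ℝ≥0∞) : Set (Eu n × ℝ) :=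
  {p | p.1 ∈ Ω ∧ 0 < p.2 ∧ ENNReal.ofReal p.2 < T}

/-- `u ∈ C^{2,1}(Q_T)`. -/
def C21 (u : Eu n → ℝ → ℝ) (Ω : Set (Eu n)) (T : ℝ≥0∞) : Prop :=
  (∀ x ∈ Ω, ∀ t : ℝ, 0 < t → ENNReal.ofReal t < T →
     ContDiffAt ℝ 2 (fun y => u y t) x ∧ DifferentiableAt ℝ (u x) t) ∧
  ContinuousOn (fun p : Eu n × ℝ => tD u p.1 p.2) (cylO Ω T) ∧
  ContinuousOn (fun p : Eu n × ℝ => sH u p.1 p.2) (cylO Ω T)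

/-- `u ∈ C(Q̄_T) ∩ C^{2,1}(Q_T)`. -/
def Classical21 (u : Eu n → ℝ → ℝ) (Ω : Set (Eu n)) (T : ℝ≥0∞) : Prop :=
  ContinuousOn (fun p : Eu n × ℝ => u p.1 p.2) (cylC Ω T) ∧ C21 u Ω T

/-- a coefficient field in `C(Q̄_T; 𝕊ⁿ(θ))`. -/
def MatC (θ : ℝ) (A : Eu n → ℝ → Matrix (Fin n) (Fin n) ℝ) (Ω : Set (Eu n))
    (T : ℝ≥0∞) : Prop :=
  ContinuousOn (fun p : Eu n × ℝ => A p.1 p.2) (cylC Ω T) ∧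
  ∀ p ∈ cylC Ω T, memS θ (A p.1 p.2)

/-- `u` is a classical solution of `u_t = ε tr[A D²u] + b·Du` in `Q_T`. -/
def SolveL (ε : ℝ) (A : Eu n → ℝ → Matrix (Fin n) (Fin n) ℝ) (b : Eu n → Eu n)
    (u : Eu n → ℝ → ℝ) (Ω : Set (Eu n)) (T : ℝ≥0∞) : Prop :=
  ∀ x ∈ Ω, ∀ t : ℝ, 0 < t → ENNReal.ofReal t < T →
    tD u x t = ε * trMul (A x t) (sH u x t) + dotp (b x) (sG u x t)

/-- `u` is a classical subsolution of `(L)` in `Q_T`. -/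
def SubsolL (ε : ℝ) (A : Eu n → ℝ → Matrix (Fin n) (Fin n) ℝ) (b : Eu n → Eu n)
    (u : Eu n → ℝ → ℝ) (Ω : Set (Eu n)) (T : ℝ≥0∞) : Prop :=
  ∀ x ∈ Ω, ∀ t : ℝ, 0 < t → ENNReal.ofReal t < T →
    tD u x t ≤ ε * trMul (A x t) (sH u x t) + dotp (b x) (sG u x t)

/-- `u` is a classical supersolution of `(L)` in `Q_T`. -/
def SupersolL (ε : ℝ) (A : Eu n → ℝ → Matrix (Fin n) (Fin n) ℝ) (b : Eu n → Eu n)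
    (u : Eu n → ℝ → ℝ) (Ω : Set (Eu n)) (T : ℝ≥0∞) : Prop :=
  ∀ x ∈ Ω, ∀ t : ℝ, 0 < t → ENNReal.ofReal t < T →
    ε * trMul (A x t) (sH u x t) + dotp (b x) (sG u x t) ≤ tD u x t

/-- viscosity subsolution of `H(x,Du) = 0` on `A`. -/
def ViscSub (H : Eu n → Eu n → ℝ) (A : Set (Eu n)) (u : Eu n → ℝ) : Prop :=
  ∀ φ : Eu n → ℝ, ContDiff ℝ 1 φ → ∀ x ∈ A,
    IsLocalMaxOn (fun y => u y - φ y) A x → H x (gradient φ x) ≤ 0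

/-- viscosity supersolution of `H(x,Du) = 0` on `A`. -/
def ViscSup (H : Eu n → Eu n → ℝ) (A : Set (Eu n)) (u : Eu n → ℝ) : Prop :=
  ∀ φ : Eu n → ℝ, ContDiff ℝ 1 φ → ∀ x ∈ A,
    IsLocalMinOn (fun y => u y - φ y) A x → 0 ≤ H x (gradient φ x)

/-- the Hamiltonian `H_α(x,p) = α(x) p·p + b(x)·p`. -/
def Ham (α : Eu n → Matrix (Fin n) (Fin n) ℝ) (b : Eu n → Eu n) (x p : Eu n) : ℝ :=
  mquad (α x) p + dotp (b x) p

/-- the quasi-potential `V_α`: the pointwise supremum (= maximal element) of all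
Lipschitz viscosity subsolutions of `H_α(x,Du)=0` in `Ω` vanishing at the origin. -/
def Vq (α : Eu n → Matrix (Fin n) (Fin n) ℝ) (b : Eu n → Eu n) (Ω : Set (Eu n))
    (x : Eu n) : ℝ :=
  sSup {r | ∃ u : Eu n → ℝ, (∃ K : NNReal, LipschitzOnWith K u (closure Ω)) ∧
    u 0 = 0 ∧ ViscSub (Ham α b) Ω u ∧ r = u x}

/-- `M_α = min_{∂Ω} V_α`. -/
def Mq (α : Eu n → Matrix (Fin n) (Fin n) ℝ) (b : Eu n → Eu n) (Ω : Set (Eu n)) : ℝ :=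
  sInf (Vq α b Ω '' frontier Ω)

/-- `argmin (V_α | ∂Ω)`. -/
def argminV (α : Eu n → Matrix (Fin n) (Fin n) ℝ) (b : Eu n → Eu n)
    (Ω : Set (Eu n)) : Set (Eu n) :=
  {x ∈ frontier Ω | ∀ y ∈ frontier Ω, Vq α b Ω x ≤ Vq α b Ω y}

/-- `Σ_α^m = {x ∈ Ω̄ : V_α(x) ≤ m}`. -/
def SigmaM (α : Eu n → Matrix (Fin n) (Fin n) ℝ) (b : Eu n → Eu n) (Ω : Set (Eu n))
    (m : ℝ) : Set (Eu n) :=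
  {x ∈ closure Ω | Vq α b Ω x ≤ m}

/-- `Ω` is a bounded `C¹` domain with outward unit normal `ν`. -/
def IsBdC1With (Ω : Set (Eu n)) (ν : Eu n → Eu n) : Prop :=
  IsOpen Ω ∧ Bornology.IsBounded Ω ∧
  ∃ ρ : Eu n → ℝ, ContDiff ℝ 1 ρ ∧ Ω = {x | ρ x < 0} ∧
    ∀ x ∈ frontier Ω, gradient ρ x ≠ 0 ∧ ν x = ‖gradient ρ x‖⁻¹ • gradient ρ x

/-- `X` is the flow of `b`, and the origin is globally asymptotically stable. -/
def GAS (b : Eu n → Eu n) (X : ℝ → Eu n → Eu n) : Prop :=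
  (∀ x, X 0 x = x) ∧ (∀ x t, HasDerivAt (fun s => X s x) (b (X t x)) t) ∧
  (∀ x, Tendsto (fun t => X t x) atTop (nhds 0)) ∧
  (∀ ε > (0:ℝ), ∃ δ > (0:ℝ), ∀ x : Eu n, ‖x‖ < δ → ∀ t ≥ (0:ℝ), ‖X t x‖ < ε)

/-- `Ω_δ = {x ∈ Ω : dist(x,∂Ω) > δ}`. -/
def Omd (Ω : Set (Eu n)) (δ : ℝ) : Set (Eu n) := {x ∈ Ω | δ < infDist x (frontier Ω)}

/-- `Ω^Π_δ = {x ∈ Ω̄ : dist(x, ∂Ω \ Π) > δ}`. -/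
def OmPid (Ω Pset : Set (Eu n)) (δ : ℝ) : Set (Eu n) :=
  {x ∈ closure Ω | δ < infDist x (frontier Ω \ Pset)}

/-- the standing assumptions (B). -/
structure SettingB (n : ℕ) where
  Ω : Set (Eu n)
  ν : Eu n → Eu n
  g : Eu n → ℝ
  θ₀ : ℝ
  a : Eu n → ℝ → Matrix (Fin n) (Fin n) ℝ
  b : Eu n → Eu n
  b₀ : ℝ
  r₀ : ℝ
  θ₀_mem : θ₀ ∈ Set.Ioc (0 : ℝ) 1
  domain : IsBdC1With Ω ν
  zero_mem : (0 : Eu n) ∈ Ω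
  g_cont : ContinuousOn g (closure Ω)
  a_cont : ContinuousOn (fun p : Eu n × ℝ => a p.1 p.2) (closure Ω ×ˢ Set.univ)
  a_mem : ∀ x ∈ closure Ω, ∀ c : ℝ, memS θ₀ (a x c)
  b_lip : ∃ K : NNReal, LipschitzWith K b
  b_zero : b 0 = 0
  b_gas : ∃ X : ℝ → Eu n → Eu n, GAS b X
  b_inward : ∀ x ∈ frontier Ω, dotp (b x) (ν x) < 0
  b₀_pos : 0 < b₀
  r₀_pos : 0 < r₀
  ball_sub : closedBall (0 : Eu n) r₀ ⊆ Ω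
  b_coerc : ∀ x ∈ ball (0 : Eu n) r₀, dotp (b x) x ≤ -b₀ * ‖x‖ ^ 2

namespace SettingB

variable (S : SettingB n)

/-- the quasi-potential `V^c` associated with `(a(·,c), b)`. -/
def Vc (c : ℝ) : Eu n → ℝ := Vq (fun x => S.a x c) S.b S.Ω

/-- `M(c) = min_{∂Ω} V^c`. -/
def M (c : ℝ) : ℝ := sInf (S.Vc c '' frontier S.Ω)

/-- `G(c) = {g(x) : x ∈ argmin(V^c|∂Ω)}`. -/
def Gset (c : ℝ) : Set ℝ := S.g '' argminV (fun x => S.a x c) S.b S.Ω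

/-- `G⁺(c) = max G(c)`. -/
def Gp (c : ℝ) : ℝ := sSup (S.Gset c)

/-- `G⁻(c) = min G(c)`. -/
def Gm (c : ℝ) : ℝ := sInf (S.Gset c)

/-- `c₀ = g(0)`. -/
def c0 : ℝ := S.g 0

/-- `g_min = min_{Ω̄} g`. -/
def gmin : ℝ := sInf (S.g '' closure S.Ω)

/-- `g_max = max_{Ω̄} g`. -/
def gmax : ℝ := sSup (S.g '' closure S.Ω)

/-- the crossing value `c₁`. -/
def c1 : ℝ :=
  if S.c0 ≤ S.Gp S.c0 then sInf {c | S.c0 ≤ c ∧ S.Gm c ≤ c}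
  else sSup {c | c ≤ S.c0 ∧ c ≤ S.Gp c}

/-- the function `c̄ : (0,∞) → I_g`. -/
def cbar (l : ℝ) : ℝ :=
  if l < S.M S.c0 ∨ S.c1 = S.c0 then S.c0
  else if S.c0 < S.c1 then min S.c1 (sInf {c | c ∈ Set.Icc S.c0 S.c1 ∧ S.M c = l})
  else max S.c1 (sSup {c | c ∈ Set.Icc S.c1 S.c0 ∧ S.M c = l})

/-- assumption (FK13): `G⁺(c₀) = G⁻(c₀)`. -/
def FK13 : Prop := S.Gp S.c0 = S.Gm S.c0

/-- assumption (FK12). -/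
def FK12 : Prop :=
  ∀ δ₀ > (0:ℝ), ∃ δ ∈ Set.Ioc (0:ℝ) δ₀,
    (S.c1 ≤ S.c0 ∧ S.gmin < S.c1 → S.c1 - δ < S.Gm (S.c1 - δ)) ∧
    (S.c0 ≤ S.c1 ∧ S.c1 < S.gmax → S.Gp (S.c1 + δ) < S.c1 + δ)

/-- `u` is a classical (`C(Q̄) ∩ C^{2,1}(Q)`) solution of the quasi-linear equation (QL). -/
def SolvesQL (ε : ℝ) (u : Eu n → ℝ → ℝ) : Prop :=
  Classical21 u S.Ω ⊤ ∧ SolveL ε (fun x t => S.a x (u x t)) S.b u S.Ω ⊤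

/-- the boundary condition (BC): `u = g` on the parabolic boundary of `Q`. -/
def BC (u : Eu n → ℝ → ℝ) : Prop :=
  (∀ x ∈ closure S.Ω, u x 0 = S.g x) ∧ ∀ x ∈ frontier S.Ω, ∀ t > (0:ℝ), u x t = S.g x

end SettingB

/-!
Near the origin the substitution `y = x / √ε` turns the equation into a uniformly parabolic one of
unit size with bounded drift, for which the Krylov–Safonov theory (the Aleksandrov–Bakelman–Pucci
measure estimate, a stacked covering argument and the propagation of positivity) yields an
oscillation dichotomy at scale `√ε`: in bounded time one of the two bounds of a solution improves
by a fixed fraction. The inward drift spreads the improvement from scale `√ε` to a fixed ball within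
time `O(|log ε|)`, which is made quantitative by paraboloid barriers whose opening decays
exponentially. A finite number of such rounds on a shrinking sequence of balls makes the oscillation
on a small ball around the origin at most `δ / 2`. Since the flow of `b` carries every point of
`Ω_δ` into that ball in a bounded time while staying inside `Ω`, barriers that follow trajectories
backwards transport the estimate to `Ω_δ` with a loss of order `ε`.
-/

/-! ### Gradients and Hessians -/

lemma dotp_eq_inner (x y : Eu n) : dotp x y = inner ℝ x y := by
  simp [dotp, PiLp.inner_apply, mul_comm]

lemma gradient_apply (f : Eu n → ℝ) (y : Eu n) (i : Fin n) :
    gradient f y i = fderiv ℝ f y (EuclideanSpace.single i 1) := by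
  rw [← inner_gradient_left, EuclideanSpace.inner_single_right]
  simp

lemma contDiffAt_gradient {f : Eu n → ℝ} {x : Eu n} (hf : ContDiffAt ℝ 2 f x) :
    ContDiffAt ℝ 1 (gradient f) x :=
  (InnerProductSpace.toDual ℝ (Eu n)).symm.contDiff.contDiffAt.comp x
    (hf.fderiv_right (m := 1) (by norm_num))

lemma eventually_differentiableAt_of_contDiffAt_two {f : Eu n → ℝ} {x : Eu n}
    (hf : ContDiffAt ℝ 2 f x) : ∀ᶠ y in 𝓝 x, DifferentiableAt ℝ f y :=
  (hf.eventually (by simp)).mono fun _ hy => hy.differentiableAt (by norm_num)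

lemma hessS_apply_of_hasFDerivAt_gradient {f : Eu n → ℝ} {x : Eu n} {L : Eu n →L[ℝ] Eu n}
    (h : HasFDerivAt (gradient f) L x) (i j : Fin n) :
    hessS f x i j = L (EuclideanSpace.single j 1) i := by
  have hi : HasFDerivAt (fun y => gradient f y i) ((EuclideanSpace.proj i).comp L) x :=
    (EuclideanSpace.proj i : Eu n →L[ℝ] ℝ).hasFDerivAt.comp x h
  rw [hessS, hi.fderiv]
  rfl

lemma toEuclideanCLM_hessS_of_hasFDerivAt_gradient {f : Eu n → ℝ} {x : Eu n}
    {L : Eu n →L[ℝ] Eu n} (h : HasFDerivAt (gradient f) L x) :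
    Matrix.toEuclideanCLM (𝕜 := ℝ) (hessS f x) = L := by
  refine ContinuousLinearMap.coe_injective
    ((EuclideanSpace.basisFun (Fin n) ℝ).toBasis.ext fun j => PiLp.ext fun i => ?_)
  simp [hessS_apply_of_hasFDerivAt_gradient h]

lemma hasFDerivAt_gradient {f : Eu n → ℝ} {x : Eu n} (hf : ContDiffAt ℝ 2 f x) :
    HasFDerivAt (gradient f) (Matrix.toEuclideanCLM (𝕜 := ℝ) (hessS f x)) x := by
  have h := ((contDiffAt_gradient hf).differentiableAt (by norm_num)).hasFDerivAt
  rwa [toEuclideanCLM_hessS_of_hasFDerivAt_gradient h]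

lemma mquad_eq_dotProduct (A : Matrix (Fin n) (Fin n) ℝ) (p : Eu n) :
    mquad A p = p.ofLp ⬝ᵥ A.mulVec p.ofLp := by
  simp only [mquad, Matrix.mulVec, dotProduct, Finset.mul_sum]
  exact Finset.sum_congr rfl fun i _ => Finset.sum_congr rfl fun j _ => by ring

lemma mquad_eq_inner (A : Matrix (Fin n) (Fin n) ℝ) (p : Eu n) :
    mquad A p = inner ℝ (Matrix.toEuclideanCLM (𝕜 := ℝ) A p) p := by
  simp [mquad_eq_dotProduct, EuclideanSpace.inner_eq_star_dotProduct]

lemma isSymm_hessS {f : Eu n → ℝ} {x : Eu n} (hf : ContDiffAt ℝ 2 f x) :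
    (hessS f x).IsSymm := by
  have hsymm : IsSymmSndFDerivAt ℝ f x := hf.isSymmSndFDerivAt (by simp)
  have hdiff : DifferentiableAt ℝ (fderiv ℝ f) x :=
    (hf.fderiv_right (m := 1) (by norm_num)).differentiableAt (by norm_num)
  have happly (i j : Fin n) : hessS f x i j =
      fderiv ℝ (fderiv ℝ f) x (EuclideanSpace.single j 1) (EuclideanSpace.single i 1) := by
    simp only [hessS, gradient_apply]
    rw [fderiv_clm_apply hdiff (differentiableAt_const _)]
    simp
  ext i j
  rw [Matrix.transpose_apply, happly, happly]
  exact hsymm _ _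

lemma gradient_sub {f g : Eu n → ℝ} {x : Eu n} (hf : DifferentiableAt ℝ f x)
    (hg : DifferentiableAt ℝ g x) : gradient (f - g) x = gradient f x - gradient g x := by
  simp only [gradient, fderiv_sub hf hg, map_sub]

lemma hessS_sub {f g : Eu n → ℝ} {x : Eu n} (hf : ContDiffAt ℝ 2 f x)
    (hg : ContDiffAt ℝ 2 g x) : hessS (f - g) x = hessS f x - hessS g x := by
  have hsub : gradient (f - g) =ᶠ[𝓝 x] gradient f - gradient g := by
    filter_upwards [eventually_differentiableAt_of_contDiffAt_two hf,
      eventually_differentiableAt_of_contDiffAt_two hg] with y hfy hgy using gradient_sub hfy hgy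
  have h := ((hasFDerivAt_gradient hf).sub (hasFDerivAt_gradient hg)).congr_of_eventuallyEq hsub
  ext i j
  simp [hessS_apply_of_hasFDerivAt_gradient h]

lemma deriv_deriv_nonneg_of_isLocalMin {g : ℝ → ℝ} {a : ℝ} (hg : ContinuousAt g a)
    (hmin : IsLocalMin g a) : 0 ≤ deriv (deriv g) a := by
  by_contra! hneg
  have hmax : IsLocalMax g a := isLocalMax_of_deriv_deriv_neg hneg hmin.deriv_eq_zero hg
  have hconst : g =ᶠ[𝓝 a] fun _ => g a := by
    filter_upwards [hmin, hmax] with s h₁ h₂ using le_antisymm h₂ h₁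
  have hderiv : deriv g =ᶠ[𝓝 a] fun _ => 0 := by
    filter_upwards [hconst.deriv] with s hs
    rw [hs, deriv_const]
  rw [hderiv.deriv_eq, deriv_const] at hneg
  exact lt_irrefl _ hneg

lemma deriv_deriv_comp_line {f : Eu n → ℝ} {x : Eu n} (hf : ContDiffAt ℝ 2 f x) (p : Eu n) :
    deriv (deriv fun s : ℝ => f (x + s • p)) 0 = mquad (hessS f x) p := by
  have hline (s : ℝ) : HasDerivAt (fun s : ℝ => x + s • p) p s := by
    simpa using ((hasDerivAt_id s).smul_const p).const_add x
  have htendsto : Tendsto (fun s : ℝ => x + s • p) (𝓝 0) (𝓝 x) := by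
    simpa using (hline 0).continuousAt.tendsto
  have hfirst : (deriv fun s : ℝ => f (x + s • p)) =ᶠ[𝓝 0]
      fun s => inner ℝ (gradient f (x + s • p)) p := by
    filter_upwards [htendsto.eventually (eventually_differentiableAt_of_contDiffAt_two hf)]
      with s hs
    rw [inner_gradient_left]
    exact (hs.hasFDerivAt.comp_hasDerivAt s (hline s)).deriv
  have hgrad : HasFDerivAt (gradient f) (Matrix.toEuclideanCLM (𝕜 := ℝ) (hessS f x))
      (x + (0 : ℝ) • p) := by
    simpa using hasFDerivAt_gradient hf
  have hsecond := (hgrad.comp_hasDerivAt (0 : ℝ) (hline 0)).inner ℝ (hasDerivAt_const (0 : ℝ) p)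
  rw [hfirst.deriv_eq, mquad_eq_inner]
  simpa using hsecond.deriv

/-! ### Symmetric matrices -/

lemma trMul_eq_trace (A H : Matrix (Fin n) (Fin n) ℝ) : trMul A H = (A * H).trace := by
  simp [trMul, Matrix.trace, Matrix.mul_apply]

lemma mquad_one (p : Eu n) : mquad 1 p = ‖p‖ ^ 2 := by
  simp [mquad_eq_inner]

lemma mquad_sub (H K : Matrix (Fin n) (Fin n) ℝ) (p : Eu n) :
    mquad (H - K) p = mquad H p - mquad K p := by
  simp [mquad_eq_inner, inner_sub_left]

lemma mquad_smul (c : ℝ) (H : Matrix (Fin n) (Fin n) ℝ) (p : Eu n) :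
    mquad (c • H) p = c * mquad H p := by
  simp [mquad_eq_inner, inner_smul_left]

lemma posSemidef_of_mquad_nonneg {H : Matrix (Fin n) (Fin n) ℝ} (hsymm : H.IsSymm)
    (hquad : ∀ p : Eu n, 0 ≤ mquad H p) : H.PosSemidef := by
  refine .of_dotProduct_mulVec_nonneg ?_ fun x => ?_
  · rwa [Matrix.IsHermitian, Matrix.conjTranspose_eq_transpose_of_trivial]
  · simpa [mquad_eq_dotProduct] using hquad (WithLp.toLp 2 x)

open scoped MatrixOrder in
lemma trace_mul_nonneg_of_posSemidef {A H : Matrix (Fin n) (Fin n) ℝ} (hA : A.PosSemidef)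
    (hH : H.PosSemidef) : 0 ≤ (A * H).trace := by
  obtain ⟨B, rfl⟩ := CStarAlgebra.nonneg_iff_eq_star_mul_self.mp hH.nonneg
  rw [← mul_assoc, Matrix.trace_mul_comm, ← mul_assoc]
  exact (hA.mul_mul_conjTranspose_same B).trace_nonneg

lemma det_le_trace_pow_of_posSemidef {H : Matrix (Fin n) (Fin n) ℝ} (hH : H.PosSemidef) :
    H.det ≤ H.trace ^ n := by
  have heig (i : Fin n) : hH.isHermitian.eigenvalues i ≤ H.trace := by
    rw [hH.isHermitian.trace_eq_sum_eigenvalues]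
    exact Finset.single_le_sum (f := fun i => hH.isHermitian.eigenvalues i)
      (fun j _ => hH.eigenvalues_nonneg j) (Finset.mem_univ i)
  calc H.det = ∏ i, hH.isHermitian.eigenvalues i := by
        simpa using hH.isHermitian.det_eq_prod_eigenvalues
    _ ≤ ∏ _i : Fin n, H.trace :=
        Finset.prod_le_prod (fun i _ => hH.eigenvalues_nonneg i) fun i _ => heig i
    _ = H.trace ^ n := by simp

lemma memS.mul_trace_le {θ : ℝ} {A H : Matrix (Fin n) (Fin n) ℝ} (hA : memS θ A)
    (hH : H.PosSemidef) : θ * H.trace ≤ trMul A H := by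
  have hsub : (A - θ • 1).PosSemidef := by
    refine posSemidef_of_mquad_nonneg (hA.1.sub (Matrix.isSymm_one.smul θ)) fun p => ?_
    rw [mquad_sub, mquad_smul, mquad_one]
    exact sub_nonneg.2 (hA.2 p).1
  have htrace := trace_mul_nonneg_of_posSemidef hsub hH
  rw [sub_mul, Matrix.trace_sub, smul_mul_assoc, one_mul, Matrix.trace_smul, smul_eq_mul] at htrace
  rw [trMul_eq_trace]
  exact sub_nonneg.1 htrace

lemma memS.posSemidef {θ : ℝ} (hθ : 0 ≤ θ) {A : Matrix (Fin n) (Fin n) ℝ} (hA : memS θ A) :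
    A.PosSemidef :=
  posSemidef_of_mquad_nonneg hA.1 fun p => (by positivity : 0 ≤ θ * ‖p‖ ^ 2).trans (hA.2 p).1

lemma memS.trace_le {θ : ℝ} {A : Matrix (Fin n) (Fin n) ℝ} (hA : memS θ A) :
    A.trace ≤ n * θ⁻¹ := by
  have hsub : (θ⁻¹ • 1 - A).PosSemidef := by
    refine posSemidef_of_mquad_nonneg ((Matrix.isSymm_one.smul θ⁻¹).sub hA.1) fun p => ?_
    rw [mquad_sub, mquad_smul, mquad_one]
    exact sub_nonneg.2 (hA.2 p).2
  have htrace := hsub.trace_nonneg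
  simp only [Matrix.trace_sub, Matrix.trace_smul, Matrix.trace_one, Fintype.card_fin,
    smul_eq_mul] at htrace
  linarith

lemma posSemidef_hessS_of_isLocalMin {f : Eu n → ℝ} {x : Eu n} (hf : ContDiffAt ℝ 2 f x)
    (hmin : IsLocalMin f x) : (hessS f x).PosSemidef := by
  refine posSemidef_of_mquad_nonneg (isSymm_hessS hf) fun p => ?_
  have hline : ContinuousAt (fun s : ℝ => x + s • p) 0 := by fun_prop
  have htendsto : Tendsto (fun s : ℝ => x + s • p) (𝓝 0) (𝓝 x) := by simpa using hline.tendsto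
  have hcont : ContinuousAt f (x + (0 : ℝ) • p) := by simpa using hf.continuousAt
  rw [← deriv_deriv_comp_line hf]
  refine deriv_deriv_nonneg_of_isLocalMin (ContinuousAt.comp hcont hline) ?_
  filter_upwards [htendsto.eventually hmin] with s hs
  simpa using hs

/-! ### Radial functions -/

section Radial

variable {g g' : ℝ → ℝ} {g'' : ℝ} {z x : Eu n}

lemma hasGradientAt_radial (hg : HasDerivAt g (g' (‖x - z‖ ^ 2)) (‖x - z‖ ^ 2)) :
    HasGradientAt (fun y => g (‖y - z‖ ^ 2)) ((2 * g' (‖x - z‖ ^ 2)) • (x - z)) x := by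
  have hsq : HasFDerivAt (fun y : Eu n => ‖y - z‖ ^ 2) (2 • innerSL ℝ (x - z)) x := by
    simpa using ((hasFDerivAt_id x).sub_const z).norm_sq
  rw [hasGradientAt_iff_hasFDerivAt]
  refine (hg.comp_hasFDerivAt x hsq).congr_fderiv ?_
  ext v
  simp
  ring

lemma hessS_radial (hg : ∀ r, HasDerivAt g (g' r) r)
    (hg' : HasDerivAt g' g'' (‖x - z‖ ^ 2)) :
    hessS (fun y => g (‖y - z‖ ^ 2)) x = (2 * g' (‖x - z‖ ^ 2)) • (1 : Matrix (Fin n) (Fin n) ℝ)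
      + (4 * g'') • Matrix.vecMulVec (x - z) (x - z) := by
  have hgrad : gradient (fun y => g (‖y - z‖ ^ 2)) =
      fun y => (2 * g' (‖y - z‖ ^ 2)) • (y - z) :=
    funext fun y => (hasGradientAt_radial (hg _)).gradient
  have hsq : HasFDerivAt (fun y : Eu n => ‖y - z‖ ^ 2) (2 • innerSL ℝ (x - z)) x := by
    simpa using ((hasFDerivAt_id x).sub_const z).norm_sq
  have hderiv := ((hg'.comp_hasFDerivAt x hsq).const_mul 2).smul
    ((hasFDerivAt_id x).sub_const z)
  ext i j
  rw [hessS_apply_of_hasFDerivAt_gradient (hderiv.congr_of_eventuallyEq (.of_eq hgrad))]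
  simp [Matrix.vecMulVec_apply, EuclideanSpace.inner_single_right, Matrix.one_apply]
  ring

lemma trMul_hessS_radial (hg : ∀ r, HasDerivAt g (g' r) r)
    (hg' : HasDerivAt g' g'' (‖x - z‖ ^ 2)) (a : Matrix (Fin n) (Fin n) ℝ) :
    trMul a (hessS (fun y => g (‖y - z‖ ^ 2)) x) =
      2 * g' (‖x - z‖ ^ 2) * a.trace + 4 * g'' * mquad a (x - z) := by
  have hvec : (a * Matrix.vecMulVec (x - z) (x - z)).trace = mquad a (x - z) := by
    rw [Matrix.mul_vecMulVec, Matrix.trace_vecMulVec, mquad_eq_dotProduct, dotProduct_comm]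
  rw [hessS_radial hg hg', trMul_eq_trace, mul_add, Matrix.trace_add, mul_smul_comm, mul_smul_comm,
    Matrix.trace_smul, Matrix.trace_smul, mul_one, hvec, smul_eq_mul, smul_eq_mul]

end Radial

/-! ### Classical solutions and the maximum principle -/

/-- The spatial part `ε tr(a D²v) + β · Dv` of the equation, with the coefficients frozen at the
point `(x, t)`. -/
def ellOp (ε : ℝ) (a : Matrix (Fin n) (Fin n) ℝ) (β : Eu n) (v : Eu n → ℝ → ℝ) (x : Eu n)
    (t : ℝ) : ℝ :=
  ε * trMul a (sH v x t) + dotp β (sG v x t)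

/-- `v` is a classical solution in the open set `D` of some linear equation
`v_t = ε tr(a D²v) + β · Dv` with diffusion matrices in `𝕊ⁿ(θ)` and drift `β(x,t) ∈ B x t`. The
coefficients are chosen pointwise, without any regularity in `(x, t)`. -/
structure IsParabolicSol (θ ε : ℝ) (B : Eu n → ℝ → Set (Eu n)) (D : Set (Eu n × ℝ))
    (v : Eu n → ℝ → ℝ) : Prop where
  isOpen : IsOpen D
  continuousOn : ContinuousOn (fun p : Eu n × ℝ => v p.1 p.2) D
  continuousOn_tD : ContinuousOn (fun p : Eu n × ℝ => tD v p.1 p.2) D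
  contDiffAt : ∀ {x t}, (x, t) ∈ D → ContDiffAt ℝ 2 (fun y => v y t) x
  differentiableAt : ∀ {x t}, (x, t) ∈ D → DifferentiableAt ℝ (v x) t
  exists_eq : ∀ {x t}, (x, t) ∈ D → ∃ a β, memS θ a ∧ β ∈ B x t ∧ tD v x t = ellOp ε a β v x t

/-- Solutions of uniformly parabolic equations without small parameter and with drift bounded
by `Λ`, the class to which the Krylov–Safonov theory applies. -/
abbrev IsNormalizedSol (θ Λ : ℝ) (D : Set (Eu n × ℝ)) (v : Eu n → ℝ → ℝ) : Prop :=
  IsParabolicSol θ 1 (fun _ _ => closedBall 0 Λ) D v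

lemma ellOp_radial (ε : ℝ) (a : Matrix (Fin n) (Fin n) ℝ) (β : Eu n) {g g' : ℝ → ℝ → ℝ} {g'' : ℝ}
    {z : ℝ → Eu n} {x : Eu n} {t : ℝ} (hg : ∀ r, HasDerivAt (g t) (g' t r) r)
    (hg' : HasDerivAt (g' t) g'' (‖x - z t‖ ^ 2)) :
    ellOp ε a β (fun y s => g s (‖y - z s‖ ^ 2)) x t =
      ε * (2 * g' t (‖x - z t‖ ^ 2) * a.trace + 4 * g'' * mquad a (x - z t)) +
        2 * g' t (‖x - z t‖ ^ 2) * inner ℝ β (x - z t) := by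
  have hG : sG (fun y s => g s (‖y - z s‖ ^ 2)) x t =
      (2 * g' t (‖x - z t‖ ^ 2)) • (x - z t) := (hasGradientAt_radial (hg _)).gradient
  rw [ellOp, hG, dotp_eq_inner, inner_smul_right]
  exact congrArg (ε * · + _) (trMul_hessS_radial hg hg' a)

section Touching

variable {f ψ : Eu n → ℝ} {x : Eu n}

lemma gradient_eq_of_isLocalMin_sub (hf : ContDiffAt ℝ 2 f x) (hψ : ContDiffAt ℝ 2 ψ x)
    (hmin : IsLocalMin (f - ψ) x) : gradient f x = gradient ψ x := by
  rw [← sub_eq_zero, ← gradient_sub (hf.differentiableAt (by norm_num))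
    (hψ.differentiableAt (by norm_num)), gradient, hmin.fderiv_eq_zero, map_zero]

lemma posSemidef_hessS_sub_of_isLocalMin (hf : ContDiffAt ℝ 2 f x) (hψ : ContDiffAt ℝ 2 ψ x)
    (hmin : IsLocalMin (f - ψ) x) : (hessS f x - hessS ψ x).PosSemidef :=
  hessS_sub hf hψ ▸ posSemidef_hessS_of_isLocalMin (hf.sub hψ) hmin

end Touching

lemma deriv_nonpos_of_eventually_le_left {g : ℝ → ℝ} {t : ℝ} (hg : DifferentiableAt ℝ g t)
    (h : ∀ᶠ s in 𝓝[<] t, g t ≤ g s) : deriv g t ≤ 0 := by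
  have hslope := (hasDerivAt_iff_tendsto_slope.mp hg.hasDerivAt).mono_left
    (nhdsWithin_mono (s := Iio t) t fun s (hs : s < t) => ne_of_lt hs)
  refine le_of_tendsto hslope ?_
  filter_upwards [h, self_mem_nhdsWithin] with s hs (hst : s < t)
  rw [slope_def_field]
  exact div_nonpos_of_nonneg_of_nonpos (sub_nonneg.2 hs) (sub_nonpos.2 hst.le)

lemma ellOp_le_of_touching {θ ε : ℝ} (hθ : 0 ≤ θ) (hε : 0 ≤ ε) {a : Matrix (Fin n) (Fin n) ℝ}
    (ha : memS θ a) (β : Eu n) {v ψ : Eu n → ℝ → ℝ} {x : Eu n} {t : ℝ}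
    (hv : ContDiffAt ℝ 2 (fun y => v y t) x) (hψ : ContDiffAt ℝ 2 (fun y => ψ y t) x)
    (hmin : IsLocalMin (fun y => v y t - ψ y t) x) : ellOp ε a β ψ x t ≤ ellOp ε a β v x t := by
  have hgrad : sG v x t = sG ψ x t := gradient_eq_of_isLocalMin_sub hv hψ hmin
  have htrace : 0 ≤ trMul a (sH v x t - sH ψ x t) := by
    rw [trMul_eq_trace]
    exact trace_mul_nonneg_of_posSemidef (ha.posSemidef hθ)
      (posSemidef_hessS_sub_of_isLocalMin hv hψ hmin)
  rw [trMul_eq_trace, mul_sub, Matrix.trace_sub, ← trMul_eq_trace, ← trMul_eq_trace] at htrace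
  rw [ellOp, ellOp, hgrad]
  gcongr
  exact sub_nonneg.1 htrace

theorem IsParabolicSol.ge_of_strict_subsol {θ ε : ℝ} (hθ : 0 ≤ θ) (hε : 0 ≤ ε)
    {B : Eu n → ℝ → Set (Eu n)} {D K : Set (Eu n × ℝ)} {v ψ : Eu n → ℝ → ℝ}
    (hv : IsParabolicSol θ ε B D v) (hK : IsCompact K) (hKD : K ⊆ D)
    (hψ : ContinuousOn (fun p : Eu n × ℝ => ψ p.1 p.2) K)
    (hsub : ∀ x t, (x, t) ∈ K → ψ x t ≤ v x t ∨
      (K ∈ 𝓝[{p | p.2 ≤ t}] (x, t) ∧ ContDiffAt ℝ 2 (fun y => ψ y t) x ∧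
        DifferentiableAt ℝ (ψ x) t ∧
        ∀ a, memS θ a → ∀ β ∈ B x t, tD ψ x t < ellOp ε a β ψ x t)) :
    ∀ x t, (x, t) ∈ K → ψ x t ≤ v x t := by
  intro x₀ t₀ h₀
  obtain ⟨⟨x, t⟩, hxt, hmin⟩ :=
    hK.exists_isMinOn ⟨_, h₀⟩ ((hv.continuousOn.mono hKD).sub hψ)
  rcases hsub x t hxt with hle | ⟨hnhds, hψ₂, hψt, hstrict⟩
  · exact sub_nonneg.1 ((sub_nonneg.2 hle).trans (hmin h₀))
  obtain ⟨a, β, ha, hβ, heq⟩ := hv.exists_eq (hKD hxt)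
  have hspace : ∀ᶠ y in 𝓝 x, (y, t) ∈ K := by
    have hcont : Continuous fun y : Eu n => (y, t) := by fun_prop
    exact tendsto_nhdsWithin_iff.2
      ⟨hcont.tendsto x, .of_forall fun _ => show t ≤ t from le_rfl⟩ hnhds
  have htime : ∀ᶠ s in 𝓝[<] t, (x, s) ∈ K := by
    have hcont : Continuous fun s : ℝ => (x, s) := by fun_prop
    exact tendsto_nhdsWithin_iff.2 ⟨(hcont.tendsto t).mono_left nhdsWithin_le_nhds,
      eventually_nhdsWithin_of_forall fun s (hs : s < t) => hs.le⟩ hnhds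
  have hell := ellOp_le_of_touching hθ hε ha β (hv.contDiffAt (hKD hxt)) hψ₂
    (hspace.mono fun y hy => hmin hy)
  have hderiv := deriv_nonpos_of_eventually_le_left ((hv.differentiableAt (hKD hxt)).sub hψt)
    (htime.mono fun s hs => hmin hs)
  rw [deriv_sub (hv.differentiableAt (hKD hxt)) hψt, sub_nonpos] at hderiv
  exact absurd (hstrict a ha β hβ) (((hell.trans heq.ge).trans hderiv).not_gt)

/-! ### Affine changes of variables -/

section ChangeOfVariables

variable {x₀ : Eu n} {t₀ c k l m : ℝ}

lemma hasGradientAt_comp_affine {f : Eu n → ℝ} {y : Eu n}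
    (hf : DifferentiableAt ℝ f (x₀ + l • y)) :
    HasGradientAt (fun y => c + k * f (x₀ + l • y)) ((k * l) • gradient f (x₀ + l • y)) y := by
  have haffine : HasFDerivAt (fun y : Eu n => x₀ + l • y) (l • ContinuousLinearMap.id ℝ (Eu n)) y :=
    ((hasFDerivAt_id y).const_smul l).const_add x₀
  rw [hasGradientAt_iff_hasFDerivAt]
  refine (((hf.hasFDerivAt.comp y haffine).const_mul k).const_add c).congr_fderiv ?_
  ext w
  simp [mul_assoc]

lemma contDiffAt_comp_affine {f : Eu n → ℝ} {y : Eu n} (hf : ContDiffAt ℝ 2 f (x₀ + l • y)) :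
    ContDiffAt ℝ 2 (fun y => c + k * f (x₀ + l • y)) y :=
  contDiffAt_const.add (contDiffAt_const.mul (hf.comp y (by fun_prop)))

lemma hessS_comp_affine {f : Eu n → ℝ} {y : Eu n} (hf : ContDiffAt ℝ 2 f (x₀ + l • y)) :
    hessS (fun y => c + k * f (x₀ + l • y)) y = (k * l ^ 2) • hessS f (x₀ + l • y) := by
  have haffine : HasFDerivAt (fun y : Eu n => x₀ + l • y) (l • ContinuousLinearMap.id ℝ (Eu n)) y :=
    ((hasFDerivAt_id y).const_smul l).const_add x₀
  have hgrad : gradient (fun y => c + k * f (x₀ + l • y)) =ᶠ[𝓝 y]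
      fun y => (k * l) • gradient f (x₀ + l • y) := by
    filter_upwards [haffine.continuousAt.eventually
      (eventually_differentiableAt_of_contDiffAt_two hf)] with z hz
      using (hasGradientAt_comp_affine hz).gradient
  have hderiv := (((hasFDerivAt_gradient hf).comp y haffine).const_smul
    (k * l)).congr_of_eventuallyEq hgrad
  ext i j
  simp [hessS_apply_of_hasFDerivAt_gradient hderiv]
  ring

lemma hasDerivAt_comp_affine {g : ℝ → ℝ} {s : ℝ} (hg : DifferentiableAt ℝ g (t₀ + m * s)) :
    HasDerivAt (fun s => c + k * g (t₀ + m * s)) (k * m * deriv g (t₀ + m * s)) s := by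
  have haffine : HasDerivAt (fun s : ℝ => t₀ + m * s) m s := by
    simpa using ((hasDerivAt_id s).const_mul m).const_add t₀
  exact (((hg.hasDerivAt.comp s haffine).const_mul k).const_add c).congr_deriv (by ring)

lemma ellOp_comp_affine {ε ε' : ℝ} (hε : ε' * l ^ 2 = m * ε) {β β' : Eu n}
    (hβ : l • β' = m • β) (a : Matrix (Fin n) (Fin n) ℝ) {u : Eu n → ℝ → ℝ} {y : Eu n} {s : ℝ}
    (hu : ContDiffAt ℝ 2 (fun y => u y (t₀ + m * s)) (x₀ + l • y)) :
    ellOp ε' a β' (fun y s => c + k * u (x₀ + l • y) (t₀ + m * s)) y s =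
      k * m * ellOp ε a β u (x₀ + l • y) (t₀ + m * s) := by
  have hH : sH (fun y s => c + k * u (x₀ + l • y) (t₀ + m * s)) y s =
      (k * l ^ 2) • sH u (x₀ + l • y) (t₀ + m * s) := hessS_comp_affine hu
  have hG : sG (fun y s => c + k * u (x₀ + l • y) (t₀ + m * s)) y s =
      (k * l) • sG u (x₀ + l • y) (t₀ + m * s) :=
    (hasGradientAt_comp_affine (hu.differentiableAt (by norm_num))).gradient
  have hdrift (p : Eu n) : l * inner ℝ β' p = m * inner ℝ β p := by
    rw [← real_inner_smul_left, hβ, real_inner_smul_left]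
  simp only [ellOp, hH, hG, trMul_eq_trace, dotp_eq_inner, mul_smul_comm, Matrix.trace_smul,
    smul_eq_mul, inner_smul_right]
  linear_combination (k * (a * sH u (x₀ + l • y) (t₀ + m * s)).trace) * hε +
    k * hdrift (sG u (x₀ + l • y) (t₀ + m * s))

theorem IsParabolicSol.comp_affine {θ ε ε' : ℝ} {B B' : Eu n → ℝ → Set (Eu n)}
    {D D' : Set (Eu n × ℝ)} {u : Eu n → ℝ → ℝ} (hu : IsParabolicSol θ ε B D u) (x₀ : Eu n)
    (t₀ c k : ℝ) (hε : ε' * l ^ 2 = m * ε) (hD' : IsOpen D')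
    (hmaps : MapsTo (fun p : Eu n × ℝ => (x₀ + l • p.1, t₀ + m * p.2)) D' D)
    (hB : ∀ y s, (y, s) ∈ D' → ∀ β ∈ B (x₀ + l • y) (t₀ + m * s), ∃ β' ∈ B' y s, l • β' = m • β) :
    IsParabolicSol θ ε' B' D' (fun y s => c + k * u (x₀ + l • y) (t₀ + m * s)) where
  isOpen := hD'
  continuousOn := continuousOn_const.add
    (continuousOn_const.mul (hu.continuousOn.comp (by fun_prop) hmaps))
  continuousOn_tD := by
    refine (continuousOn_const (c := k * m)).mul
      (hu.continuousOn_tD.comp (by fun_prop) hmaps) |>.congr fun p hp => ?_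
    exact (hasDerivAt_comp_affine (hu.differentiableAt (hmaps hp))).deriv
  contDiffAt := fun h => contDiffAt_comp_affine (hu.contDiffAt (hmaps h))
  differentiableAt := fun h =>
    (hasDerivAt_comp_affine (hu.differentiableAt (hmaps h))).differentiableAt
  exists_eq := fun {y s} h => by
    obtain ⟨a, β, ha, hβ, heq⟩ := hu.exists_eq (hmaps h)
    obtain ⟨β', hβ', hββ'⟩ := hB y s h β hβ
    refine ⟨a, β', ha, hβ', ?_⟩
    rw [ellOp_comp_affine hε hββ' a (hu.contDiffAt (hmaps h)), ← heq]
    exact (hasDerivAt_comp_affine (hu.differentiableAt (hmaps h))).deriv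

end ChangeOfVariables

lemma IsParabolicSol.const_add_mul {θ ε : ℝ} {B : Eu n → ℝ → Set (Eu n)} {D : Set (Eu n × ℝ)}
    {u : Eu n → ℝ → ℝ} (hu : IsParabolicSol θ ε B D u) (c k : ℝ) :
    IsParabolicSol θ ε B D (fun y s => c + k * u y s) := by
  simpa using hu.comp_affine (B' := B) (D' := D) (l := 1) (m := 1) (ε' := ε) 0 0 c k (by simp)
    hu.isOpen (by simp [MapsTo]) (by simp)

lemma IsParabolicSol.scale {θ Λ : ℝ} {D : Set (Eu n × ℝ)} {v : Eu n → ℝ → ℝ}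
    (hv : IsNormalizedSol θ Λ D v) (x₀ : Eu n) (t₀ c k : ℝ) {r : ℝ} (hr₀ : 0 ≤ r) (hr₁ : r ≤ 1) :
    IsNormalizedSol θ Λ ((fun p : Eu n × ℝ => (x₀ + r • p.1, t₀ + r ^ 2 * p.2)) ⁻¹' D)
      (fun y s => c + k * v (x₀ + r • y) (t₀ + r ^ 2 * s)) := by
  refine hv.comp_affine x₀ t₀ c k (by ring) (hv.isOpen.preimage (by fun_prop))
    (mapsTo_preimage _ _) fun y s _ β hβ => ⟨r • β, ?_, by rw [smul_smul, sq]⟩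
  rw [mem_closedBall_zero_iff] at hβ ⊢
  rw [norm_smul, Real.norm_of_nonneg hr₀]
  exact (mul_le_of_le_one_left (norm_nonneg β) hr₁).trans hβ

/-! ### Spreading of positivity -/

lemma quadratic_pos_of_sq_lt {A B C q : ℝ} (hA : 0 < A) (hdisc : B ^ 2 < 4 * A * C) :
    0 < A * q ^ 2 - B * q + C := by
  have h : 0 < 4 * A * (A * q ^ 2 - B * q + C) := by nlinarith [sq_nonneg (2 * A * q - B)]
  exact pos_of_mul_pos_right h (by positivity)

/-- The Krylov–Safonov barrier `s⁻⁴ e^{-At} (s² + kt - |x|²)²`: it is at most `1` on the ball of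
radius `s` at time `0`, and its support expands with time. -/
def spreadBarrier (A k s : ℝ) (x : Eu n) (t : ℝ) : ℝ :=
  (s ^ 4)⁻¹ * Real.exp (-A * t) * (s ^ 2 + k * t - ‖x‖ ^ 2) ^ 2

/-- The part of the support of `spreadBarrier A k s` in the time interval `[0, T]`. -/
def spreadRegion (n : ℕ) (k s T : ℝ) : Set (Eu n × ℝ) :=
  {p | p.2 ∈ Icc 0 T ∧ ‖p.1‖ ^ 2 ≤ s ^ 2 + k * p.2}

section Spreading

variable {A k s T R : ℝ}

lemma continuous_spreadBarrier :
    Continuous fun p : Eu n × ℝ => spreadBarrier A k s p.1 p.2 := by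
  unfold spreadBarrier
  fun_prop

lemma contDiff_spreadBarrier (t : ℝ) : ContDiff ℝ 2 fun x : Eu n => spreadBarrier A k s x t :=
  contDiff_const.mul ((contDiff_const.sub (contDiff_id.norm_sq ℝ)).pow 2)

lemma hasDerivAt_spreadBarrier (x : Eu n) (t : ℝ) :
    HasDerivAt (spreadBarrier A k s x) ((s ^ 4)⁻¹ * Real.exp (-A * t) *
      (2 * k * (s ^ 2 + k * t - ‖x‖ ^ 2) - A * (s ^ 2 + k * t - ‖x‖ ^ 2) ^ 2)) t := by
  have hexp : HasDerivAt (fun t => (s ^ 4)⁻¹ * Real.exp (-A * t))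
      ((s ^ 4)⁻¹ * (Real.exp (-A * t) * -A)) t :=
    ((hasDerivAt_id t).const_mul (-A) |>.congr_deriv (mul_one _)).exp.const_mul _
  have hlin : HasDerivAt (fun t => s ^ 2 + k * t - ‖x‖ ^ 2) k t :=
    (((hasDerivAt_id t).const_mul k).const_add (s ^ 2)).sub_const (‖x‖ ^ 2)
      |>.congr_deriv (mul_one k)
  refine (hexp.mul (hlin.pow 2)).congr_deriv ?_
  simp
  ring

lemma ellOp_spreadBarrier (a : Matrix (Fin n) (Fin n) ℝ) (β x : Eu n) (t : ℝ) :
    ellOp 1 a β (spreadBarrier A k s) x t = (s ^ 4)⁻¹ * Real.exp (-A * t) *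
      (8 * mquad a x - 4 * (s ^ 2 + k * t - ‖x‖ ^ 2) * (a.trace + inner ℝ β x)) := by
  have hderiv (t r : ℝ) : HasDerivAt (fun r => s ^ 2 + k * t - r) (-1) r := by
    simpa using (hasDerivAt_id r).const_sub (s ^ 2 + k * t)
  have hradial := ellOp_radial 1 a β (z := fun _ => 0) (x := x) (t := t)
    (g := fun t r => (s ^ 4)⁻¹ * Real.exp (-A * t) * (s ^ 2 + k * t - r) ^ 2)
    (g' := fun t r => (s ^ 4)⁻¹ * Real.exp (-A * t) * (-2 * (s ^ 2 + k * t - r)))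
    (fun r => (((hderiv t r).pow 2).const_mul _).congr_deriv (by norm_num))
    (((hderiv t _).const_mul (-2)).const_mul _)
  simp only [sub_zero] at hradial
  refine hradial.trans ?_
  ring

lemma tD_spreadBarrier_lt {θ Λ : ℝ} (hθ : 0 < θ) (hs : 0 < s) (hk : 0 ≤ k)
    (hA₀ : 0 < A)
    (hA : (2 * k + 4 * (n * θ⁻¹) + 8 * θ + 4 * (Λ * R)) ^ 2 < 4 * A * (8 * θ * s ^ 2))
    {a : Matrix (Fin n) (Fin n) ℝ} (ha : memS θ a) {β x : Eu n} (hβ : ‖β‖ ≤ Λ) (hx : ‖x‖ ≤ R)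
    {t : ℝ} (ht : 0 ≤ t) (hxt : ‖x‖ ^ 2 < s ^ 2 + k * t) :
    tD (spreadBarrier A k s) x t < ellOp 1 a β (spreadBarrier A k s) x t := by
  rw [tD, (hasDerivAt_spreadBarrier x t).deriv, ellOp_spreadBarrier]
  refine mul_lt_mul_of_pos_left ?_ (by positivity)
  set q := s ^ 2 + k * t - ‖x‖ ^ 2
  have hinner : inner ℝ β x ≤ Λ * R := (real_inner_le_norm _ _).trans
    (mul_le_mul hβ hx (norm_nonneg _) ((norm_nonneg _).trans hβ))
  have hlower : q * (a.trace + inner ℝ β x) ≤ q * (n * θ⁻¹ + Λ * R) :=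
    mul_le_mul_of_nonneg_left (add_le_add ha.trace_le hinner) (sub_pos.2 hxt).le
  have hnorm : θ * (s ^ 2 - q) ≤ θ * ‖x‖ ^ 2 := by
    gcongr
    linarith [mul_nonneg hk ht]
  nlinarith [quadratic_pos_of_sq_lt (q := q) hA₀ hA, (ha.2 x).1]

lemma spreadRegion_norm_le (hR : 0 ≤ R) (hk : 0 ≤ k) (hkT : s ^ 2 + k * T = R ^ 2)
    {x : Eu n} {t : ℝ} (h : (x, t) ∈ spreadRegion n k s T) : ‖x‖ ≤ R := by
  have htT : k * t ≤ k * T := mul_le_mul_of_nonneg_left h.1.2 hk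
  exact le_of_sq_le_sq (h.2.trans (by linarith)) hR

lemma isCompact_spreadRegion (hR : 0 ≤ R) (hk : 0 ≤ k) (hkT : s ^ 2 + k * T = R ^ 2) :
    IsCompact (spreadRegion n k s T) := by
  have hclosed : IsClosed {p : Eu n × ℝ | ‖p.1‖ ^ 2 ≤ s ^ 2 + k * p.2} :=
    isClosed_le (by fun_prop) (by fun_prop)
  refine ((isCompact_closedBall (0 : Eu n) R).prod isCompact_Icc).of_isClosed_subset
    ((isClosed_Icc.preimage continuous_snd).inter hclosed) fun p hp => ⟨?_, hp.1⟩
  simpa using spreadRegion_norm_le hR hk hkT hp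

lemma spreadRegion_mem_nhdsWithin {x : Eu n} {t : ℝ} (h : (x, t) ∈ spreadRegion n k s T)
    (ht : 0 < t) (hxt : ‖x‖ ^ 2 < s ^ 2 + k * t) :
    spreadRegion n k s T ∈ 𝓝[{p | p.2 ≤ t}] (x, t) := by
  have hpos : ∀ᶠ p : Eu n × ℝ in 𝓝 (x, t), 0 < p.2 :=
    (isOpen_lt continuous_const continuous_snd).mem_nhds ht
  have hlt : ∀ᶠ p : Eu n × ℝ in 𝓝 (x, t), ‖p.1‖ ^ 2 < s ^ 2 + k * p.2 :=
    (isOpen_lt (by fun_prop) (by fun_prop)).mem_nhds hxt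
  filter_upwards [nhdsWithin_le_nhds hpos, nhdsWithin_le_nhds hlt, self_mem_nhdsWithin]
    with p h₁ h₂ (h₃ : p.2 ≤ t) using ⟨⟨h₁.le, h₃.trans h.1.2⟩, h₂.le⟩

lemma spreadBarrier_zero_le_one (hs : 0 < s) {x : Eu n} (hx : ‖x‖ ^ 2 ≤ s ^ 2) :
    spreadBarrier A k s x 0 ≤ 1 := by
  have hsq : (s ^ 2 - ‖x‖ ^ 2) ^ 2 ≤ (s ^ 2) ^ 2 :=
    pow_le_pow_left₀ (sub_nonneg.2 hx) (sub_le_self _ (sq_nonneg _)) 2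
  simp only [spreadBarrier, mul_zero, Real.exp_zero, mul_one, add_zero]
  rw [inv_mul_le_iff₀ (by positivity)]
  linarith

lemma IsParabolicSol.spreadBarrier_le {θ Λ : ℝ} (hθ : 0 < θ) (hs : 0 < s) (hR : 0 ≤ R)
    (hk : 0 ≤ k) (hkT : s ^ 2 + k * T = R ^ 2) (hA₀ : 0 < A)
    (hA : (2 * k + 4 * (n * θ⁻¹) + 8 * θ + 4 * (Λ * R)) ^ 2 < 4 * A * (8 * θ * s ^ 2))
    {D : Set (Eu n × ℝ)} {v : Eu n → ℝ → ℝ} (hv : IsNormalizedSol θ Λ D v)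
    (hD : ∀ x t, ‖x‖ ≤ R → t ∈ Icc 0 T → (x, t) ∈ D ∧ 0 ≤ v x t)
    (hinit : ∀ x, ‖x‖ ≤ s → 1 ≤ v x 0) :
    ∀ x t, (x, t) ∈ spreadRegion n k s T → spreadBarrier A k s x t ≤ v x t := by
  refine hv.ge_of_strict_subsol hθ.le zero_le_one (isCompact_spreadRegion hR hk hkT)
    (fun p hp => (hD p.1 p.2 (spreadRegion_norm_le hR hk hkT hp) hp.1).1)
    continuous_spreadBarrier.continuousOn fun x t hxt => ?_
  have hxR := spreadRegion_norm_le hR hk hkT hxt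
  rcases (show ‖x‖ ^ 2 ≤ s ^ 2 + k * t from hxt.2).eq_or_lt with heq | hlt
  · left
    simpa [spreadBarrier, heq] using (hD x t hxR hxt.1).2
  rcases (show 0 ≤ t from hxt.1.1).eq_or_lt with rfl | ht
  · left
    have hxs : ‖x‖ ^ 2 ≤ s ^ 2 := by simpa using hlt.le
    exact (spreadBarrier_zero_le_one hs hxs).trans (hinit x (le_of_sq_le_sq hxs hs.le))
  · exact .inr ⟨spreadRegion_mem_nhdsWithin hxt ht hlt, (contDiff_spreadBarrier t).contDiffAt,
      (hasDerivAt_spreadBarrier x t).differentiableAt, fun a ha β hβ =>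
        tD_spreadBarrier_lt hθ hs hk hA₀ hA ha (mem_closedBall_zero_iff.1 hβ) hxR hxt.1.1 hlt⟩

end Spreading

theorem exists_spreading_const (n : ℕ) {θ Λ s R R' τ Tmax : ℝ} (hθ : 0 < θ) (hΛ : 0 ≤ Λ)
    (hs : 0 < s) (hsR : s < R) (hR' : 0 ≤ R') (hR'R : R' < R) (hτ : 0 < τ) :
    ∃ c > 0, ∀ (D : Set (Eu n × ℝ)) (v : Eu n → ℝ → ℝ), IsNormalizedSol θ Λ D v →
      ∀ T ∈ Icc τ Tmax, (∀ x t, ‖x‖ ≤ R → t ∈ Icc 0 T → (x, t) ∈ D ∧ 0 ≤ v x t) →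
      (∀ x, ‖x‖ ≤ s → 1 ≤ v x 0) → ∀ x, ‖x‖ ≤ R' → c ≤ v x T := by
  have hR : 0 < R := hs.trans hsR
  have hdiff : 0 < R ^ 2 - s ^ 2 := sub_pos.2 (by gcongr)
  have hdiff' : 0 < R ^ 2 - R' ^ 2 := sub_pos.2 (by gcongr)
  set b : ℝ → ℝ := fun k => 2 * k + 4 * (n * θ⁻¹) + 8 * θ + 4 * (Λ * R)
  set A : ℝ := b ((R ^ 2 - s ^ 2) / τ) ^ 2 / (32 * θ * s ^ 2) + 1 with hAdef
  have hA : b ((R ^ 2 - s ^ 2) / τ) ^ 2 < 4 * A * (8 * θ * s ^ 2) := by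
    have : 4 * A * (8 * θ * s ^ 2) = b ((R ^ 2 - s ^ 2) / τ) ^ 2 + 32 * θ * s ^ 2 := by
      rw [hAdef]
      field_simp
      ring
    rw [this]
    exact lt_add_of_pos_right _ (by positivity)
  refine ⟨(s ^ 4)⁻¹ * Real.exp (-A * Tmax) * (R ^ 2 - R' ^ 2) ^ 2, by positivity, ?_⟩
  intro D v hv T hT hD hinit x hx
  have hT₀ : 0 < T := hτ.trans_le hT.1
  have hkT : s ^ 2 + (R ^ 2 - s ^ 2) / T * T = R ^ 2 := by
    field_simp
    ring
  have hk : (R ^ 2 - s ^ 2) / T ≤ (R ^ 2 - s ^ 2) / τ := by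
    gcongr
    exact hT.1
  have hb : b ((R ^ 2 - s ^ 2) / T) ^ 2 ≤ b ((R ^ 2 - s ^ 2) / τ) ^ 2 := by
    simp only [b]
    gcongr
  have hmem : (x, T) ∈ spreadRegion n ((R ^ 2 - s ^ 2) / T) s T :=
    ⟨⟨hT₀.le, le_rfl⟩, (pow_le_pow_left₀ (norm_nonneg x) (hx.trans hR'R.le) 2).trans_eq hkT.symm⟩
  refine le_trans ?_ (IsParabolicSol.spreadBarrier_le hθ hs hR.le (by positivity) hkT
    (by positivity : 0 < A) (lt_of_le_of_lt hb hA) hv hD hinit x T hmem)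
  rw [spreadBarrier, hkT]
  have hTmax : -A * Tmax ≤ -A * T :=
    mul_le_mul_of_nonpos_left hT.2 (neg_nonpos.2 (by positivity))
  gcongr

/-! ### Measure of the times at which a function decreases -/

open MeasureTheory

lemma intervalIntegrable_indicator_one {U : Set ℝ} (hU : MeasurableSet U) (s t : ℝ) :
    IntervalIntegrable (U.indicator fun _ => (1 : ℝ)) volume s t := by
  have : IntervalIntegrable (fun _ : ℝ => (1 : ℝ)) volume s t := intervalIntegrable_const
  rw [intervalIntegrable_iff] at this ⊢
  exact this.indicator hU

lemma antitone_integral_indicator_one {U : Set ℝ} (hU : MeasurableSet U) (b : ℝ) :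
    Antitone fun t => ∫ r in t..b, U.indicator (fun _ => (1 : ℝ)) r := by
  intro s t hst
  have hnonneg : 0 ≤ ∫ r in s..t, U.indicator (fun _ => (1 : ℝ)) r :=
    intervalIntegral.integral_nonneg hst fun r _ => indicator_nonneg (fun _ _ => zero_le_one) r
  have hadd := intervalIntegral.integral_add_adjacent_intervals
    (intervalIntegrable_indicator_one hU s t) (intervalIntegrable_indicator_one hU t b)
  simp only
  linarith

lemma eventually_integral_indicator_one_eq {U : Set ℝ} (hU : IsOpen U) (b : ℝ) {t : ℝ}
    (ht : t ∈ U) : ∀ᶠ s in 𝓝[<] t, ∫ r in s..b, U.indicator (fun _ => (1 : ℝ)) r =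
      (∫ r in t..b, U.indicator (fun _ => (1 : ℝ)) r) + (t - s) := by
  obtain ⟨e, he, hball⟩ := Metric.isOpen_iff.mp hU t ht
  filter_upwards [Ioo_mem_nhdsLT (sub_lt_self t he)] with s hs
  have hone : ∫ r in s..t, U.indicator (fun _ => (1 : ℝ)) r = t - s := by
    rw [intervalIntegral.integral_congr (g := fun _ => (1 : ℝ))]
    · simp
    · intro r hr
      rw [uIcc_of_le hs.2.le] at hr
      have : r ∈ U := hball (by
        rw [Metric.mem_ball, Real.dist_eq, abs_lt]
        constructor <;> linarith [hr.1, hr.2, hs.1])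
      simp [this]
  rw [← intervalIntegral.integral_add_adjacent_intervals
    (intervalIntegrable_indicator_one hU.measurableSet s t)
    (intervalIntegrable_indicator_one hU.measurableSet t b), hone, add_comm]

lemma integral_indicator_one_le_measureReal {U : Set ℝ} (hU : MeasurableSet U)
    (hUfin : volume U ≠ ∞) {a b : ℝ} (hab : a ≤ b) :
    ∫ r in a..b, U.indicator (fun _ => (1 : ℝ)) r ≤ volume.real U := by
  rw [intervalIntegral.integral_of_le hab, integral_indicator hU, setIntegral_const, smul_eq_mul,
    mul_one, measureReal_restrict_apply hU]
  exact measureReal_mono inter_subset_left hUfin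

section Decrease

variable {G : ℝ → ℝ} {a b p q C : ℝ}

lemma eventually_clamp_le_of_left_growth {m : ℝ → ℝ} {t : ℝ} {Z : Set ℝ} (hC : 0 ≤ C)
    (hG : ContinuousWithinAt G (Iio t) t) (hm : Antitone m)
    (hmZ : t ∈ Z → ∀ᶠ s in 𝓝[<] t, m s = m t + (t - s))
    (hgrowth : G t ∈ Icc p q → ∀ᶠ s in 𝓝[<] t, G s ≤ G t + C * (t - s))
    (hmono : G t ∈ Icc p q → t ∉ Z → ∀ᶠ s in 𝓝[<] t, G s ≤ G t)
    (ht : max p (min q (G t)) ≤ p + C * m t) :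
    ∀ᶠ s in 𝓝[<] t, max p (min q (G s)) ≤ p + C * m s := by
  have hmle : ∀ᶠ s in 𝓝[<] t, C * m t ≤ C * m s := by
    filter_upwards [self_mem_nhdsWithin] with s hs
    exact mul_le_mul_of_nonneg_left (hm (le_of_lt hs)) hC
  have hmt : 0 ≤ C * m t := by linarith [le_max_left p (min q (G t))]
  rcases lt_or_ge (G t) p with hGp | hGp
  · filter_upwards [hG.eventually (eventually_lt_nhds hGp), hmle] with s hs hms
    exact max_le (by linarith) ((min_le_right _ _).trans (by linarith))
  rcases lt_or_ge q (G t) with hGq | hGq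
  · filter_upwards [hmle] with s hms
    rw [min_eq_left hGq.le] at ht
    exact max_le (by linarith) ((min_le_left _ _).trans (by linarith [le_max_right p q]))
  rw [min_eq_right hGq, max_eq_right hGp] at ht
  by_cases htZ : t ∈ Z
  · filter_upwards [hgrowth ⟨hGp, hGq⟩, hmZ htZ, hmle] with s hs hms hms'
    refine max_le (by linarith) ((min_le_right _ _).trans ?_)
    rw [hms]
    linarith
  · filter_upwards [hmono ⟨hGp, hGq⟩ htZ, hmle] with s hs hms
    exact max_le (by linarith) ((min_le_right _ _).trans (by linarith))

/-- Cover the set `Z` by an open set `U`: going backwards in time from `b`, the clamped function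
grows by at most `C` times the measure of the part of `U` already passed. -/
theorem ofReal_div_le_volume_of_left_growth {Z : Set ℝ} (hab : a ≤ b) (hpq : p ≤ q) (hC : 0 < C)
    (hG : ContinuousOn G (Icc a b)) (ha : q ≤ G a) (hb : G b ≤ p)
    (hgrowth : ∀ t ∈ Ioc a b, G t ∈ Icc p q → ∀ᶠ s in 𝓝[<] t, G s ≤ G t + C * (t - s))
    (hmono : ∀ t ∈ Ioc a b, G t ∈ Icc p q → t ∉ Z → ∀ᶠ s in 𝓝[<] t, G s ≤ G t) :
    ENNReal.ofReal ((q - p) / C) ≤ volume Z := by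
  by_contra! hlt
  obtain ⟨U, hZU, hU, hUlt⟩ := Set.exists_isOpen_lt_of_lt Z _ hlt
  have hUfin : volume U ≠ ∞ := (hUlt.trans ENNReal.ofReal_lt_top).ne
  set m : ℝ → ℝ := fun t => ∫ r in t..b, U.indicator (fun _ => (1 : ℝ)) r with hm
  have hmcont : Continuous m := by
    have := intervalIntegral.continuous_primitive
      (intervalIntegrable_indicator_one hU.measurableSet) b
    exact this.neg.congr fun t => (intervalIntegral.integral_symm b t).symm
  have hsub : Icc a b ⊆ {t | max p (min q (G t)) ≤ p + C * m t} := by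
    refine IsClosed.Icc_subset_of_forall_exists_lt ?_ ?_ ?_
    · rw [inter_comm]
      exact isClosed_Icc.isClosed_le (f := fun t => max p (min q (G t)))
        (continuousOn_const.sup (continuousOn_const.inf hG)) (by fun_prop)
    · simp [hm, hb]
    · rintro t ⟨ht, htab⟩ y hy
      have hGt : ContinuousWithinAt G (Iio t) t :=
        (hG t ⟨htab.1.le, htab.2⟩).mono_of_mem_nhdsWithin
          (mem_of_superset (Ico_mem_nhdsLT htab.1) fun s hs => ⟨hs.1, hs.2.le.trans htab.2⟩)
      have hstep := eventually_clamp_le_of_left_growth hC.le hGt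
        (antitone_integral_indicator_one hU.measurableSet b)
        (fun htZ => eventually_integral_indicator_one_eq hU b (hZU htZ)) (hgrowth t htab)
        (hmono t htab) ht
      exact (hstep.and (Ico_mem_nhdsLT hy)).exists
  have hmb : q - p ≤ C * m a := by
    have : max p (min q (G a)) ≤ p + C * m a := hsub ⟨le_rfl, hab⟩
    rw [min_eq_left ha, max_eq_right hpq] at this
    linarith
  have hmU : m a < (q - p) / C :=
    (integral_indicator_one_le_measureReal hU.measurableSet hUfin hab).trans_lt
      ((ENNReal.lt_ofReal_iff_toReal_lt hUfin).1 hUlt)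
  rw [lt_div_iff₀' hC] at hmU
  linarith

end Decrease

lemma eventually_left_le_of_hasDerivAt {φ : ℝ → ℝ} {d C t : ℝ} (hφ : HasDerivAt φ d t)
    (hd : -C < d) :
    ∀ᶠ s in 𝓝[<] t, φ s ≤ φ t + C * (t - s) := by
  have hslope := (hasDerivAt_iff_tendsto_slope.mp hφ).mono_left
    (nhdsWithin_mono (s := Iio t) t fun s (hs : s < t) => ne_of_lt hs)
  filter_upwards [hslope.eventually (eventually_gt_nhds hd), self_mem_nhdsWithin]
    with s hs (hst : s < t)
  rw [slope_def_field, lt_div_iff_of_neg (sub_neg.2 hst)] at hs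
  linarith

lemma continuousOn_sInf_image {X Y : Type*} [TopologicalSpace X] [TopologicalSpace Y]
    {g : Y → X → ℝ} {T : Set Y} {K : Set X} (hK : IsCompact K)
    (hg : ContinuousOn (fun p : Y × X => g p.1 p.2) (T ×ˢ K)) :
    ContinuousOn (fun t => sInf (g t '' K)) T := by
  have := isCompact_iff_compactSpace.1 hK
  rw [continuousOn_iff_continuous_domRestrict]
  have hcont : Continuous fun p : T × K => g p.1 p.2 :=
    hg.comp_continuous (f := fun p : T × K => ((p.1 : Y), (p.2 : X))) (by fun_prop)
      fun p => ⟨p.1.2, p.2.2⟩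
  have hinf := (isCompact_univ (X := K)).continuous_sInf (f := fun (t : T) (x : K) => g t x) hcont
  refine hinf.congr fun t => ?_
  simp only [domRestrict_apply, image_univ, image_eq_range (g t) K]

/-! ### The area formula for the contact map -/

lemma det_toEuclideanCLM (M : Matrix (Fin n) (Fin n) ℝ) :
    (Matrix.toEuclideanCLM (n := Fin n) (𝕜 := ℝ) M).det = M.det := by
  have : ((Matrix.toEuclideanCLM (n := Fin n) (𝕜 := ℝ) M : Eu n →L[ℝ] Eu n) : Eu n →ₗ[ℝ] Eu n)
      = Matrix.toLin (EuclideanSpace.basisFun (Fin n) ℝ).toBasis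
        (EuclideanSpace.basisFun (Fin n) ℝ).toBasis M := by
    rw [← Matrix.toEuclideanLin_eq_toLin_orthonormal]
    rfl
  rw [ContinuousLinearMap.det, this, LinearMap.det_toLin]

lemma hasFDerivAt_add_smul_gradient {f : Eu n → ℝ} {x : Eu n} (hf : ContDiffAt ℝ 2 f x) (c : ℝ) :
    HasFDerivAt (fun y => y + c • gradient f y)
      (Matrix.toEuclideanCLM (n := Fin n) (𝕜 := ℝ) (1 + c • hessS f x)) x := by
  refine ((hasFDerivAt_id x).add ((hasFDerivAt_gradient hf).const_smul c)).congr_fderiv ?_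
  rw [map_add, map_one, map_smul]
  rfl

lemma volume_le_of_mem_image_add_smul_gradient {f : Eu n → ℝ} {s W : Set (Eu n)} {c C : ℝ}
    (hs : MeasurableSet s) (hf : ∀ x ∈ s, ContDiffAt ℝ 2 f x)
    (hdet : ∀ x ∈ s, |(1 + c • hessS f x).det| ≤ C)
    (hW : W ⊆ (fun y => y + c • gradient f y) '' s) :
    volume W ≤ ENNReal.ofReal C * volume s :=
  calc volume W ≤ volume ((fun y => y + c • gradient f y) '' s) := measure_mono hW
    _ ≤ ∫⁻ x in s, ENNReal.ofReal
          |(Matrix.toEuclideanCLM (n := Fin n) (𝕜 := ℝ) (1 + c • hessS f x)).det| :=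
        addHaar_image_le_lintegral_abs_det_fderiv volume hs fun x hx =>
          (hasFDerivAt_add_smul_gradient (hf x hx) c).hasFDerivWithinAt
    _ ≤ ∫⁻ _ in s, ENNReal.ofReal C := setLIntegral_mono' hs fun x hx => by
        rw [det_toEuclideanCLM]
        exact ENNReal.ofReal_le_ofReal (hdet x hx)
    _ = ENNReal.ofReal C * volume s := setLIntegral_const _ _

lemma mul_measure_le_of_slices {α β : Type*} [MeasurableSpace α] [MeasurableSpace β]
    {μ : Measure α} {ν : Measure β} [SFinite μ] [SFinite ν] {Z E : Set (α × β)}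
    (hZ : MeasurableSet Z) (hE : MeasurableSet E) {B : Set α} {c C : ℝ≥0∞} (hB : MeasurableSet B)
    (hleft : ∀ z ∈ B, c ≤ ν (Prod.mk z ⁻¹' Z))
    (hright : ∀ t, μ ((fun z => (z, t)) ⁻¹' Z) ≤ C * μ ((fun z => (z, t)) ⁻¹' E)) :
    c * μ B ≤ C * μ.prod ν E :=
  calc c * μ B = ∫⁻ _ in B, c ∂μ := (setLIntegral_const _ _).symm
    _ ≤ ∫⁻ z in B, ν (Prod.mk z ⁻¹' Z) ∂μ := setLIntegral_mono' hB hleft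
    _ ≤ ∫⁻ z, ν (Prod.mk z ⁻¹' Z) ∂μ := setLIntegral_le_lintegral _ _
    _ = ∫⁻ t, μ ((fun z => (z, t)) ⁻¹' Z) ∂ν := by
        rw [← Measure.prod_apply hZ, Measure.prod_apply_symm hZ]
    _ ≤ ∫⁻ t, C * μ ((fun z => (z, t)) ⁻¹' E) ∂ν := lintegral_mono hright
    _ = C * μ.prod ν E := by
        rw [lintegral_const_mul _ (measurable_measure_prodMk_right hE),
          Measure.prod_apply_symm hE]

/-! ### The Alexandroff–Bakelman–Pucci–Krylov–Tso estimate -/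

section Contact

variable {f : Eu n → ℝ} {x z : Eu n} {c : ℝ}

lemma hessS_neg_mul_norm_sub_sq (c : ℝ) (x z : Eu n) :
    hessS (fun y => -c * ‖y - z‖ ^ 2) x = -(2 * c) • (1 : Matrix (Fin n) (Fin n) ℝ) := by
  have := hessS_radial (g := fun r => -c * r) (g' := fun _ => -c) (x := x) (z := z)
    (fun r => by simpa using (hasDerivAt_id r).const_mul (-c)) (hasDerivAt_const _ _)
  rw [this]
  simp

lemma gradient_neg_mul_norm_sub_sq (c : ℝ) (x z : Eu n) :
    gradient (fun y => -c * ‖y - z‖ ^ 2) x = (2 * c) • (z - x) := by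
  have := (hasGradientAt_radial (g := fun r => -c * r) (g' := fun _ => -c) (x := x) (z := z)
    (by simpa using (hasDerivAt_id _).const_mul (-c))).gradient
  rw [this, ← neg_sub x z, smul_neg, ← neg_smul]
  ring_nf

lemma isLocalMin_sub_neg_mul_norm_sub_sq
    (hmin : IsLocalMin (fun y => f y + c * ‖y - z‖ ^ 2) x) :
    IsLocalMin (f - fun y => -c * ‖y - z‖ ^ 2) x := by
  refine hmin.congr (Eventually.of_forall fun y => ?_)
  simp only [Pi.sub_apply]
  ring

lemma contDiff_neg_mul_norm_sub_sq (c : ℝ) (z : Eu n) :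
    ContDiff ℝ 2 fun y => -c * ‖y - z‖ ^ 2 :=
  contDiff_const.mul ((contDiff_id.sub contDiff_const).norm_sq ℝ)

lemma gradient_of_isLocalMin_add_mul_norm_sub_sq (hf : ContDiffAt ℝ 2 f x)
    (hmin : IsLocalMin (fun y => f y + c * ‖y - z‖ ^ 2) x) :
    gradient f x = (2 * c) • (z - x) :=
  (gradient_eq_of_isLocalMin_sub hf (contDiff_neg_mul_norm_sub_sq c z).contDiffAt
    (isLocalMin_sub_neg_mul_norm_sub_sq hmin)).trans (gradient_neg_mul_norm_sub_sq c x z)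

lemma posSemidef_of_isLocalMin_add_mul_norm_sub_sq (hf : ContDiffAt ℝ 2 f x)
    (hmin : IsLocalMin (fun y => f y + c * ‖y - z‖ ^ 2) x) :
    (hessS f x + (2 * c) • (1 : Matrix (Fin n) (Fin n) ℝ)).PosSemidef := by
  have := posSemidef_hessS_sub_of_isLocalMin hf (contDiff_neg_mul_norm_sub_sq c z).contDiffAt
    (isLocalMin_sub_neg_mul_norm_sub_sq hmin)
  rwa [hessS_neg_mul_norm_sub_sq, neg_smul, sub_neg_eq_add] at this

end Contact

/-- The bound for `1/2 - v_t` at a point where the solution `v` is touched from below by a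
paraboloid of opening `-4` whose vertex is at distance at most `2`. -/
def contactConst (n : ℕ) (θ Λ : ℝ) : ℝ := 1 / 2 + 8 * (n * θ⁻¹) + 16 * Λ

/-- The bound for the Jacobian of the contact map `x ↦ x + Dv / 8`. -/
def contactJacobianConst (n : ℕ) (θ Λ : ℝ) : ℝ := (contactConst n θ Λ / (8 * θ)) ^ n

lemma contactConst_pos {θ Λ : ℝ} (hθ : 0 < θ) (hΛ : 0 ≤ Λ) : 0 < contactConst n θ Λ := by
  unfold contactConst
  positivity

section ContactSol

variable {θ Λ : ℝ} {D : Set (Eu n × ℝ)} {v : Eu n → ℝ → ℝ} {x z : Eu n} {t : ℝ}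

lemma IsParabolicSol.trace_contact_le (hΛ : 0 ≤ Λ) (hv : IsNormalizedSol θ Λ D v)
    (hD : (x, t) ∈ D) (hxz : ‖x - z‖ ≤ 2)
    (hmin : IsLocalMin (fun y => v y t + 4 * ‖y - z‖ ^ 2) x) :
    θ * (hessS (fun y => v y t) x + (8 : ℝ) • 1).trace - contactConst n θ Λ
      ≤ tD v x t - 1 / 2 := by
  obtain ⟨a, β, ha, hβ, heq⟩ := hv.exists_eq hD
  have hpsd := posSemidef_of_isLocalMin_add_mul_norm_sub_sq (hv.contDiffAt hD) hmin
  norm_num only at hpsd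
  have htrace := ha.mul_trace_le hpsd
  have hsplit : trMul a (hessS (fun y => v y t) x + (8 : ℝ) • 1) =
      trMul a (sH v x t) + 8 * a.trace := by
    simp only [trMul_eq_trace, mul_add, Matrix.trace_add, Matrix.mul_smul, mul_one,
      Matrix.trace_smul, smul_eq_mul]
    rfl
  have hgrad : sG v x t = (2 * 4 : ℝ) • (z - x) :=
    gradient_of_isLocalMin_add_mul_norm_sub_sq (hv.contDiffAt hD) hmin
  have hdrift : |dotp β (sG v x t)| ≤ 16 * Λ := by
    rw [hgrad, dotp_eq_inner, inner_smul_right, abs_mul, norm_sub_rev] at *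
    have := (abs_real_inner_le_norm β (z - x)).trans
      (mul_le_mul (mem_closedBall_zero_iff.1 hβ) hxz (norm_nonneg _) hΛ)
    norm_num
    linarith
  rw [heq, ellOp, one_mul, contactConst]
  linarith [(abs_le.1 hdrift).1, ha.trace_le]

lemma IsParabolicSol.neg_contactConst_le (hθ : 0 ≤ θ) (hΛ : 0 ≤ Λ) (hv : IsNormalizedSol θ Λ D v)
    (hD : (x, t) ∈ D) (hxz : ‖x - z‖ ≤ 2)
    (hmin : IsLocalMin (fun y => v y t + 4 * ‖y - z‖ ^ 2) x) :
    -contactConst n θ Λ ≤ tD v x t - 1 / 2 := by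
  have hpsd := posSemidef_of_isLocalMin_add_mul_norm_sub_sq (hv.contDiffAt hD) hmin
  norm_num only at hpsd
  linarith [hv.trace_contact_le hΛ hD hxz hmin, mul_nonneg hθ hpsd.trace_nonneg]

lemma IsParabolicSol.abs_det_contact_le (hθ : 0 < θ) (hΛ : 0 ≤ Λ) (hv : IsNormalizedSol θ Λ D v)
    (hD : (x, t) ∈ D) (hxz : ‖x - z‖ ≤ 2)
    (hmin : IsLocalMin (fun y => v y t + 4 * ‖y - z‖ ^ 2) x) (ht : tD v x t ≤ 1 / 2) :
    |(1 + (1 / 8 : ℝ) • hessS (fun y => v y t) x).det| ≤ contactJacobianConst n θ Λ := by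
  have hpsd := posSemidef_of_isLocalMin_add_mul_norm_sub_sq (hv.contDiffAt hD) hmin
  norm_num only at hpsd
  have hscale : 1 + (1 / 8 : ℝ) • hessS (fun y => v y t) x =
      (1 / 8 : ℝ) • (hessS (fun y => v y t) x + (8 : ℝ) • 1) := by
    rw [smul_add, smul_smul, add_comm]
    norm_num
  rw [hscale]
  have hpsd' := hpsd.smul (show (0 : ℝ) ≤ 1 / 8 by norm_num)
  rw [abs_of_nonneg hpsd'.det_nonneg]
  refine (det_le_trace_pow_of_posSemidef hpsd').trans
    (pow_le_pow_left₀ hpsd'.trace_nonneg ?_ n)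
  rw [Matrix.trace_smul, smul_eq_mul, le_div_iff₀ (by positivity)]
  linarith [hv.trace_contact_le hΛ hD hxz hmin]

end ContactSol

/-- `x` minimises `v(·,t) + 4|· - z|²` over the unit ball, for a vertex `z` near `x₀`, and the
minimum, tilted by `-(t+1)/2`, lies in a window which is crossed as `t` runs through `[-1,1]` if
`v ≥ 0` and `v(x₀,1) < 1/2`. -/
structure IsWindowMin (v : Eu n → ℝ → ℝ) (x₀ z : Eu n) (t : ℝ) (x : Eu n) : Prop where
  norm_le : ‖x‖ ≤ 1
  time_mem : t ∈ Icc (-1 : ℝ) 1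
  vertex_near : ‖z - x₀‖ ≤ 1 / 16
  isMinOn : IsMinOn (fun y => v y t + 4 * ‖y - z‖ ^ 2) (closedBall 0 1) x
  mem_window : v x t + 4 * ‖x - z‖ ^ 2 - (t + 1) / 2 ∈ Icc (-15 / 32 : ℝ) (-1 / 4)

/-- Triples `((z, t), x)` for which `x` is a window minimiser at which `v_t ≤ 1/2`: there the
Jacobian of the contact map is controlled. -/
def contactSet (v : Eu n → ℝ → ℝ) (x₀ : Eu n) : Set ((Eu n × ℝ) × Eu n) :=
  {r | IsWindowMin v x₀ r.1.1 r.1.2 r.2 ∧ tD v r.2 r.1.2 ≤ 1 / 2}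

section ABP

variable {θ Λ : ℝ} {D : Set (Eu n × ℝ)} {v : Eu n → ℝ → ℝ} {x₀ x z : Eu n} {t : ℝ}

lemma IsWindowMin.norm_sub_lt (h : IsWindowMin v x₀ z t x) (hv : 0 ≤ v x t) : ‖x - z‖ < 7 / 16 := by
  have := h.mem_window.2
  have := h.time_mem.2
  exact lt_of_pow_lt_pow_left₀ 2 (by norm_num) (by linarith)

lemma IsWindowMin.norm_lt_one (h : IsWindowMin v x₀ z t x) (hx₀ : ‖x₀‖ ≤ 1 / 2)
    (hv : 0 ≤ v x t) : ‖x‖ < 1 := by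
  have htri : ‖x‖ ≤ ‖x - z‖ + ‖z - x₀‖ + ‖x₀‖ := by
    simpa using norm_add₃_le (a := x - z) (b := z - x₀) (c := x₀)
  linarith [h.norm_sub_lt hv, h.vertex_near]

lemma IsWindowMin.lt_one (h : IsWindowMin v x₀ z t x) : v x t < 1 := by
  linarith [h.mem_window.2, h.time_mem.2, sq_nonneg ‖x - z‖]

lemma IsWindowMin.time_mem_Ioo (h : IsWindowMin v x₀ z t x) (hx₀ : ‖x₀‖ ≤ 1 / 2)
    (hv : 0 ≤ v x t) (hvx₀ : v x₀ 1 < 1 / 2) : t ∈ Ioo (-1 : ℝ) 1 := by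
  refine ⟨lt_of_le_of_ne h.time_mem.1 ?_, lt_of_le_of_ne h.time_mem.2 ?_⟩
  · rintro rfl
    linarith [h.mem_window.2, sq_nonneg ‖x - z‖]
  · rintro rfl
    have hmin : v x 1 + 4 * ‖x - z‖ ^ 2 ≤ v x₀ 1 + 4 * ‖x₀ - z‖ ^ 2 :=
      h.isMinOn (mem_closedBall_zero_iff.2 (by linarith))
    have hsq : ‖x₀ - z‖ ^ 2 ≤ (1 / 16) ^ 2 :=
      pow_le_pow_left₀ (norm_nonneg _) (norm_sub_rev z x₀ ▸ h.vertex_near) 2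
    linarith [h.mem_window.1]

lemma IsWindowMin.isLocalMin (h : IsWindowMin v x₀ z t x) (hx₀ : ‖x₀‖ ≤ 1 / 2) (hv : 0 ≤ v x t) :
    IsLocalMin (fun y => v y t + 4 * ‖y - z‖ ^ 2) x :=
  h.isMinOn.isLocalMin (mem_of_superset
    (isOpen_ball.mem_nhds (mem_ball_zero_iff.2 (h.norm_lt_one hx₀ hv))) ball_subset_closedBall)

lemma isClosed_sep_forall_le {X ι : Type*} [TopologicalSpace X] {K : Set X} (hK : IsClosed K)
    {S : Set ι} {F : X → ℝ} {g : ι → X → ℝ} (hF : ContinuousOn F K)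
    (hg : ∀ i ∈ S, ContinuousOn (g i) K) : IsClosed {r ∈ K | ∀ i ∈ S, F r ≤ g i r} := by
  have : {r ∈ K | ∀ i ∈ S, F r ≤ g i r} = K ∩ ⋂ i ∈ S, {r ∈ K | F r ≤ g i r} := by
    ext r
    simp +contextual
  rw [this]
  exact hK.inter (isClosed_biInter fun i hi => hK.isClosed_le hF (hg i hi))

lemma isCompact_contactSet (hD : closedBall (0 : Eu n) 1 ×ˢ Icc (-1) 1 ⊆ D)
    (hv : ContinuousOn (fun p : Eu n × ℝ => v p.1 p.2) D)
    (hvt : ContinuousOn (fun p : Eu n × ℝ => tD v p.1 p.2) D) : IsCompact (contactSet v x₀) := by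
  set K : Set ((Eu n × ℝ) × Eu n) :=
    (closedBall x₀ (1 / 16) ×ˢ Icc (-1) 1) ×ˢ closedBall (0 : Eu n) 1
  have hK : IsCompact K :=
    ((isCompact_closedBall _ _).prod isCompact_Icc).prod (isCompact_closedBall _ _)
  set F : (Eu n × ℝ) × Eu n → ℝ := fun r => v r.2 r.1.2 + 4 * ‖r.2 - r.1.1‖ ^ 2
  have hF : ContinuousOn F K :=
    (hv.comp (f := fun r : (Eu n × ℝ) × Eu n => (r.2, r.1.2)) (by fun_prop)
      fun r hr => hD ⟨hr.2, hr.1.2⟩).add (by fun_prop)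
  have hcomp (y : Eu n) (hy : y ∈ closedBall (0 : Eu n) 1) : ContinuousOn
      (fun r : (Eu n × ℝ) × Eu n => v y r.1.2 + 4 * ‖y - r.1.1‖ ^ 2) K :=
    (hv.comp (f := fun r : (Eu n × ℝ) × Eu n => (y, r.1.2)) (by fun_prop)
      fun r hr => hD ⟨hy, hr.1.2⟩).add (by fun_prop)
  have hvt' : ContinuousOn (fun r : (Eu n × ℝ) × Eu n => tD v r.2 r.1.2) K :=
    hvt.comp (f := fun r : (Eu n × ℝ) × Eu n => (r.2, r.1.2)) (by fun_prop)
      fun r hr => hD ⟨hr.2, hr.1.2⟩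
  have hmem {r} (h : r ∈ contactSet v x₀) : r ∈ K :=
    ⟨⟨mem_closedBall_iff_norm.2 h.1.vertex_near, h.1.time_mem⟩,
      mem_closedBall_zero_iff.2 h.1.norm_le⟩
  refine hK.of_isClosed_subset ?_ fun r => hmem
  convert ((isClosed_sep_forall_le hK.isClosed hF hcomp).inter
    ((hF.sub (g := fun r => (r.1.2 + 1) / 2) (by fun_prop)).preimage_isClosed_of_isClosed
      hK.isClosed (isClosed_Icc (a := (-15 / 32 : ℝ)) (b := -1 / 4)))).inter
    (hK.isClosed.isClosed_le hvt' (continuousOn_const (c := (1 / 2 : ℝ)))) using 1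
  ext r
  constructor
  · exact fun h => ⟨⟨⟨hmem h, fun y hy => h.1.isMinOn hy⟩, hmem h, h.1.mem_window⟩, hmem h, h.2⟩
  · rintro ⟨⟨⟨hr, hmin⟩, -, hwindow⟩, -, ht⟩
    exact ⟨⟨mem_closedBall_zero_iff.1 hr.2, hr.1.2, mem_closedBall_iff_norm.1 hr.1.1, hmin,
      hwindow⟩, ht⟩

lemma continuousOn_touching_sum (hD : closedBall (0 : Eu n) 1 ×ˢ Icc (-1) 1 ⊆ D)
    (hv : ContinuousOn (fun p : Eu n × ℝ => v p.1 p.2) D) (z : Eu n) :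
    ContinuousOn (fun p : ℝ × Eu n => v p.2 p.1 + 4 * ‖p.2 - z‖ ^ 2)
      (Icc (-1) 1 ×ˢ closedBall 0 1) :=
  (hv.comp (f := Prod.swap) (by fun_prop) fun _ hp => hD ⟨hp.2, hp.1⟩).add (by fun_prop)

/-- The minimum of `v(·,t) + 4|· - z|²` over the unit ball, tilted by `-(t+1)/2`. -/
def tiltedMin (v : Eu n → ℝ → ℝ) (z : Eu n) (t : ℝ) : ℝ :=
  sInf ((fun x => v x t + 4 * ‖x - z‖ ^ 2) '' closedBall 0 1) - (t + 1) / 2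

lemma continuousOn_tiltedMin (hD : closedBall (0 : Eu n) 1 ×ˢ Icc (-1) 1 ⊆ D)
    (hv : ContinuousOn (fun p : Eu n × ℝ => v p.1 p.2) D) :
    ContinuousOn (tiltedMin v z) (Icc (-1) 1) :=
  (continuousOn_sInf_image (g := fun t x => v x t + 4 * ‖x - z‖ ^ 2) (isCompact_closedBall _ _)
    (continuousOn_touching_sum hD hv z)).sub (by fun_prop)

lemma exists_isMinOn_tiltedMin (hD : closedBall (0 : Eu n) 1 ×ˢ Icc (-1) 1 ⊆ D)
    (hv : ContinuousOn (fun p : Eu n × ℝ => v p.1 p.2) D) (z : Eu n) (ht : t ∈ Icc (-1 : ℝ) 1) :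
    ∃ x, ‖x‖ ≤ 1 ∧ IsMinOn (fun y => v y t + 4 * ‖y - z‖ ^ 2) (closedBall 0 1) x ∧
      tiltedMin v z t = v x t + 4 * ‖x - z‖ ^ 2 - (t + 1) / 2 := by
  obtain ⟨x, hx, heq, hmin⟩ := (isCompact_closedBall (0 : Eu n) 1).exists_sInf_image_eq_and_le
    ⟨0, by simp⟩ ((continuousOn_touching_sum hD hv z).comp (f := fun x => (t, x)) (by fun_prop)
      fun x hx => ⟨ht, hx⟩)
  exact ⟨x, mem_closedBall_zero_iff.1 hx, hmin, congrArg (· - (t + 1) / 2) heq⟩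

lemma tiltedMin_le (hD : closedBall (0 : Eu n) 1 ×ˢ Icc (-1) 1 ⊆ D)
    (hv : ContinuousOn (fun p : Eu n × ℝ => v p.1 p.2) D) (z : Eu n) (ht : t ∈ Icc (-1 : ℝ) 1)
    (hx : ‖x‖ ≤ 1) : tiltedMin v z t ≤ v x t + 4 * ‖x - z‖ ^ 2 - (t + 1) / 2 := by
  obtain ⟨y, -, hmin, heq⟩ := exists_isMinOn_tiltedMin hD hv z ht
  rw [heq]
  exact sub_le_sub_right (hmin (mem_closedBall_zero_iff.2 hx)) _

lemma IsParabolicSol.eventually_tiltedMin_le (hv : IsNormalizedSol θ Λ D v)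
    (hD : closedBall (0 : Eu n) 1 ×ˢ Icc (-1) 1 ⊆ D) (ht : t ∈ Ioc (-1 : ℝ) 1) (hx : ‖x‖ ≤ 1)
    (heq : tiltedMin v z t = v x t + 4 * ‖x - z‖ ^ 2 - (t + 1) / 2) {C : ℝ}
    (hC : -C < tD v x t - 1 / 2) :
    ∀ᶠ s in 𝓝[<] t, tiltedMin v z s ≤ tiltedMin v z t + C * (t - s) := by
  have hderiv : HasDerivAt (fun s => v x s + 4 * ‖x - z‖ ^ 2 - (s + 1) / 2) (tD v x t - 1 / 2) t :=
    ((hv.differentiableAt (hD ⟨mem_closedBall_zero_iff.2 hx, ht.1.le, ht.2⟩)).hasDerivAt.add_const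
      _).sub (((hasDerivAt_id t).add_const 1).div_const 2)
  filter_upwards [eventually_left_le_of_hasDerivAt hderiv hC, Ioo_mem_nhdsLT ht.1] with s hs hst
  rw [heq]
  exact (tiltedMin_le hD hv.continuousOn z ⟨hst.1.le, hst.2.le.trans ht.2⟩ hx).trans hs

/-- Going backwards in time, the tilted minimum crosses the window from below; it can only grow at
contact times, and then at a bounded rate. -/
lemma IsParabolicSol.le_volume_contact_times (hθ : 0 < θ) (hΛ : 0 ≤ Λ)
    (hv : IsNormalizedSol θ Λ D v) (hD : closedBall (0 : Eu n) 1 ×ˢ Icc (-1) 1 ⊆ D)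
    (hv₀ : ∀ x t, ‖x‖ ≤ 1 → t ∈ Icc (-1 : ℝ) 1 → 0 ≤ v x t) (hx₀ : ‖x₀‖ ≤ 1 / 2)
    (hvx₀ : v x₀ 1 < 1 / 2) (hz : ‖z - x₀‖ ≤ 1 / 16) :
    ENNReal.ofReal ((-1 / 4 - -15 / 32) / (contactConst n θ Λ + 1)) ≤
      volume (Prod.mk z ⁻¹' (Prod.fst '' contactSet v x₀)) := by
  have hexists {t} (ht : t ∈ Ioc (-1 : ℝ) 1)
      (hwindow : tiltedMin v z t ∈ Icc (-15 / 32 : ℝ) (-1 / 4)) :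
      ∃ x, IsWindowMin v x₀ z t x ∧
        tiltedMin v z t = v x t + 4 * ‖x - z‖ ^ 2 - (t + 1) / 2 := by
    obtain ⟨x, hx, hmin, heq⟩ := exists_isMinOn_tiltedMin hD hv.continuousOn z ⟨ht.1.le, ht.2⟩
    exact ⟨x, ⟨hx, ⟨ht.1.le, ht.2⟩, hz, hmin, heq ▸ hwindow⟩, heq⟩
  refine ofReal_div_le_volume_of_left_growth (G := tiltedMin v z) (a := -1) (b := 1) (by norm_num)
    (by norm_num) (add_pos (contactConst_pos hθ hΛ) one_pos)
    (continuousOn_tiltedMin hD hv.continuousOn) ?_ ?_ ?_ ?_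
  · have h1 : (-1 : ℝ) ∈ Icc (-1 : ℝ) 1 := by simp
    obtain ⟨x, hx, -, heq⟩ := exists_isMinOn_tiltedMin hD hv.continuousOn z h1
    linarith [hv₀ x _ hx h1, sq_nonneg ‖x - z‖]
  · have hsq : ‖x₀ - z‖ ^ 2 ≤ (1 / 16) ^ 2 :=
      pow_le_pow_left₀ (norm_nonneg _) (norm_sub_rev z x₀ ▸ hz) 2
    linarith [tiltedMin_le hD hv.continuousOn z (t := 1) (x := x₀) (by simp) (by linarith)]
  · intro t ht hwindow
    obtain ⟨x, hx, heq⟩ := hexists ht hwindow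
    have hvx := hv₀ x t hx.norm_le hx.time_mem
    have hslope := hv.neg_contactConst_le hθ.le hΛ
      (hD ⟨mem_closedBall_zero_iff.2 hx.norm_le, hx.time_mem⟩)
      ((hx.norm_sub_lt hvx).le.trans (by norm_num)) (hx.isLocalMin hx₀ hvx)
    exact hv.eventually_tiltedMin_le hD ht hx.norm_le heq (by linarith)
  · intro t ht hwindow htZ
    obtain ⟨x, hx, heq⟩ := hexists ht hwindow
    have htD : 1 / 2 < tD v x t := by
      by_contra! hle
      exact htZ ⟨((z, t), x), ⟨hx, hle⟩, rfl⟩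
    simpa using hv.eventually_tiltedMin_le hD ht hx.norm_le heq (C := 0) (by linarith)

/-- The vertices with contact at time `t` are images of contact points under `x ↦ x + Dv / 8`. -/
lemma IsParabolicSol.volume_contact_vertices_le (hθ : 0 < θ) (hΛ : 0 ≤ Λ)
    (hv : IsNormalizedSol θ Λ D v) (hD : closedBall (0 : Eu n) 1 ×ˢ Icc (-1) 1 ⊆ D)
    (hv₀ : ∀ x t, ‖x‖ ≤ 1 → t ∈ Icc (-1 : ℝ) 1 → 0 ≤ v x t) (hx₀ : ‖x₀‖ ≤ 1 / 2)
    (hvx₀ : v x₀ 1 < 1 / 2) (t : ℝ) :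
    volume ((fun z => (z, t)) ⁻¹' (Prod.fst '' contactSet v x₀)) ≤
      ENNReal.ofReal (contactJacobianConst n θ Λ) * volume ((fun x => (x, t)) ⁻¹'
        {p : Eu n × ℝ | p ∈ ball 0 1 ×ˢ Ioo (-1) 1 ∧ v p.1 p.2 < 1}) := by
  set s : Set (Eu n) := {x | ∃ z, ((z, t), x) ∈ contactSet v x₀} with hsdef
  have hs : MeasurableSet s := by
    have : s = Prod.snd '' (contactSet v x₀ ∩ {r | r.1.2 = t}) := by
      ext x
      simp [hsdef]
    rw [this]
    exact (((isCompact_contactSet hD hv.continuousOn hv.continuousOn_tD).inter_right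
      (isClosed_eq (by fun_prop) (by fun_prop))).image continuous_snd).measurableSet
  have hmemD {x z} (h : IsWindowMin v x₀ z t x) : (x, t) ∈ D :=
    hD ⟨mem_closedBall_zero_iff.2 h.norm_le, h.time_mem⟩
  have hnonneg {x z} (h : IsWindowMin v x₀ z t x) : 0 ≤ v x t := hv₀ x t h.norm_le h.time_mem
  refine (volume_le_of_mem_image_add_smul_gradient (f := fun y => v y t) (c := 1 / 8)
    (C := contactJacobianConst n θ Λ) hs ?_ ?_ ?_).trans ?_
  · rintro x ⟨z, h, -⟩
    exact hv.contDiffAt (hmemD h)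
  · rintro x ⟨z, h, ht⟩
    exact hv.abs_det_contact_le hθ hΛ (hmemD h)
      ((h.norm_sub_lt (hnonneg h)).le.trans (by norm_num)) (h.isLocalMin hx₀ (hnonneg h)) ht
  · rintro z ⟨⟨⟨z', t'⟩, x⟩, h, heq⟩
    obtain ⟨rfl, rfl⟩ := Prod.mk.inj heq
    refine ⟨x, ⟨_, h⟩, ?_⟩
    simp only [gradient_of_isLocalMin_add_mul_norm_sub_sq (hv.contDiffAt (hmemD h.1))
      (h.1.isLocalMin hx₀ (hnonneg h.1)), smul_smul]
    norm_num
  · gcongr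
    rintro x ⟨z, h, -⟩
    exact ⟨⟨mem_ball_zero_iff.2 (h.norm_lt_one hx₀ (hnonneg h)),
      h.time_mem_Ioo hx₀ (hnonneg h) hvx₀⟩, h.lt_one⟩

end ABP

theorem exists_half_le_of_volume_sublevel_lt (n : ℕ) {θ Λ : ℝ} (hθ : 0 < θ) (hΛ : 0 ≤ Λ) :
    ∃ κ > 0, ∀ (D : Set (Eu n × ℝ)) (v : Eu n → ℝ → ℝ), IsNormalizedSol θ Λ D v →
      closedBall (0 : Eu n) 1 ×ˢ Icc (-1) 1 ⊆ D →
      (∀ x t, ‖x‖ ≤ 1 → t ∈ Icc (-1 : ℝ) 1 → 0 ≤ v x t) →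
      volume {p : Eu n × ℝ | p ∈ ball 0 1 ×ˢ Ioo (-1) 1 ∧ v p.1 p.2 < 1} < ENNReal.ofReal κ →
      ∀ x, ‖x‖ ≤ 1 / 2 → 1 / 2 ≤ v x 1 := by
  have hC := contactConst_pos (n := n) hθ hΛ
  set C₁ : ℝ := (-1 / 4 - -15 / 32) / (contactConst n θ Λ + 1)
  set C₂ := contactJacobianConst n θ Λ
  have hC₁ : 0 < C₁ := div_pos (by norm_num) (by positivity)
  have hC₂ : 0 < C₂ := pow_pos (by positivity) n
  set b : ℝ := volume.real (closedBall (0 : Eu n) (1 / 16))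
  have hb : 0 < b := ENNReal.toReal_pos (measure_closedBall_pos _ _ (by norm_num)).ne'
    (isCompact_closedBall _ _).measure_ne_top
  refine ⟨C₁ * b / C₂, by positivity, fun D v hv hD hv₀ hE x₀ hx₀ => ?_⟩
  by_contra! hvx₀
  set E := {p : Eu n × ℝ | p ∈ ball 0 1 ×ˢ Ioo (-1) 1 ∧ v p.1 p.2 < 1}
  have hE' : IsOpen E :=
    (hv.continuousOn.mono ((Set.prod_mono ball_subset_closedBall Ioo_subset_Icc_self).trans hD)
      ).isOpen_inter_preimage (isOpen_ball.prod isOpen_Ioo) isOpen_Iio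
  have hmain := mul_measure_le_of_slices (μ := volume) (ν := volume) (B := closedBall x₀ (1 / 16))
    ((isCompact_contactSet hD hv.continuousOn hv.continuousOn_tD (x₀ := x₀)).image
      continuous_fst).measurableSet hE'.measurableSet measurableSet_closedBall
    (fun z hz => hv.le_volume_contact_times hθ hΛ hD hv₀ hx₀ hvx₀ (mem_closedBall_iff_norm.1 hz))
    (hv.volume_contact_vertices_le hθ hΛ hD hv₀ hx₀ hvx₀)
  have hvolume : volume (closedBall x₀ (1 / 16)) = ENNReal.ofReal b := by
    rw [Measure.addHaar_closedBall_center,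
      ofReal_measureReal (isCompact_closedBall _ _).measure_ne_top]
  refine hmain.not_gt ?_
  rw [hvolume, ← ENNReal.ofReal_mul hC₁.le, ← Measure.volume_eq_prod]
  calc ENNReal.ofReal C₂ * volume E < ENNReal.ofReal C₂ * ENNReal.ofReal (C₁ * b / C₂) := by
        gcongr
        simp
    _ = ENNReal.ofReal (C₁ * b) := by
        rw [← ENNReal.ofReal_mul hC₂.le, mul_div_cancel₀ _ hC₂.ne']

/-! ### Parabolic cylinders and covering arguments -/

/-- The parabolic cylinder of radius `r`, centred at `z` in space and time. -/
def parCyl (z : Eu n × ℝ) (r : ℝ) : Set (Eu n × ℝ) :=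
  ball z.1 r ×ˢ Ioo (z.2 - r ^ 2) (z.2 + r ^ 2)

lemma isOpen_parCyl (z : Eu n × ℝ) (r : ℝ) : IsOpen (parCyl z r) := isOpen_ball.prod isOpen_Ioo

lemma mem_parCyl_self (z : Eu n × ℝ) {r : ℝ} (hr : 0 < r) : z ∈ parCyl z r :=
  ⟨mem_ball_self hr, sub_lt_self _ (by positivity), lt_add_of_pos_right _ (by positivity)⟩

lemma mem_parCyl_three_mul_of_inter_nonempty {z z' : Eu n × ℝ} {r r' : ℝ}
    (hr : 0 < r) (hr' : r ≤ 2 * r') (h : (parCyl z r ∩ parCyl z' r').Nonempty) :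
    z ∈ parCyl z' (3 * r') := by
  obtain ⟨y, ⟨hyz, hyz₁, hyz₂⟩, hyz', hyz'₁, hyz'₂⟩ := h
  have hsq : r ^ 2 ≤ (2 * r') ^ 2 := by gcongr
  refine ⟨?_, by nlinarith, by nlinarith⟩
  rw [mem_ball] at *
  linarith [dist_triangle z.1 y.1 z'.1, dist_comm z.1 y.1]

lemma eventually_parCyl_subset {z : Eu n × ℝ} {s : Set (Eu n × ℝ)} (hs : s ∈ 𝓝 z) :
    ∀ᶠ r in 𝓝[>] 0, parCyl z r ⊆ s := by
  obtain ⟨δ, hδ, hsub⟩ := Metric.mem_nhds_iff.1 hs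
  filter_upwards [Ioo_mem_nhdsGT (lt_min hδ one_pos)] with r ⟨hr, hrlt⟩ p ⟨hp, hp₁, hp₂⟩
  have hrδ : r < δ := hrlt.trans_le (min_le_left _ _)
  have hr1 : r < 1 := hrlt.trans_le (min_le_right _ _)
  refine hsub (max_lt ((mem_ball.1 hp).trans hrδ) ?_)
  rw [Real.dist_eq, abs_lt]
  constructor <;> nlinarith

lemma volume_parCyl (z : Eu n × ℝ) {r : ℝ} (hr : 0 < r) :
    volume (parCyl z r) = ENNReal.ofReal (r ^ (n + 2) * (2 * volume.real (ball (0 : Eu n) 1))) := by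
  have hlength : z.2 + r ^ 2 - (z.2 - r ^ 2) = r ^ 2 * 2 := by ring
  rw [parCyl, Measure.volume_eq_prod, Measure.prod_prod, Measure.addHaar_ball_of_pos _ _ hr,
    Real.volume_Ioo, hlength, finrank_euclideanSpace_fin,
    ← ofReal_measureReal measure_ball_lt_top.ne, ← ENNReal.ofReal_mul (by positivity),
    ← ENNReal.ofReal_mul (by positivity)]
  ring_nf

lemma map_const_add_smul_volume {E : Type*} [NormedAddCommGroup E] [NormedSpace ℝ E]
    [FiniteDimensional ℝ E] [MeasurableSpace E] [BorelSpace E] (μ : Measure E) [μ.IsAddHaarMeasure]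
    (x₀ : E) {c : ℝ} (hc : 0 < c) :
    μ.map (fun y => x₀ + c • y) = ENNReal.ofReal (c ^ Module.finrank ℝ E)⁻¹ • μ := by
  have hcomp : (fun y : E => x₀ + c • y) = (fun y => x₀ + y) ∘ (fun y => c • y) := rfl
  rw [hcomp, ← Measure.map_map (by fun_prop) (by fun_prop), Measure.map_addHaar_smul _ hc.ne',
    Measure.map_smul, map_add_left_eq_self, abs_of_pos (by positivity)]

lemma volume_preimage_parabolic_scaling (x₀ : Eu n) (t₀ : ℝ) {r : ℝ} (hr : 0 < r)
    {S : Set (Eu n × ℝ)} (hS : MeasurableSet S) :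
    volume ((fun p : Eu n × ℝ => (x₀ + r • p.1, t₀ + r ^ 2 * p.2)) ⁻¹' S) =
      ENNReal.ofReal (r ^ (n + 2))⁻¹ * volume S := by
  have hprod := Measure.map_prod_map (volume : Measure (Eu n)) (volume : Measure ℝ)
    (f := fun y => x₀ + r • y) (g := fun s => t₀ + r ^ 2 • s) (by fun_prop) (by fun_prop)
  rw [map_const_add_smul_volume _ _ hr, map_const_add_smul_volume _ _ (by positivity : 0 < r ^ 2),
    Measure.prod_smul_left, Measure.prod_smul_right, smul_smul,
    ← ENNReal.ofReal_mul (by positivity), ← mul_inv, ← Measure.volume_eq_prod] at hprod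
  have hS' := congr($hprod S)
  rw [Measure.map_apply (by fun_prop) hS] at hS'
  simpa [pow_add, Prod.map_def] using hS'.symm

section Covering

variable {κ Rmax : ℝ} {Γ : Set (Eu n × ℝ)} {r : Γ → ℝ}

/-- Vitali covering: the disjoint cylinders capture a fixed fraction of `Γ`, and each of them
leaves `Γ` on a fixed fraction of its volume. -/
lemma ofReal_mul_volume_le_volume_iUnion_parCyl_diff (hκ : 0 < κ)
    (hr : ∀ z, r z ∈ Ioc 0 Rmax) (hΓ : MeasurableSet Γ)
    (hout : ∀ z : Γ, ENNReal.ofReal (κ * r z ^ (n + 2)) ≤ volume (parCyl z.1 (r z) \ Γ)) :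
    ENNReal.ofReal (κ / (3 ^ (n + 2) * (2 * volume.real (ball (0 : Eu n) 1)))) * volume Γ ≤
      volume ((⋃ z : Γ, parCyl z.1 (r z)) \ Γ) := by
  obtain ⟨u, -, hdisj, hu⟩ := Vitali.exists_disjoint_subfamily_covering_enlargement
    (fun z : Γ => parCyl z.1 (r z)) univ r 2 (by norm_num) (fun z _ => (hr z).1.le) Rmax
    (fun z _ => (hr z).2) (fun z _ => ⟨z, mem_parCyl_self _ (hr z).1⟩)
  have hcountable : u.Countable := hdisj.countable_of_isOpen (fun z _ => isOpen_parCyl _ _)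
    fun z _ => ⟨z, mem_parCyl_self _ (hr z).1⟩
  have hcover : Γ ⊆ ⋃ z ∈ u, parCyl z.1 (3 * r z) := fun z hz => by
    obtain ⟨z', hz', hmeet, hle⟩ := hu ⟨z, hz⟩ (mem_univ _)
    exact mem_biUnion hz' (mem_parCyl_three_mul_of_inter_nonempty (hr _).1 hle hmeet)
  have hb : 0 < volume.real (ball (0 : Eu n) 1) :=
    ENNReal.toReal_pos (measure_ball_pos _ _ one_pos).ne' measure_ball_lt_top.ne
  set w : ℝ := 3 ^ (n + 2) * (2 * volume.real (ball (0 : Eu n) 1))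
  have hw : 0 < w := by positivity
  have hupper : volume Γ ≤ ENNReal.ofReal w * ∑' z : u, ENNReal.ofReal (r z ^ (n + 2)) :=
    calc volume Γ ≤ ∑' z : u, volume (parCyl z.1.1 (3 * r z)) :=
          (measure_mono hcover).trans (measure_biUnion_le _ hcountable _)
      _ = ∑' z : u, ENNReal.ofReal w * ENNReal.ofReal (r z ^ (n + 2)) := by
          refine tsum_congr fun z => ?_
          rw [volume_parCyl _ (mul_pos three_pos (hr z).1), ← ENNReal.ofReal_mul hw.le]
          congr 1
          ring
      _ = _ := ENNReal.tsum_mul_left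
  calc ENNReal.ofReal (κ / w) * volume Γ
      ≤ ENNReal.ofReal (κ / w) *
          (ENNReal.ofReal w * ∑' z : u, ENNReal.ofReal (r z ^ (n + 2))) := by gcongr
    _ = ∑' z : u, ENNReal.ofReal (κ * r z ^ (n + 2)) := by
        rw [← mul_assoc, ← ENNReal.ofReal_mul (by positivity), div_mul_cancel₀ _ hw.ne',
          ← ENNReal.tsum_mul_left]
        simp only [ENNReal.ofReal_mul hκ.le]
    _ ≤ ∑' z : u, volume (parCyl z.1.1 (r z) \ Γ) := ENNReal.tsum_le_tsum fun z => hout z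
    _ = volume (⋃ z ∈ u, parCyl z.1 (r z) \ Γ) :=
        (measure_biUnion hcountable (hdisj.mono fun z => sdiff_subset)
          fun z _ => (isOpen_parCyl _ _).measurableSet.diff hΓ).symm
    _ ≤ _ := measure_mono <| iUnion₂_subset fun z _ =>
        sdiff_subset_sdiff_left (subset_iUnion (fun z : Γ => parCyl z.1 (r z)) z)

lemma exists_ofReal_one_add_mul_volume_le_volume_iUnion_parCyl (n : ℕ) {κ : ℝ} (hκ : 0 < κ) :
    ∃ σ > 0, ∀ (Γ : Set (Eu n × ℝ)) (r : Γ → ℝ) (Rmax : ℝ), MeasurableSet Γ →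
      (∀ z, r z ∈ Ioc 0 Rmax) →
      (∀ z : Γ, ENNReal.ofReal (κ * r z ^ (n + 2)) ≤ volume (parCyl z.1 (r z) \ Γ)) →
      ENNReal.ofReal (1 + σ) * volume Γ ≤ volume (⋃ z : Γ, parCyl z.1 (r z)) := by
  have hb : 0 < volume.real (ball (0 : Eu n) 1) :=
    ENNReal.toReal_pos (measure_ball_pos _ _ one_pos).ne' measure_ball_lt_top.ne
  refine ⟨κ / (3 ^ (n + 2) * (2 * volume.real (ball (0 : Eu n) 1))), by positivity,
    fun Γ r Rmax hΓ hr hout => ?_⟩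
  have hsub : Γ ⊆ ⋃ z : Γ, parCyl z.1 (r z) := fun z hz =>
    mem_iUnion.2 ⟨⟨z, hz⟩, mem_parCyl_self _ (hr _).1⟩
  rw [ENNReal.ofReal_add zero_le_one (by positivity), add_mul, ENNReal.ofReal_one, one_mul,
    ← measure_inter_add_sdiff (⋃ z : Γ, parCyl z.1 (r z)) hΓ, inter_eq_self_of_subset_right hsub]
  gcongr
  exact ofReal_mul_volume_le_volume_iUnion_parCyl_diff hκ hr hΓ hout

end Covering

section Stacking

variable {ι : Type*} {a c e : ι → ℝ} {α : ℝ}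

lemma ofReal_mul_volume_Ioo_union_inter_Ioi_le {E U : Set ℝ} {a c e t α : ℝ}
    (hα : α ∈ Icc (0 : ℝ) 1) (hc : α * (e - a) ≤ e - c) (hte : max t a ≤ e) (hE : E ⊆ Ioi a)
    (hEU : ENNReal.ofReal α * volume (E ∩ Ioi e) ≤ volume (U ∩ Ioi e)) :
    ENNReal.ofReal α * volume ((Ioo a e ∪ E) ∩ Ioi t) ≤ volume ((Ioo c e ∪ U) ∩ Ioi t) := by
  set t' := max t a
  have hsplit : (Ioo a e ∪ E) ∩ Ioi t ⊆ Ioc t' e ∪ (E ∩ Ioi e) := by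
    rintro x ⟨hx, htx⟩
    have hax : a < x := hx.elim (·.1) (hE ·)
    obtain hle | hlt := le_or_gt x e
    · exact Or.inl ⟨max_lt htx hax, hle⟩
    · exact Or.inr ⟨hx.resolve_left fun h => h.2.not_gt hlt, hlt⟩
  have hlength : α * (e - t') ≤ e - max t' c := by
    obtain hle | hle := le_total t' c
    · rw [max_eq_right hle]
      exact le_trans (by gcongr; exacts [hα.1, le_max_right _ _]) hc
    · rw [max_eq_left hle]
      exact mul_le_of_le_one_left (sub_nonneg.2 hte) hα.2
  have hdisj : Disjoint (Ioo (max t' c) e) (U ∩ Ioi e) :=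
    disjoint_left.2 fun x hx hx' => hx.2.not_gt hx'.2
  calc ENNReal.ofReal α * volume ((Ioo a e ∪ E) ∩ Ioi t)
      ≤ ENNReal.ofReal α * (volume (Ioc t' e) + volume (E ∩ Ioi e)) := by
        gcongr
        exact (measure_mono hsplit).trans (measure_union_le _ _)
    _ = ENNReal.ofReal (α * (e - t')) + ENNReal.ofReal α * volume (E ∩ Ioi e) := by
        rw [mul_add, Real.volume_Ioc, ENNReal.ofReal_mul hα.1]
    _ ≤ volume (Ioo (max t' c) e) + volume (U ∩ Ioi e) := by
        rw [Real.volume_Ioo]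
        gcongr
    _ = volume (Ioo (max t' c) e ∪ (U ∩ Ioi e)) :=
        (measure_union' hdisj measurableSet_Ioo).symm
    _ ≤ _ := by
        refine measure_mono (union_subset (fun x hx => ⟨Or.inl ⟨?_, hx.2⟩, ?_⟩) fun x hx => ?_)
        · exact (le_max_right _ _).trans_lt hx.1
        · exact (le_max_left _ _).trans_lt ((le_max_left _ _).trans_lt hx.1)
        · exact ⟨Or.inr hx.1, ((le_max_left _ _).trans hte).trans_lt hx.2⟩

/-- An interval with the lowest right end is either contained in another one or reaches furthest
to the left, and then it can be split off. -/
lemma ofReal_mul_volume_biUnion_Ioo_inter_Ioi_le (hα : α ∈ Icc (0 : ℝ) 1)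
    (hc : ∀ i, α * (e i - a i) ≤ e i - c i) (s : Finset ι) (t : ℝ) :
    ENNReal.ofReal α * volume ((⋃ i ∈ s, Ioo (a i) (e i)) ∩ Ioi t) ≤
      volume ((⋃ i ∈ s, Ioo (c i) (e i)) ∩ Ioi t) := by
  classical
  induction s using Finset.induction_on_min_value e generalizing t with
  | empty => simp
  | insert j s _ hmin ih =>
  simp only [Finset.set_biUnion_insert]
  set E := ⋃ i ∈ s, Ioo (a i) (e i)
  set U := ⋃ i ∈ s, Ioo (c i) (e i)
  by_cases hnested : Ioo (a j) (e j) ∩ Ioi t ⊆ E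
  · calc ENNReal.ofReal α * volume ((Ioo (a j) (e j) ∪ E) ∩ Ioi t)
        ≤ ENNReal.ofReal α * volume (E ∩ Ioi t) := by
          gcongr 2
          rintro y ⟨hy | hy, hty⟩
          exacts [⟨hnested ⟨hy, hty⟩, hty⟩, ⟨hy, hty⟩]
      _ ≤ volume (U ∩ Ioi t) := ih t
      _ ≤ _ := by
          gcongr
          exact subset_union_right
  · obtain ⟨y, ⟨hyj, hty⟩, hyE⟩ := not_subset.1 hnested
    refine ofReal_mul_volume_Ioo_union_inter_Ioi_le hα (hc j)
      (max_le (hty.le.trans hyj.2.le) (hyj.1.trans hyj.2).le)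
      (iUnion₂_subset fun i hi x hx => ?_) (ih (e j))
    have hleft : a j ≤ a i := by
      by_contra! hlt
      exact hyE (mem_biUnion hi ⟨hlt.trans hyj.1, hyj.2.trans_le (hmin i hi)⟩)
    exact hleft.trans_lt hx.1

lemma ofReal_mul_volume_biUnion_Ioo_le (hα : α ∈ Icc (0 : ℝ) 1)
    (hc : ∀ i, α * (e i - a i) ≤ e i - c i) (s : Finset ι) :
    ENNReal.ofReal α * volume (⋃ i ∈ s, Ioo (a i) (e i)) ≤ volume (⋃ i ∈ s, Ioo (c i) (e i)) := by
  obtain ⟨t, ht⟩ := (s.image a).bddBelow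
  have hsub : ⋃ i ∈ s, Ioo (a i) (e i) ⊆ Ioi t := iUnion₂_subset fun i hi x hx =>
    (ht (Finset.mem_coe.2 (Finset.mem_image_of_mem a hi))).trans_lt hx.1
  have h := ofReal_mul_volume_biUnion_Ioo_inter_Ioi_le hα hc s t
  rw [inter_eq_left.2 hsub] at h
  exact h.trans (measure_mono inter_subset_left)

lemma ofReal_mul_volume_biUnion_prod_Ioo_le {B : ι → Set (Eu n)} (hB : ∀ i, IsOpen (B i))
    (hα : α ∈ Icc (0 : ℝ) 1) (hc : ∀ i, α * (e i - a i) ≤ e i - c i) (s : Finset ι) :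
    ENNReal.ofReal α * volume (⋃ i ∈ s, B i ×ˢ Ioo (a i) (e i)) ≤
      volume (⋃ i ∈ s, B i ×ˢ Ioo (c i) (e i)) := by
  classical
  have hmeas (f : ι → ℝ) : MeasurableSet (⋃ i ∈ s, B i ×ˢ Ioo (f i) (e i)) :=
    (isOpen_biUnion fun i _ => (hB i).prod isOpen_Ioo).measurableSet
  have hslice (f : ι → ℝ) (x : Eu n) : Prod.mk x ⁻¹' (⋃ i ∈ s, B i ×ˢ Ioo (f i) (e i)) =
      ⋃ i ∈ s.filter (x ∈ B ·), Ioo (f i) (e i) := by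
    ext t
    simp only [mem_preimage, mem_iUnion, mem_prod, Finset.mem_filter, exists_prop, and_assoc]
  rw [Measure.volume_eq_prod, Measure.prod_apply (hmeas a), Measure.prod_apply (hmeas c),
    ← lintegral_const_mul _ (measurable_measure_prodMk_left (hmeas a))]
  refine lintegral_mono fun x => ?_
  simp only [hslice]
  exact ofReal_mul_volume_biUnion_Ioo_le hα hc _

lemma ofReal_mul_volume_iUnion_prod_Ioo_le {B : ι → Set (Eu n)} (hB : ∀ i, IsOpen (B i))
    (hα : α ∈ Icc (0 : ℝ) 1) (hc : ∀ i, α * (e i - a i) ≤ e i - c i) :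
    ENNReal.ofReal α * volume (⋃ i, B i ×ˢ Ioo (a i) (e i)) ≤
      volume (⋃ i, B i ×ˢ Ioo (c i) (e i)) := by
  have hopen (i : ι) : IsOpen (B i ×ˢ Ioo (a i) (e i)) := (hB i).prod isOpen_Ioo
  simp only [(isOpen_iUnion hopen).measure_eq_iSup_isCompact, ENNReal.mul_iSup]
  refine iSup₂_le fun K hK => iSup_le fun hKc => ?_
  obtain ⟨s, hs⟩ := hKc.elim_finite_subcover _ hopen hK
  calc ENNReal.ofReal α * volume K
      ≤ ENNReal.ofReal α * volume (⋃ i ∈ s, B i ×ˢ Ioo (a i) (e i)) := by gcongr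
    _ ≤ volume (⋃ i ∈ s, B i ×ˢ Ioo (c i) (e i)) :=
        ofReal_mul_volume_biUnion_prod_Ioo_le hB hα hc s
    _ ≤ _ := measure_mono (iUnion₂_subset fun i _ => subset_iUnion_of_subset i le_rfl)

end Stacking

/-- The covering gains a factor `1 + 2σ`; waiting until the cylinders have passed loses at most the
factor `(M - 1) / (M + 1)`, which is close to `1` for `M` large. -/
lemma exists_ofReal_one_add_mul_volume_le_volume_iUnion_later (n : ℕ) {κ : ℝ} (hκ : 0 < κ) :
    ∃ σ > 0, ∃ M > 1, ∀ (Γ : Set (Eu n × ℝ)) (r : Γ → ℝ) (Rmax : ℝ), MeasurableSet Γ →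
      (∀ z, r z ∈ Ioc 0 Rmax) →
      (∀ z : Γ, ENNReal.ofReal (κ * r z ^ (n + 2)) ≤ volume (parCyl z.1 (r z) \ Γ)) →
      ENNReal.ofReal (1 + σ) * volume Γ ≤ volume (⋃ z : Γ,
        ball z.1.1 (r z) ×ˢ Ioo (z.1.2 + r z ^ 2) (z.1.2 + M * r z ^ 2)) := by
  obtain ⟨σ, hσ, hcover⟩ := exists_ofReal_one_add_mul_volume_le_volume_iUnion_parCyl n hκ
  have hM : 1 < 4 / σ + 3 := by linarith [div_pos four_pos hσ]
  refine ⟨σ / 2, half_pos hσ, 4 / σ + 3, hM, fun Γ r Rmax hΓ hr hout => ?_⟩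
  set M : ℝ := 4 / σ + 3 with hMdef
  set α : ℝ := (M - 1) / (M + 1)
  have hα : α ∈ Icc (0 : ℝ) 1 :=
    ⟨div_nonneg (by linarith) (by linarith), (div_le_one (by linarith)).2 (by linarith)⟩
  have hfactor : 1 + σ / 2 = α * (1 + σ) := by
    simp only [α, hMdef]
    field
  rw [hfactor, ENNReal.ofReal_mul hα.1, mul_assoc]
  calc ENNReal.ofReal α * (ENNReal.ofReal (1 + σ) * volume Γ)
      ≤ ENNReal.ofReal α * volume (⋃ z : Γ,
          ball z.1.1 (r z) ×ˢ Ioo (z.1.2 - r z ^ 2) (z.1.2 + M * r z ^ 2)) := by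
        gcongr
        refine (hcover Γ r Rmax hΓ hr hout).trans (measure_mono (iUnion_mono fun z => ?_))
        exact Set.prod_mono le_rfl (Ioo_subset_Ioo le_rfl (by nlinarith [sq_nonneg (r z)]))
    _ ≤ _ := by
        refine ofReal_mul_volume_iUnion_prod_Ioo_le (fun z => isOpen_ball) hα fun z => le_of_eq ?_
        simp only [α]
        field

/-! ### The Krylov–Safonov oscillation dichotomy -/

lemma norm_add_smul_sub_self (x₀ y : Eu n) {r : ℝ} (hr : 0 ≤ r) :
    ‖x₀ + r • y - x₀‖ = r * ‖y‖ := by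
  rw [add_sub_cancel_left, norm_smul, Real.norm_of_nonneg hr]

lemma exists_eq_add_smul (x₀ x : Eu n) {r : ℝ} (hr : r ≠ 0) : ∃ y, x = x₀ + r • y :=
  ⟨r⁻¹ • (x - x₀), by rw [smul_inv_smul₀ hr, add_sub_cancel]⟩

lemma add_smul_mem_parCyl_iff (z p : Eu n × ℝ) {r : ℝ} (hr : 0 < r) :
    (z.1 + r • p.1, z.2 + r ^ 2 * p.2) ∈ parCyl z r ↔ p ∈ ball 0 1 ×ˢ Ioo (-1) 1 := by
  have hr2 : 0 < r ^ 2 := by positivity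
  have hball : z.1 + r • p.1 ∈ ball z.1 r ↔ p.1 ∈ ball 0 1 := by
    rw [mem_ball_iff_norm, norm_add_smul_sub_self _ _ hr.le, mem_ball_zero_iff,
      mul_lt_iff_lt_one_right hr]
  have hlower : z.2 - r ^ 2 < z.2 + r ^ 2 * p.2 ↔ -1 < p.2 := by
    constructor <;> intro h <;> nlinarith
  have hupper : z.2 + r ^ 2 * p.2 < z.2 + r ^ 2 ↔ p.2 < 1 := by
    constructor <;> intro h <;> nlinarith
  exact and_congr hball (and_congr hlower hupper)

lemma volume_scaled_sublevel_lt {v : Eu n → ℝ → ℝ} {z : Eu n × ℝ} {r l κ : ℝ} (hr : 0 < r)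
    (hl : 0 < l) (hv : ContinuousOn (fun p : Eu n × ℝ => v p.1 p.2) (parCyl z r))
    (hvol : volume {p | p ∈ parCyl z r ∧ v p.1 p.2 < l} < ENNReal.ofReal (κ * r ^ (n + 2))) :
    volume {p : Eu n × ℝ | p ∈ ball 0 1 ×ˢ Ioo (-1) 1 ∧
      0 + l⁻¹ * v (z.1 + r • p.1) (z.2 + r ^ 2 * p.2) < 1} < ENNReal.ofReal κ := by
  have hopen : IsOpen {p | p ∈ parCyl z r ∧ v p.1 p.2 < l} :=
    hv.isOpen_inter_preimage (isOpen_parCyl _ _) isOpen_Iio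
  have hpreimage : {p : Eu n × ℝ | p ∈ ball 0 1 ×ˢ Ioo (-1) 1 ∧
      0 + l⁻¹ * v (z.1 + r • p.1) (z.2 + r ^ 2 * p.2) < 1} =
      (fun p : Eu n × ℝ => (z.1 + r • p.1, z.2 + r ^ 2 * p.2)) ⁻¹'
        {p | p ∈ parCyl z r ∧ v p.1 p.2 < l} := by
    ext p
    refine and_congr (add_smul_mem_parCyl_iff z p hr).symm ?_
    rw [zero_add, inv_mul_lt_iff₀ hl, mul_one]
  rw [hpreimage, volume_preimage_parabolic_scaling z.1 z.2 hr hopen.measurableSet]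
  calc ENNReal.ofReal (r ^ (n + 2))⁻¹ * volume {p | p ∈ parCyl z r ∧ v p.1 p.2 < l}
      < ENNReal.ofReal (r ^ (n + 2))⁻¹ * ENNReal.ofReal (κ * r ^ (n + 2)) := by
        gcongr
        simp [hr]
    _ = ENNReal.ofReal κ := by
        rw [← ENNReal.ofReal_mul (by positivity)]
        congr 1
        field

lemma exists_half_mul_le_of_volume_parCyl_lt (n : ℕ) {θ Λ : ℝ} (hθ : 0 < θ) (hΛ : 0 ≤ Λ) :
    ∃ κ > 0, ∀ (D : Set (Eu n × ℝ)) (v : Eu n → ℝ → ℝ), IsNormalizedSol θ Λ D v →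
      ∀ (z : Eu n × ℝ) (r l : ℝ), r ∈ Ioc 0 1 → 0 < l →
      (∀ x t, ‖x - z.1‖ ≤ r → t ∈ Icc (z.2 - r ^ 2) (z.2 + r ^ 2) → (x, t) ∈ D ∧ 0 ≤ v x t) →
      volume {p | p ∈ parCyl z r ∧ v p.1 p.2 < l} < ENNReal.ofReal (κ * r ^ (n + 2)) →
      ∀ x, ‖x - z.1‖ ≤ r / 2 → l / 2 ≤ v x (z.2 + r ^ 2) := by
  obtain ⟨κ, hκ, hABP⟩ := exists_half_le_of_volume_sublevel_lt n hθ hΛ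
  refine ⟨κ, hκ, fun D v hv ⟨x₀, t₀⟩ r l ⟨hr, hr1⟩ hl hD hvol x hx => ?_⟩
  have hmaps {y : Eu n} {s : ℝ} (hy : ‖y‖ ≤ 1) (hs : s ∈ Icc (-1 : ℝ) 1) :
      (x₀ + r • y, t₀ + r ^ 2 * s) ∈ D ∧ 0 ≤ v (x₀ + r • y) (t₀ + r ^ 2 * s) := by
    refine hD _ _ ?_ ⟨?_, ?_⟩
    · rw [norm_add_smul_sub_self _ _ hr.le]
      exact mul_le_of_le_one_right hr.le hy
    · nlinarith [hs.1, sq_nonneg r]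
    · nlinarith [hs.2, sq_nonneg r]
  have hcont : ContinuousOn (fun p : Eu n × ℝ => v p.1 p.2) (parCyl (x₀, t₀) r) :=
    hv.continuousOn.mono fun p hp =>
      (hD _ _ (mem_ball_iff_norm.1 hp.1).le (Ioo_subset_Icc_self hp.2)).1
  have hscaled := hABP _ _ (hv.scale x₀ t₀ 0 l⁻¹ hr.le hr1)
    (fun p hp => (hmaps (mem_closedBall_zero_iff.1 hp.1) hp.2).1)
    (fun y s hy hs => by
      rw [zero_add]
      exact mul_nonneg (inv_nonneg.2 hl.le) (hmaps hy hs).2)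
    (volume_scaled_sublevel_lt hr hl hcont hvol)
  obtain ⟨y, rfl⟩ := exists_eq_add_smul x₀ x hr.ne'
  rw [norm_add_smul_sub_self _ _ hr.le] at hx
  have hy := hscaled y (le_of_mul_le_mul_left (by linarith) hr)
  rw [zero_add, mul_one, le_inv_mul_iff₀ hl] at hy
  linarith

lemma exists_mul_le_of_le_on_ball (n : ℕ) {θ Λ ρ R R' τ T : ℝ} (hθ : 0 < θ) (hΛ : 0 ≤ Λ)
    (hρ : 0 < ρ) (hρR : ρ < R) (hR' : 0 ≤ R') (hR'R : R' < R) (hτ : 0 < τ) :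
    ∃ c > 0, ∀ (D : Set (Eu n × ℝ)) (v : Eu n → ℝ → ℝ), IsNormalizedSol θ Λ D v →
      ∀ (x₀ : Eu n) (t₀ r l : ℝ), r ∈ Ioc 0 1 → 0 < l →
      ∀ t ∈ Icc (t₀ + τ * r ^ 2) (t₀ + T * r ^ 2),
      (∀ x s, ‖x - x₀‖ ≤ R * r → s ∈ Icc t₀ t → (x, s) ∈ D ∧ 0 ≤ v x s) →
      (∀ x, ‖x - x₀‖ ≤ ρ * r → l ≤ v x t₀) → ∀ x, ‖x - x₀‖ ≤ R' * r → c * l ≤ v x t := by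
  obtain ⟨c, hc, hspread⟩ := exists_spreading_const n (Tmax := T) hθ hΛ hρ hρR hR' hR'R hτ
  refine ⟨c, hc, fun D v hv x₀ t₀ r l ⟨hr, hr1⟩ hl t ht hD hball x hx => ?_⟩
  have hr2 : 0 < r ^ 2 := by positivity
  obtain ⟨S, rfl⟩ : ∃ S, t = t₀ + r ^ 2 * S := ⟨(t - t₀) / r ^ 2, by field⟩
  have hS : S ∈ Icc τ T := ⟨le_of_mul_le_mul_left (by linarith [ht.1]) hr2,
    le_of_mul_le_mul_left (by linarith [ht.2]) hr2⟩
  obtain ⟨y, rfl⟩ := exists_eq_add_smul x₀ x hr.ne'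
  rw [norm_add_smul_sub_self _ _ hr.le, mul_comm, mul_le_mul_iff_left₀ hr] at hx
  have hscaled := hspread _ _ (hv.scale x₀ t₀ 0 l⁻¹ hr.le hr1) S hS ?_ ?_ y hx
  · rwa [zero_add, le_inv_mul_iff₀ hl, mul_comm] at hscaled
  · intro y s hy hs
    obtain ⟨hmem, hnonneg⟩ := hD (x₀ + r • y) (t₀ + r ^ 2 * s)
      (by rw [norm_add_smul_sub_self _ _ hr.le, mul_comm]; gcongr)
      ⟨by nlinarith [hs.1], by gcongr; exact hs.2⟩
    exact ⟨hmem, by positivity⟩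
  · intro y hy
    rw [mul_zero, add_zero, zero_add, le_inv_mul_iff₀ hl, mul_one]
    exact hball _ (by rw [norm_add_smul_sub_self _ _ hr.le, mul_comm]; gcongr)

theorem exists_growth_const (n : ℕ) {θ Λ : ℝ} (hθ : 0 < θ) (hΛ : 0 ≤ Λ) :
    ∃ κ > 0, ∀ M : ℝ, ∃ c > 0, ∀ (D : Set (Eu n × ℝ)) (v : Eu n → ℝ → ℝ),
      IsNormalizedSol θ Λ D v → ∀ (z : Eu n × ℝ) (r l : ℝ), r ∈ Ioc 0 1 → 0 < l →
      (∀ x t, ‖x - z.1‖ ≤ 3 * r → t ∈ Icc (z.2 - r ^ 2) (z.2 + M * r ^ 2) →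
        (x, t) ∈ D ∧ 0 ≤ v x t) →
      volume {p | p ∈ parCyl z r ∧ v p.1 p.2 < l} < ENNReal.ofReal (κ * r ^ (n + 2)) →
      ∀ x t, ‖x - z.1‖ ≤ 2 * r → t ∈ Icc (z.2 + 2 * r ^ 2) (z.2 + M * r ^ 2) →
        c * l ≤ v x t := by
  obtain ⟨κ, hκ, hABP⟩ := exists_half_mul_le_of_volume_parCyl_lt n hθ hΛ
  refine ⟨κ, hκ, fun M => ?_⟩
  obtain ⟨c, hc, hspread⟩ := exists_mul_le_of_le_on_ball n (ρ := 1 / 2) (R := 3) (R' := 2) (τ := 1)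
    (T := M - 1) hθ hΛ (by norm_num) (by norm_num) (by norm_num) (by norm_num) one_pos
  refine ⟨c / 2, by positivity, fun D v hv z r l hr hl hD hvol x t hx ht => ?_⟩
  have hr2 : 0 < r ^ 2 := pow_pos hr.1 2
  have hhalf := hABP D v hv z r l hr hl (fun y s hy hs =>
    hD y s (by linarith [hr.1]) ⟨hs.1, by linarith [hs.2, ht.1, ht.2]⟩) hvol
  have hmain := hspread D v hv z.1 (z.2 + r ^ 2) r (l / 2) hr (half_pos hl) t
    ⟨by linarith [ht.1], by linarith [ht.2]⟩
    (fun y s hy hs => hD y s hy ⟨by linarith [hs.1], hs.2.trans ht.2⟩)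
    (fun y hy => hhalf y (by linarith)) x hx
  linarith

/-- The part of the super-level set `{v > l}` in the cylinder `B_ρ × (a, b)`. -/
def superlevel (v : Eu n → ℝ → ℝ) (ρ a b l : ℝ) : Set (Eu n × ℝ) :=
  {p | p ∈ ball 0 ρ ×ˢ Ioo a b ∧ l < v p.1 p.2}

lemma IsParabolicSol.isOpen_superlevel {θ ε : ℝ} {B : Eu n → ℝ → Set (Eu n)}
    {D : Set (Eu n × ℝ)} {v : Eu n → ℝ → ℝ} (hv : IsParabolicSol θ ε B D v) {ρ a b : ℝ}
    (hD : ball 0 ρ ×ˢ Ioo a b ⊆ D) (l : ℝ) : IsOpen (superlevel v ρ a b l) :=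
  (hv.continuousOn.mono hD).isOpen_inter_preimage (isOpen_ball.prod isOpen_Ioo) isOpen_Ioi

lemma exists_dyadic_stopping_radius {P : ℝ → Prop} {R : ℝ} (hP : ∀ᶠ r in 𝓝[>] 0, P r)
    (hR : 0 < R) (hPR : ¬ P R) : ∃ r, 2 * r ∈ Ioc 0 R ∧ P r ∧ ¬ P (2 * r) := by
  have htendsto : Tendsto (fun j : ℕ => R * (1 / 2) ^ j) atTop (𝓝[>] 0) := by
    refine tendsto_nhdsWithin_iff.2 ⟨?_, .of_forall fun j => mem_Ioi.2 (by positivity)⟩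
    simpa using (tendsto_pow_atTop_nhds_zero_of_lt_one (r := (1 / 2 : ℝ)) (by norm_num)
      (by norm_num)).const_mul R
  have hexists : ∃ j : ℕ, P (R * (1 / 2) ^ j) := (htendsto.eventually hP).exists
  classical
  obtain ⟨i, hi⟩ := Nat.exists_eq_succ_of_ne_zero (n := Nat.find hexists) fun h0 => by
    have hzero := Nat.find_spec hexists
    rw [h0, pow_zero, mul_one] at hzero
    exact hPR hzero
  have hdouble : 2 * (R * (1 / 2) ^ Nat.find hexists) = R * (1 / 2) ^ i := by
    rw [hi, pow_succ]
    ring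
  refine ⟨R * (1 / 2) ^ Nat.find hexists, ?_, Nat.find_spec hexists, ?_⟩
  · rw [hdouble]
    exact ⟨by positivity, mul_le_of_le_one_right hR.le (pow_le_one₀ (by norm_num) (by norm_num))⟩
  · rw [hdouble]
    exact Nat.find_min hexists (by omega)

lemma exists_stopping_radius_parCyl {Γ : Set (Eu n × ℝ)} {z : Eu n × ℝ} {κ R : ℝ}
    (hΓ : Γ ∈ 𝓝 z) (hκ : 0 < κ) (hR : 0 < R)
    (hout : ENNReal.ofReal (κ * R ^ (n + 2)) ≤ volume (parCyl z R \ Γ)) :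
    ∃ r, 2 * r ∈ Ioc 0 R ∧ volume (parCyl z r \ Γ) < ENNReal.ofReal (κ * r ^ (n + 2)) ∧
      ENNReal.ofReal (κ * (2 * r) ^ (n + 2)) ≤ volume (parCyl z (2 * r) \ Γ) := by
  have hsmall : ∀ᶠ r in 𝓝[>] 0,
      volume (parCyl z r \ Γ) < ENNReal.ofReal (κ * r ^ (n + 2)) := by
    filter_upwards [eventually_parCyl_subset hΓ, self_mem_nhdsWithin] with r hsub (hr : 0 < r)
    rw [sdiff_eq_empty.2 hsub, measure_empty, ENNReal.ofReal_pos]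
    positivity
  obtain ⟨r, hr, hlt, hle⟩ := exists_dyadic_stopping_radius hsmall hR hout.not_gt
  exact ⟨r, hr, hlt, not_lt.1 hle⟩

lemma exists_mul_le_of_volume_parCyl_diff_superlevel_lt (n : ℕ) {θ Λ : ℝ} (hθ : 0 < θ)
    (hΛ : 0 ≤ Λ) :
    ∃ κ > 0, ∀ M ≥ 3, ∃ c > 0, ∀ (D : Set (Eu n × ℝ)) (v : Eu n → ℝ → ℝ),
      IsNormalizedSol θ Λ D v → ∀ ρ a b d l r : ℝ, r ∈ Ioc 0 1 → M * r ≤ d → 0 < l →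
      (∀ x t, ‖x‖ ≤ ρ + d → t ∈ Icc (a - d) (b + d) → (x, t) ∈ D ∧ 0 ≤ v x t) →
      ∀ z ∈ superlevel v ρ a b l,
      volume (parCyl z r \ superlevel v ρ a b l) < ENNReal.ofReal (κ * r ^ (n + 2)) →
      ∀ x t, ‖x - z.1‖ ≤ 2 * r → t ∈ Icc (z.2 + 2 * r ^ 2) (z.2 + M * r ^ 2) →
        c * l ≤ v x t := by
  obtain ⟨κ, hκ, hgrowth⟩ := exists_growth_const n hθ hΛ
  refine ⟨κ, hκ, fun M hM => ?_⟩
  obtain ⟨c, hc, hgrowth⟩ := hgrowth M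
  refine ⟨c, hc, fun D v hv ρ a b d l r ⟨hr, hr1⟩ hMr hl hD z ⟨⟨hz, haz, hzb⟩, _⟩ hvol => ?_⟩
  have hsq : r ^ 2 ≤ r := by nlinarith
  have h3r : 3 * r ≤ M * r := by gcongr
  refine hgrowth D v hv z r l ⟨hr, hr1⟩ hl (fun x t hx ht => hD x t ?_ ⟨?_, ?_⟩) ?_
  · linarith [norm_le_norm_add_norm_sub' x z.1, mem_ball_zero_iff.1 hz]
  · linarith [ht.1]
  · nlinarith [ht.2]
  · refine (measure_mono ?_).trans_lt hvol
    exact fun p hp => ⟨hp.1, fun hp' => hp'.2.not_gt hp.2⟩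

theorem exists_ball_or_volume_superlevel_growth (n : ℕ) {θ Λ : ℝ} (hθ : 0 < θ) (hΛ : 0 ≤ Λ) :
    ∃ σ > 0, ∃ M > 0, ∃ c ∈ Ioc 0 1, ∀ (D : Set (Eu n × ℝ)) (v : Eu n → ℝ → ℝ),
      IsNormalizedSol θ Λ D v → ∀ ρ a b d R l : ℝ, R ∈ Ioc 0 1 → M * R ≤ d → 0 < l →
      (∀ x t, ‖x‖ ≤ ρ + d → t ∈ Icc (a - d) (b + d) → (x, t) ∈ D ∧ 0 ≤ v x t) →
      (∃ z ∈ superlevel v ρ a b l, ∀ x, ‖x - z.1‖ ≤ 2 * R → c * l ≤ v x (z.2 + 2 * R ^ 2)) ∨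
      ENNReal.ofReal (1 + σ) * volume (superlevel v ρ a b l) ≤
        volume (superlevel v (ρ + d) a (b + d) (c * l)) := by
  obtain ⟨κ, hκ, hgood⟩ := exists_mul_le_of_volume_parCyl_diff_superlevel_lt n hθ hΛ
  obtain ⟨σ, hσ, M, hM, hcover⟩ := exists_ofReal_one_add_mul_volume_le_volume_iUnion_later n hκ
  obtain ⟨c, hc, hgood⟩ := hgood (4 * M) (by linarith)
  have hmin : min c 1 / 2 < c := by linarith [min_le_left c 1]
  refine ⟨σ, hσ, 4 * M, by positivity, min c 1 / 2,
    ⟨by positivity, by linarith [min_le_right c 1]⟩, fun D v hv ρ a b d R l hR hd hl hD => ?_⟩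
  have hd₀ : 0 < d := lt_of_lt_of_le (mul_pos (by linarith) hR.1) hd
  have hRsq : R ^ 2 ≤ R := by nlinarith [hR.1, hR.2]
  set Γ := superlevel v ρ a b l
  have hΓ : IsOpen Γ := hv.isOpen_superlevel (fun p hp =>
    (hD _ _ (by linarith [mem_ball_zero_iff.1 hp.1])
      ⟨by linarith [hp.2.1], by linarith [hp.2.2]⟩).1) l
  by_cases hfull : ∃ z ∈ Γ, volume (parCyl z R \ Γ) < ENNReal.ofReal (κ * R ^ (n + 2))
  · obtain ⟨z, hz, hvol⟩ := hfull
    refine Or.inl ⟨z, hz, fun x hx => ?_⟩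
    calc min c 1 / 2 * l ≤ c * l := by gcongr
      _ ≤ _ := hgood D v hv ρ a b d l R hR hd hl hD z hz hvol x _ hx
        ⟨le_rfl, by nlinarith [sq_nonneg R]⟩
  push Not at hfull
  choose r hr hin hout using fun z : Γ =>
    exists_stopping_radius_parCyl (hΓ.mem_nhds z.2) hκ hR.1 (hfull z z.2)
  refine Or.inr ((hcover Γ (fun z => 2 * r z) R hΓ.measurableSet hr hout).trans
    (measure_mono (iUnion_subset fun z => ?_)))
  rintro ⟨x, t⟩ ⟨hx, ht₁, ht₂⟩
  obtain ⟨⟨hz, haz, hzb⟩, -⟩ := z.2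
  have hrz : 0 < r z := by linarith [(hr z).1]
  have hrR : 2 * r z ≤ R := (hr z).2
  have hrsq : (2 * r z) ^ 2 ≤ R := (pow_le_pow_left₀ (by positivity) hrR 2).trans hRsq
  have hMr : M * (2 * r z) ^ 2 ≤ d := by nlinarith [hR.1]
  rw [mem_ball_iff_norm] at hx
  refine ⟨⟨mem_ball_zero_iff.2 ?_, ?_, ?_⟩, ?_⟩
  · nlinarith [norm_le_norm_add_norm_sub' x z.1.1, mem_ball_zero_iff.1 hz]
  · exact haz.trans (lt_of_le_of_lt (by nlinarith) ht₁)
  · exact ht₂.trans_le (by linarith)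
  · calc min c 1 / 2 * l < c * l := by gcongr
      _ ≤ v x t := hgood D v hv ρ a b d l (r z) ⟨hrz, by linarith [hR.2]⟩ (by nlinarith) hl hD z
        z.2 (hin z) x t hx.le ⟨by nlinarith, by linarith⟩

lemma exists_ball_or_volume_superlevel_iterate (n : ℕ) {θ Λ : ℝ} (hθ : 0 < θ) (hΛ : 0 ≤ Λ) :
    ∃ σ > 0, ∃ M > 0, ∃ c ∈ Ioc 0 1, ∀ (D : Set (Eu n × ℝ)) (v : Eu n → ℝ → ℝ),
      IsNormalizedSol θ Λ D v → ∀ (d R l w : ℝ) (N : ℕ), R ∈ Ioc 0 1 → M * R ≤ d → N * d ≤ 1 →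
      0 < l → (∀ x t, ‖x‖ ≤ 2 → t ∈ Icc 0 3 → (x, t) ∈ D ∧ 0 ≤ v x t) →
      ENNReal.ofReal w ≤ volume (superlevel v 1 1 2 l) → ∀ k ≤ N,
      (∃ z : Eu n × ℝ, ‖z.1‖ ≤ 2 ∧ z.2 ∈ Icc 1 3 ∧
        ∀ x, ‖x - z.1‖ ≤ 2 * R → c ^ k * l ≤ v x (z.2 + 2 * R ^ 2)) ∨
      ENNReal.ofReal ((1 + σ) ^ k * w) ≤
        volume (superlevel v (1 + k * d) 1 (2 + k * d) (c ^ k * l)) := by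
  obtain ⟨σ, hσ, M, hM, c, ⟨hc, hc1⟩, hstep⟩ := exists_ball_or_volume_superlevel_growth n hθ hΛ
  refine ⟨σ, hσ, M, hM, c, ⟨hc, hc1⟩, fun D v hv d R l w N hR hd hN hl hD hw k => ?_⟩
  have hd₀ : 0 < d := (mul_pos hM hR.1).trans_le hd
  induction k with
  | zero => exact fun _ => Or.inr (by simpa using hw)
  | succ k ih =>
    intro hk
    have hkd : (k + 1) * d ≤ 1 :=
      (mul_le_mul_of_nonneg_right (by exact_mod_cast hk) hd₀.le).trans hN
    have hkd₀ : 0 ≤ k * d := by positivity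
    obtain ⟨z, hz, hz₂, hball⟩ | hvol := ih (by omega)
    · refine Or.inl ⟨z, hz, hz₂, fun x hx => (hball x hx).trans' ?_⟩
      exact mul_le_mul_of_nonneg_right (pow_le_pow_of_le_one hc.le hc1 k.le_succ) hl.le
    rw [pow_succ' c, pow_succ' (1 + σ), mul_assoc, mul_assoc]
    refine (hstep D v hv (1 + k * d) 1 (2 + k * d) d R (c ^ k * l) hR hd (by positivity)
      fun x t hx ht => hD x t (by linarith) ⟨by linarith [ht.1], by linarith [ht.2]⟩).imp ?_ ?_
    · rintro ⟨z, ⟨⟨hz, hz₁, hz₂⟩, -⟩, hball⟩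
      exact ⟨z, by linarith [mem_ball_zero_iff.1 hz], ⟨hz₁.le, by linarith⟩, hball⟩
    · intro hgrow
      calc ENNReal.ofReal ((1 + σ) * ((1 + σ) ^ k * w))
          = ENNReal.ofReal (1 + σ) * ENNReal.ofReal ((1 + σ) ^ k * w) :=
            ENNReal.ofReal_mul (by positivity)
        _ ≤ ENNReal.ofReal (1 + σ) * volume (superlevel v (1 + k * d) 1 (2 + k * d) (c ^ k * l)) :=
            by gcongr
        _ ≤ _ := hgrow
        _ = _ := by push_cast; congr 2 <;> ring

lemma exists_ball_of_le_volume_superlevel (n : ℕ) {θ Λ w l : ℝ} (hθ : 0 < θ) (hΛ : 0 ≤ Λ)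
    (hw : 0 < w) (hl : 0 < l) :
    ∃ R ∈ Ioc 0 1, ∃ l' > 0, ∀ (D : Set (Eu n × ℝ)) (v : Eu n → ℝ → ℝ), IsNormalizedSol θ Λ D v →
      (∀ x t, ‖x‖ ≤ 2 → t ∈ Icc 0 3 → (x, t) ∈ D ∧ 0 ≤ v x t) →
      ENNReal.ofReal w ≤ volume (superlevel v 1 1 2 l) →
      ∃ z : Eu n × ℝ, ‖z.1‖ ≤ 2 ∧ z.2 ∈ Icc 1 4 ∧ ∀ x, ‖x - z.1‖ ≤ R → l' ≤ v x z.2 := by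
  obtain ⟨σ, hσ, M, hM, c, ⟨hc, _⟩, hiterate⟩ :=
    exists_ball_or_volume_superlevel_iterate n hθ hΛ
  obtain ⟨N, hN⟩ := pow_unbounded_of_one_lt (volume.real (ball (0 : Eu n) 2 ×ˢ Ioo (1 : ℝ) 3) / w)
    (lt_add_of_pos_right 1 hσ)
  set d : ℝ := 1 / (N + 1)
  have hd : d ∈ Ioc 0 1 := ⟨by positivity, (div_le_one (by positivity)).2 (by simp)⟩
  have hNd : N * d ≤ 1 := by
    rw [mul_one_div]
    exact (div_le_one (by positivity)).2 (by simp)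
  set R : ℝ := d / (M + 4)
  have hR₀ : 0 < R := div_pos hd.1 (by linarith)
  have hR : (M + 4) * R = d := by simp only [R]; field
  have hR4 : 4 * R ≤ 1 := by nlinarith [hd.2]
  refine ⟨R, ⟨hR₀, by linarith⟩, c ^ N * l, by positivity, fun D v hv hD hvol => ?_⟩
  obtain ⟨z, hz, hz₂, hball⟩ | hlarge := hiterate D v hv d R l w N ⟨hR₀, by linarith⟩
    (by linarith) hNd hl hD hvol N le_rfl
  · exact ⟨(z.1, z.2 + 2 * R ^ 2), hz, ⟨by nlinarith [hz₂.1], by nlinarith [hz₂.2]⟩,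
      fun x hx => hball x (by linarith)⟩
  · refine absurd (hlarge.trans (measure_mono (t := ball 0 2 ×ˢ Ioo 1 3) ?_)) (not_le.2 ?_)
    · exact fun p hp => Set.prod_mono (ball_subset_ball (by linarith))
        (Ioo_subset_Ioo_right (by linarith)) hp.1
    · have hfinite : volume (ball (0 : Eu n) 2 ×ˢ Ioo (1 : ℝ) 3) ≠ ∞ :=
        (isBounded_ball.prod (isBounded_Ioo _ _)).measure_lt_top.ne
      rw [← ofReal_measureReal hfinite]
      exact (ENNReal.ofReal_lt_ofReal_iff (by positivity)).2 ((div_lt_iff₀ hw).1 hN)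

lemma exists_le_of_le_volume_superlevel (n : ℕ) {θ Λ w l K : ℝ} (hθ : 0 < θ) (hΛ : 0 ≤ Λ)
    (hw : 0 < w) (hl : 0 < l) (hK : 0 ≤ K) :
    ∃ η > 0, ∀ (D : Set (Eu n × ℝ)) (v : Eu n → ℝ → ℝ), IsNormalizedSol θ Λ D v →
      (∀ x t, ‖x‖ ≤ K + 6 → t ∈ Icc 0 5 → (x, t) ∈ D ∧ 0 ≤ v x t) →
      ENNReal.ofReal w ≤ volume (superlevel v 1 1 2 l) → ∀ x, ‖x‖ ≤ K → η ≤ v x 5 := by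
  obtain ⟨R, ⟨hR, hR1⟩, l', hl', hball⟩ := exists_ball_of_le_volume_superlevel n hθ hΛ hw hl
  obtain ⟨c, hc, hspread⟩ := exists_mul_le_of_le_on_ball n (ρ := R) (R := K + 4) (R' := K + 2)
    (τ := 1) (T := 4) hθ hΛ hR (by linarith) (by linarith) (by linarith) one_pos
  refine ⟨c * l', by positivity, fun D v hv hD hvol x hx => ?_⟩
  obtain ⟨z, hz, hz₂, hzball⟩ := hball D v hv
    (fun y t hy ht => hD y t (by linarith) ⟨ht.1, by linarith [ht.2]⟩) hvol
  refine hspread D v hv z.1 z.2 1 l' ⟨one_pos, le_rfl⟩ hl' 5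
    ⟨by linarith [hz₂.2], by linarith [hz₂.1]⟩ (fun y s hy hs => hD y s ?_ ?_)
    (fun y hy => hzball y (by linarith)) x ?_
  · linarith [norm_le_norm_add_norm_sub' y z.1]
  · exact ⟨by linarith [hz₂.1, hs.1], hs.2⟩
  · linarith [norm_sub_le x z.1]

theorem exists_le_or_le_one_sub (n : ℕ) {θ Λ K : ℝ} (hθ : 0 < θ) (hΛ : 0 ≤ Λ) (hK : 0 ≤ K) :
    ∃ η > 0, ∀ (D : Set (Eu n × ℝ)) (v : Eu n → ℝ → ℝ), IsNormalizedSol θ Λ D v →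
      (∀ x t, ‖x‖ ≤ K + 6 → t ∈ Icc 0 5 → (x, t) ∈ D ∧ v x t ∈ Icc 0 1) →
      (∀ x, ‖x‖ ≤ K → η ≤ v x 5) ∨ ∀ x, ‖x‖ ≤ K → v x 5 ≤ 1 - η := by
  set cyl : Set (Eu n × ℝ) := ball 0 1 ×ˢ Ioo 1 2
  have hcyl : IsOpen cyl := isOpen_ball.prod isOpen_Ioo
  have hfinite : volume cyl ≠ ∞ := (isBounded_ball.prod (isBounded_Ioo _ _)).measure_lt_top.ne
  have hpos : 0 < volume.real cyl := ENNReal.toReal_pos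
    (hcyl.measure_pos _ ⟨(0, 3 / 2), by simp [cyl]; norm_num⟩).ne' hfinite
  obtain ⟨η, hη, hlower⟩ := exists_le_of_le_volume_superlevel n (w := volume.real cyl / 2)
    (l := 1 / 3) hθ hΛ (by positivity) (by norm_num) hK
  refine ⟨η, hη, fun D v hv hD => ?_⟩
  have hcover : cyl ⊆ superlevel v 1 1 2 (1 / 3) ∪
      superlevel (fun y s => 1 + -1 * v y s) 1 1 2 (1 / 3) := fun p hp => by
    obtain h | h := lt_or_ge (1 / 3) (v p.1 p.2)
    · exact Or.inl ⟨hp, h⟩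
    · exact Or.inr ⟨hp, by linarith⟩
  have hvol : ENNReal.ofReal (volume.real cyl / 2) ≤ volume (superlevel v 1 1 2 (1 / 3)) ∨
      ENNReal.ofReal (volume.real cyl / 2) ≤
        volume (superlevel (fun y s => 1 + -1 * v y s) 1 1 2 (1 / 3)) := by
    by_contra! hsmall
    refine ((measure_mono hcover).trans (measure_union_le _ _)).not_gt
      ((ENNReal.add_lt_add hsmall.1 hsmall.2).trans_eq ?_)
    rw [← ENNReal.ofReal_add (by positivity) (by positivity), add_halves,
      ofReal_measureReal hfinite]
  refine hvol.imp (hlower D v hv fun x t hx ht => ?_) fun h x hx => ?_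
  · exact ⟨(hD x t hx ht).1, (hD x t hx ht).2.1⟩
  · have := hlower D _ (hv.const_add_mul 1 (-1))
      (fun y t hy ht => ⟨(hD y t hy ht).1, by linarith [(hD y t hy ht).2.2]⟩) h x hx
    linarith

/-! ### Quadratic barriers in moving tubes -/

/-- The closed tube of radius `R` around the moving centre `z` over the times `[s, s₁]`. -/
def closedTube (z : ℝ → Eu n) (R s s₁ : ℝ) : Set (Eu n × ℝ) :=
  {p | p.2 ∈ Icc s s₁ ∧ ‖p.1 - z p.2‖ ≤ R}

/-- The downward paraboloid of height `γ t` and opening `β t` centred at `z t`. -/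
def quadBarrier (γ β : ℝ → ℝ) (z : ℝ → Eu n) (x : Eu n) (t : ℝ) : ℝ :=
  γ t - β t * ‖x - z t‖ ^ 2

/-- The speed at which a paraboloid of opening one has to sink in order to be a strict subsolution
of every equation with diffusion matrix in `ε 𝕊ⁿ(θ)` and no drift. -/
def sinkRate (n : ℕ) (θ ε : ℝ) : ℝ := (2 * (n * θ⁻¹) + 1) * ε

lemma sinkRate_pos (n : ℕ) {θ ε : ℝ} (hθ : 0 < θ) (hε : 0 < ε) : 0 < sinkRate n θ ε := by
  unfold sinkRate
  positivity

section QuadBarrier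

variable {θ ε R s s₁ t : ℝ} {γ β γ' β' : ℝ → ℝ} {z z' : ℝ → Eu n} {x : Eu n}

lemma isCompact_closedTube (hz : ContinuousOn z (Icc s s₁)) :
    IsCompact (closedTube z R s s₁) := by
  have himage : closedTube z R s s₁ =
      (fun q : Eu n × ℝ => (z q.2 + q.1, q.2)) '' (closedBall 0 R ×ˢ Icc s s₁) := by
    ext ⟨x, t⟩
    constructor
    · rintro ⟨ht, hx⟩
      exact ⟨(x - z t, t), ⟨by simpa using hx, ht⟩, by simp⟩
    · rintro ⟨⟨y, τ⟩, ⟨hy, hτ⟩, heq⟩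
      obtain ⟨rfl, rfl⟩ := Prod.mk.inj heq
      exact ⟨hτ, by simpa using hy⟩
  have hz' : ContinuousOn (fun q : Eu n × ℝ => z q.2) (closedBall 0 R ×ˢ Icc s s₁) :=
    hz.comp continuousOn_snd fun q hq => hq.2
  rw [himage]
  exact ((isCompact_closedBall _ _).prod isCompact_Icc).image_of_continuousOn
    ((hz'.add continuousOn_fst).prodMk continuousOn_snd)

lemma closedTube_mem_nhdsWithin (hz : ContinuousAt z t) (ht : t ∈ Ioc s s₁)
    (hx : ‖x - z t‖ < R) : closedTube z R s s₁ ∈ 𝓝[{p | p.2 ≤ t}] (x, t) := by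
  have hzsnd : ContinuousAt (fun p : Eu n × ℝ => z p.2) (x, t) :=
    ContinuousAt.comp (f := Prod.snd) hz continuousAt_snd
  have hlt : ∀ᶠ p : Eu n × ℝ in 𝓝 (x, t), ‖p.1 - z p.2‖ < R :=
    (continuousAt_fst.sub hzsnd).norm.eventually_lt continuousAt_const hx
  have hgt : ∀ᶠ p : Eu n × ℝ in 𝓝 (x, t), s < p.2 :=
    (isOpen_lt continuous_const continuous_snd).mem_nhds ht.1
  filter_upwards [nhdsWithin_le_nhds hlt, nhdsWithin_le_nhds hgt, self_mem_nhdsWithin]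
    with p h₁ h₂ (h₃ : p.2 ≤ t) using ⟨⟨h₂.le, h₃.trans ht.2⟩, h₁.le⟩

lemma continuousOn_quadBarrier {K : Set (Eu n × ℝ)} {I : Set ℝ} (hK : MapsTo Prod.snd K I)
    (hγ : ContinuousOn γ I) (hβ : ContinuousOn β I) (hz : ContinuousOn z I) :
    ContinuousOn (fun p : Eu n × ℝ => quadBarrier γ β z p.1 p.2) K :=
  (hγ.comp continuousOn_snd hK).sub ((hβ.comp continuousOn_snd hK).mul
    ((continuousOn_fst.sub (hz.comp continuousOn_snd hK)).norm.pow 2))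

lemma contDiff_quadBarrier (γ β : ℝ → ℝ) (z : ℝ → Eu n) (t : ℝ) :
    ContDiff ℝ 2 fun x => quadBarrier γ β z x t :=
  contDiff_const.sub (contDiff_const.mul ((contDiff_id.sub contDiff_const).norm_sq ℝ))

lemma hasDerivAt_quadBarrier (hγ : HasDerivAt γ (γ' t) t) (hβ : HasDerivAt β (β' t) t)
    (hz : HasDerivAt z (z' t) t) (x : Eu n) :
    HasDerivAt (quadBarrier γ β z x)
      (γ' t - β' t * ‖x - z t‖ ^ 2 + 2 * β t * inner ℝ (z' t) (x - z t)) t := by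
  refine (hγ.sub (hβ.mul (hz.const_sub x).norm_sq)).congr_deriv ?_
  rw [inner_neg_right, real_inner_comm]
  ring

lemma ellOp_quadBarrier (ε : ℝ) (a : Matrix (Fin n) (Fin n) ℝ) (p x : Eu n) (t : ℝ) :
    ellOp ε a p (quadBarrier γ β z) x t =
      -(2 * β t * (ε * a.trace + inner ℝ p (x - z t))) := by
  have hlin (r : ℝ) : HasDerivAt (fun r => γ t - β t * r) (-β t) r := by
    simpa using ((hasDerivAt_id r).const_mul (β t)).const_sub (γ t)
  refine (ellOp_radial ε a p (z := z) (g := fun t r => γ t - β t * r) (g' := fun t _ => -β t)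
    hlin (hasDerivAt_const _ _)).trans ?_
  ring

lemma tD_quadBarrier_lt (hε : 0 < ε) (hγ : HasDerivAt γ (γ' t) t)
    (hβ : HasDerivAt β (β' t) t) (hz : HasDerivAt z (z' t) t) (hβ₀ : 0 < β t)
    (hγβ : γ' t + sinkRate n θ ε * β t ≤ 0) {p : Eu n}
    (hdrift : 2 * β t * inner ℝ (p + z' t) (x - z t) ≤ β' t * ‖x - z t‖ ^ 2)
    {a : Matrix (Fin n) (Fin n) ℝ} (ha : memS θ a) :
    tD (quadBarrier γ β z) x t < ellOp ε a p (quadBarrier γ β z) x t := by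
  rw [tD, (hasDerivAt_quadBarrier hγ hβ hz x).deriv, ellOp_quadBarrier]
  have htrace : ε * β t * a.trace ≤ ε * β t * (n * θ⁻¹) := by
    gcongr
    exact ha.trace_le
  rw [inner_add_left] at hdrift
  rw [sinkRate] at hγβ
  linarith [mul_pos hε hβ₀]

theorem IsParabolicSol.quadBarrier_le {B : Eu n → ℝ → Set (Eu n)} {D : Set (Eu n × ℝ)}
    {u : Eu n → ℝ → ℝ} (hu : IsParabolicSol θ ε B D u) (hθ : 0 ≤ θ) (hε : 0 < ε)
    (hγ : ∀ t ∈ Icc s s₁, HasDerivAt γ (γ' t) t) (hβ : ∀ t ∈ Icc s s₁, HasDerivAt β (β' t) t)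
    (hz : ∀ t ∈ Icc s s₁, HasDerivAt z (z' t) t) (hβ₀ : ∀ t ∈ Icc s s₁, 0 < β t)
    (hD : closedTube z R s s₁ ⊆ D)
    (hγβ : ∀ t ∈ Icc s s₁, γ' t + sinkRate n θ ε * β t ≤ 0)
    (hdrift : ∀ t ∈ Icc s s₁, ∀ x, ‖x - z t‖ ≤ R → ∀ p ∈ B x t,
      2 * β t * inner ℝ (p + z' t) (x - z t) ≤ β' t * ‖x - z t‖ ^ 2)
    (hinit : ∀ x, ‖x - z s‖ ≤ R → quadBarrier γ β z x s ≤ u x s)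
    (hlat : ∀ t ∈ Icc s s₁, ∀ x, ‖x - z t‖ = R → quadBarrier γ β z x t ≤ u x t) :
    ∀ t ∈ Icc s s₁, ∀ x, ‖x - z t‖ ≤ R → quadBarrier γ β z x t ≤ u x t := by
  have hzc : ContinuousOn z (Icc s s₁) := HasDerivAt.continuousOn hz
  suffices h : ∀ x t, (x, t) ∈ closedTube z R s s₁ → quadBarrier γ β z x t ≤ u x t from
    fun t ht x hx => h x t ⟨ht, hx⟩
  refine hu.ge_of_strict_subsol hθ hε.le (isCompact_closedTube hzc) hD
    (continuousOn_quadBarrier (fun p hp => hp.1) (HasDerivAt.continuousOn hγ)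
      (HasDerivAt.continuousOn hβ) hzc) fun x t ⟨ht, hx⟩ => ?_
  rcases (show ‖x - z t‖ ≤ R from hx).eq_or_lt with heq | hlt
  · exact .inl (hlat t ht x heq)
  rcases (show s ≤ t from ht.1).eq_or_lt with rfl | hst
  · exact .inl (hinit x hx)
  · exact .inr ⟨closedTube_mem_nhdsWithin (hz t ht).continuousAt ⟨hst, ht.2⟩ hlt,
      (contDiff_quadBarrier γ β z t).contDiffAt,
      (hasDerivAt_quadBarrier (hγ t ht) (hβ t ht) (hz t ht) x).differentiableAt,
      fun a ha p hp => tD_quadBarrier_lt hε (hγ t ht) (hβ t ht) (hz t ht) (hβ₀ t ht)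
        (hγβ t ht) (hdrift t ht x hx p hp) ha⟩

end QuadBarrier

/-! ### Decay of the oscillation near the origin -/

/-- `u` is a `C^{2,1}` solution of `u_t = ε tr(a D²u) + b·Du` in `Ω × (0, ∞)` for some
coefficient field `a` with values in `𝕊ⁿ(θ)`, on which no continuity is imposed. -/
abbrev IsDriftSol (θ ε : ℝ) (b : Eu n → Eu n) (Ω : Set (Eu n)) (u : Eu n → ℝ → ℝ) : Prop :=
  IsParabolicSol θ ε (fun x _ => {b x}) (Ω ×ˢ Ioi 0) u

/-- The ball of radius `ρ` lies in `Ω`, and on it `b` is attracted to the origin at rate `b₀`. -/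
structure IsAttractingBall (b₀ : ℝ) (b : Eu n → Eu n) (Ω : Set (Eu n)) (ρ : ℝ) : Prop where
  subset : closedBall 0 ρ ⊆ Ω
  inner_le : ∀ x, ‖x‖ ≤ ρ → inner ℝ (b x) x ≤ -b₀ * ‖x‖ ^ 2

/-- The oscillation of `u(·, s)` on the ball of radius `ρ` is at most `d`. -/
def OscLE (u : Eu n → ℝ → ℝ) (ρ s d : ℝ) : Prop :=
  ∃ m M, M - m ≤ d ∧ ∀ x, ‖x‖ ≤ ρ → u x s ∈ Icc m M

section Local

variable {θ ε b₀ ρ : ℝ} {b : Eu n → Eu n} {Ω : Set (Eu n)} {u : Eu n → ℝ → ℝ}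

lemma IsAttractingBall.mono {ρ' : ℝ} (h : IsAttractingBall b₀ b Ω ρ) (hρ : ρ' ≤ ρ) :
    IsAttractingBall b₀ b Ω ρ' :=
  ⟨(closedBall_subset_closedBall hρ).trans h.subset, fun x hx => h.inner_le x (hx.trans hρ)⟩

lemma IsAttractingBall.mem (h : IsAttractingBall b₀ b Ω ρ) {x : Eu n} (hx : ‖x‖ ≤ ρ) : x ∈ Ω :=
  h.subset (mem_closedBall_zero_iff.2 hx)

lemma IsDriftSol.neg (hu : IsDriftSol θ ε b Ω u) : IsDriftSol θ ε b Ω fun x t => -u x t := by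
  simpa using hu.const_add_mul 0 (-1)

lemma IsDriftSol.quadBarrier_le (hu : IsDriftSol θ ε b Ω u) (hθ : 0 ≤ θ) (hε : 0 < ε)
    (hρ : closedBall 0 ρ ⊆ Ω) {s s₁ : ℝ} (hs : 0 < s) {γ β γ' β' : ℝ → ℝ}
    (hγ : ∀ t ∈ Icc s s₁, HasDerivAt γ (γ' t) t) (hβ : ∀ t ∈ Icc s s₁, HasDerivAt β (β' t) t)
    (hβ₀ : ∀ t ∈ Icc s s₁, 0 < β t)
    (hγβ : ∀ t ∈ Icc s s₁, γ' t + sinkRate n θ ε * β t ≤ 0)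
    (hdrift : ∀ t ∈ Icc s s₁, ∀ x, ‖x‖ ≤ ρ → 2 * β t * inner ℝ (b x) x ≤ β' t * ‖x‖ ^ 2)
    (hinit : ∀ x, ‖x‖ ≤ ρ → γ s - β s * ‖x‖ ^ 2 ≤ u x s)
    (hlat : ∀ t ∈ Icc s s₁, ∀ x, ‖x‖ = ρ → γ t - β t * ‖x‖ ^ 2 ≤ u x t) :
    ∀ t ∈ Icc s s₁, ∀ x, ‖x‖ ≤ ρ → γ t - β t * ‖x‖ ^ 2 ≤ u x t := by
  have htube : closedTube (fun _ => (0 : Eu n)) ρ s s₁ ⊆ Ω ×ˢ Ioi 0 := fun p hp =>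
    ⟨hρ (by simpa using hp.2), hs.trans_le hp.1.1⟩
  simpa [quadBarrier] using IsParabolicSol.quadBarrier_le (R := ρ) (z := fun _ => (0 : Eu n))
    (z' := fun _ => 0) hu hθ hε hγ hβ (fun t _ => hasDerivAt_const t _) hβ₀ htube hγβ
    (by simpa using hdrift) (by simpa [quadBarrier] using hinit)
    (by simpa [quadBarrier] using hlat)

lemma IsDriftSol.sub_le_of_le_initial (hu : IsDriftSol θ ε b Ω u) (hθ : 0 < θ) (hε : 0 < ε)
    (hb₀ : 0 ≤ b₀) (hρ₀ : 0 < ρ) (hρ : IsAttractingBall b₀ b Ω ρ) {μ s T m H : ℝ} (hH : 0 < H)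
    (hμ : μ ≤ 1) (hs : 0 < s) (hT : sinkRate n θ ε * T ≤ (μ * ρ) ^ 2)
    (hm : ∀ x, ‖x‖ ≤ ρ → m ≤ u x s)
    (hlat : ∀ t ∈ Icc s (s + T), ∀ x, ‖x‖ = ρ → m - H ≤ u x t) :
    ∀ t ∈ Icc s (s + T), ∀ x, ‖x‖ ≤ μ * ρ → m - 2 * H * μ ^ 2 ≤ u x t := by
  have hrate := sinkRate_pos n hθ hε
  have hbarrier := hu.quadBarrier_le hθ.le hε hρ.subset (s := s) (s₁ := s + T) hs
    (γ := fun t => m - sinkRate n θ ε * (H / ρ ^ 2) * (t - s)) (β := fun _ => H / ρ ^ 2)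
    (γ' := fun _ => -(sinkRate n θ ε * (H / ρ ^ 2))) (β' := fun _ => 0)
    (fun t _ => by simpa using (((hasDerivAt_id t).sub_const s).const_mul _).const_sub m)
    (fun t _ => hasDerivAt_const t _) (fun t _ => by positivity) (fun t _ => by simp)
    (fun t _ x hx => by
      rw [zero_mul]
      have hinward : inner ℝ (b x) x ≤ 0 :=
        (hρ.inner_le x hx).trans (by linarith [mul_nonneg hb₀ (sq_nonneg ‖x‖)])
      exact mul_nonpos_of_nonneg_of_nonpos (by positivity) hinward)
    (fun x hx => by
      have hnonneg : 0 ≤ H / ρ ^ 2 * ‖x‖ ^ 2 := by positivity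
      simpa using (hm x hx).trans (le_add_of_nonneg_right hnonneg))
    (fun t ht x hx => by
      have hloss : 0 ≤ sinkRate n θ ε * (H / ρ ^ 2) * (t - s) :=
        mul_nonneg (by positivity) (sub_nonneg.2 ht.1)
      rw [hx, div_mul_cancel₀ _ (by positivity)]
      linarith [hlat t ht x hx])
  intro t ht x hx
  have hsink : sinkRate n θ ε * (t - s) ≤ (μ * ρ) ^ 2 := hT.trans' (by gcongr; linarith [ht.2])
  calc m - 2 * H * μ ^ 2
      = m - H / ρ ^ 2 * (μ * ρ) ^ 2 - H / ρ ^ 2 * (μ * ρ) ^ 2 := by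
        field_simp
        ring
    _ ≤ m - H / ρ ^ 2 * (sinkRate n θ ε * (t - s)) - H / ρ ^ 2 * ‖x‖ ^ 2 := by gcongr
    _ = m - sinkRate n θ ε * (H / ρ ^ 2) * (t - s) - H / ρ ^ 2 * ‖x‖ ^ 2 := by ring
    _ ≤ u x t := hbarrier t ht x (hx.trans (mul_le_of_le_one_left hρ₀.le hμ))

lemma IsDriftSol.mem_Icc_of_mem_Icc_initial (hu : IsDriftSol θ ε b Ω u) (hθ : 0 < θ) (hε : 0 < ε)
    (hb₀ : 0 ≤ b₀) (hρ₀ : 0 < ρ) (hρ : IsAttractingBall b₀ b Ω ρ) {μ s T m M C₀ : ℝ}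
    (hC₀ : 0 < C₀) (hbd : ∀ x ∈ Ω, ∀ t, 0 < t → |u x t| ≤ C₀) (hμ : μ ≤ 1) (hs : 0 < s)
    (hT : sinkRate n θ ε * T ≤ (μ * ρ) ^ 2) (hmM : ∀ x, ‖x‖ ≤ ρ → u x s ∈ Icc m M) :
    ∀ t ∈ Icc s (s + T), ∀ x, ‖x‖ ≤ μ * ρ →
      u x t ∈ Icc (m - 4 * C₀ * μ ^ 2) (M + 4 * C₀ * μ ^ 2) := by
  have hbd' {x : Eu n} (hx : ‖x‖ ≤ ρ) {t : ℝ} (ht : s ≤ t) : u x t ∈ Icc (-C₀) C₀ :=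
    abs_le.1 (hbd x (hρ.mem hx) t (hs.trans_le ht))
  have hzero : ‖(0 : Eu n)‖ ≤ ρ := by simpa using hρ₀.le
  have hm : m ≤ C₀ := (hmM 0 hzero).1.trans (hbd' hzero le_rfl).2
  have hM : -C₀ ≤ M := (hbd' hzero le_rfl).1.trans (hmM 0 hzero).2
  intro t ht x hx
  have hlower := hu.sub_le_of_le_initial hθ hε hb₀ hρ₀ hρ (H := 2 * C₀) (by positivity) hμ hs hT
    (fun x hx => (hmM x hx).1)
    (fun t ht x hx => by linarith [(hbd' hx.le ht.1).1]) t ht x hx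
  have hupper := hu.neg.sub_le_of_le_initial hθ hε hb₀ hρ₀ hρ (H := 2 * C₀) (by positivity) hμ hs hT
    (fun x hx => neg_le_neg (hmM x hx).2)
    (fun t ht x hx => by linarith [(hbd' hx.le ht.1).2]) t ht x hx
  constructor <;> linarith

/-- The opening of the barrier that spreads a lower bound from the ball of radius `r` to that of
radius `R`: the part `r⁻²` decays at the rate `2b₀` at which the drift contracts squared norms. -/
def funnelOpening (b₀ r R s t : ℝ) : ℝ := Real.exp (-(2 * b₀ * (t - s))) / r ^ 2 + 1 / R ^ 2

/-- The time integral of `funnelOpening` from `s` to `t`. -/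
def funnelLoss (b₀ r R s t : ℝ) : ℝ :=
  (1 - Real.exp (-(2 * b₀ * (t - s)))) / (2 * b₀ * r ^ 2) + (t - s) / R ^ 2

section Funnel

variable {r R s t : ℝ}

lemma hasDerivAt_exp_neg_mul_sub (k s t : ℝ) :
    HasDerivAt (fun t => Real.exp (-(k * (t - s)))) (-k * Real.exp (-(k * (t - s)))) t := by
  have hlin : HasDerivAt (fun t => -(k * (t - s))) (-k) t := by
    simpa using (((hasDerivAt_id t).sub_const s).const_mul k).fun_neg
  exact hlin.exp.congr_deriv (mul_comm _ _)

lemma hasDerivAt_funnelOpening (b₀ r R s t : ℝ) :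
    HasDerivAt (funnelOpening b₀ r R s)
      (-(2 * b₀) * (funnelOpening b₀ r R s t - 1 / R ^ 2)) t := by
  refine (((hasDerivAt_exp_neg_mul_sub (2 * b₀) s t).div_const (r ^ 2)).add_const
    (1 / R ^ 2)).congr_deriv ?_
  rw [funnelOpening]
  ring

lemma hasDerivAt_funnelLoss (hb₀ : 0 < b₀) (r R s t : ℝ) :
    HasDerivAt (funnelLoss b₀ r R s) (funnelOpening b₀ r R s t) t := by
  refine ((((hasDerivAt_exp_neg_mul_sub (2 * b₀) s t).const_sub 1).div_const
    (2 * b₀ * r ^ 2)).add (((hasDerivAt_id t).sub_const s).div_const (R ^ 2))).congr_deriv ?_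
  rw [funnelOpening]
  field_simp

lemma funnelOpening_pos (b₀ : ℝ) (hr : 0 < r) (R s t : ℝ) : 0 < funnelOpening b₀ r R s t :=
  add_pos_of_pos_of_nonneg (by positivity) (by positivity)

lemma one_le_funnelOpening_mul_sq (b₀ r : ℝ) (hR : 0 < R) (s t : ℝ) :
    1 ≤ funnelOpening b₀ r R s t * R ^ 2 := by
  have hnonneg : 0 ≤ Real.exp (-(2 * b₀ * (t - s))) / r ^ 2 * R ^ 2 := by positivity
  rw [funnelOpening, add_mul, one_div_mul_cancel (by positivity)]
  exact le_add_of_nonneg_left hnonneg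

lemma one_le_funnelOpening_self_mul_sq {q : ℝ} (b₀ : ℝ) (hr : 0 < r) (R s : ℝ) (hq : r ≤ q) :
    1 ≤ funnelOpening b₀ r R s s * q ^ 2 := by
  have hpos := funnelOpening_pos b₀ hr R s s
  calc 1 = 1 / r ^ 2 * r ^ 2 := by field_simp
    _ ≤ funnelOpening b₀ r R s s * q ^ 2 := by
      gcongr
      simpa [funnelOpening] using sq_nonneg R

lemma funnelLoss_nonneg (hb₀ : 0 < b₀) (r R : ℝ) (ht : s ≤ t) : 0 ≤ funnelLoss b₀ r R s t := by
  have hexp : Real.exp (-(2 * b₀ * (t - s))) ≤ 1 :=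
    Real.exp_le_one_iff.2 (neg_nonpos.2 (mul_nonneg (by positivity) (sub_nonneg.2 ht)))
  exact add_nonneg (div_nonneg (sub_nonneg.2 hexp) (by positivity))
    (div_nonneg (sub_nonneg.2 ht) (by positivity))

lemma mul_funnelLoss_add_funnelOpening_le {c q : ℝ} (hb₀ : 0 < b₀) (hc : 0 ≤ c) (hr : 0 < r)
    (hR : 0 < R) (hcr : c ≤ b₀ * r ^ 2 / 2) (hcR : c * (t - s) ≤ R ^ 2 / 16)
    (hexp : Real.exp (-(2 * b₀ * (t - s))) * R ^ 2 ≤ r ^ 2 / 8) (hq : q ≤ R ^ 2 / 16) :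
    c * funnelLoss b₀ r R s t + funnelOpening b₀ r R s t * q ≤ 1 / 2 := by
  rw [funnelLoss, funnelOpening]
  set e := Real.exp (-(2 * b₀ * (t - s)))
  have he₀ : 0 < e := Real.exp_pos _
  have hrelax : c * ((1 - e) / (2 * b₀ * r ^ 2)) ≤ 1 / 4 := by
    rw [mul_div_assoc', div_le_iff₀ (by positivity)]
    linarith [mul_nonneg hc he₀.le]
  have hdiffuse : c * ((t - s) / R ^ 2) ≤ 1 / 16 := by
    rw [mul_div_assoc', div_le_iff₀ (by positivity)]
    linarith
  have hinner : e / r ^ 2 * q ≤ 1 / 16 := by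
    rw [div_mul_eq_mul_div, div_le_iff₀ (by positivity)]
    linarith [mul_le_mul_of_nonneg_left hq he₀.le, sq_nonneg r]
  have houter : 1 / R ^ 2 * q ≤ 1 / 16 := by
    rw [one_div, ← div_eq_inv_mul, div_le_iff₀ (by positivity)]
    linarith
  linarith

lemma IsDriftSol.funnelBarrier_le (hu : IsDriftSol θ ε b Ω u) (hθ : 0 < θ) (hε : 0 < ε)
    (hb₀ : 0 < b₀) (hr : 0 < r) (hR : 0 < R) (hball : IsAttractingBall b₀ b Ω R) {s₁ m H : ℝ}
    (hH : 0 < H) (hs : 0 < s) (hss₁ : s ≤ s₁) (hm : ∀ t ∈ Icc s s₁, ∀ x, ‖x‖ ≤ R → m ≤ u x t)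
    (hmH : ∀ x, ‖x‖ ≤ r → m + H ≤ u x s) :
    ∀ t ∈ Icc s s₁, ∀ x, ‖x‖ ≤ R → m + H - H * (sinkRate n θ ε * funnelLoss b₀ r R s t)
      - H * funnelOpening b₀ r R s t * ‖x‖ ^ 2 ≤ u x t := by
  have hopening (t : ℝ) : 0 < funnelOpening b₀ r R s t := funnelOpening_pos b₀ hr R s t
  have hloss {t : ℝ} (ht : s ≤ t) : 0 ≤ H * (sinkRate n θ ε * funnelLoss b₀ r R s t) :=
    mul_nonneg hH.le (mul_nonneg (sinkRate_pos n hθ hε).le (funnelLoss_nonneg hb₀ r R ht))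
  refine hu.quadBarrier_le hθ.le hε hball.subset hs
    (fun t _ => (((hasDerivAt_funnelLoss hb₀ r R s t).const_mul _).const_mul H).const_sub (m + H))
    (fun t _ => (hasDerivAt_funnelOpening b₀ r R s t).const_mul H)
    (fun t _ => mul_pos hH (hopening t)) (fun t _ => by linarith)
    (fun t _ x hx => ?_) (fun x hx => ?_) fun t ht x hx => ?_
  · have hinward := mul_le_mul_of_nonneg_left (hball.inner_le x hx)
      (mul_pos (mul_pos two_pos hH) (hopening t)).le
    have houter : 0 ≤ 2 * b₀ * H * (1 / R ^ 2) * ‖x‖ ^ 2 := by positivity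
    linarith
  · rcases le_total ‖x‖ r with hxr | hxr
    · linarith [hmH x hxr, hloss le_rfl,
        mul_nonneg (mul_nonneg hH.le (hopening s).le) (sq_nonneg ‖x‖)]
    · linarith [hm s ⟨le_rfl, hss₁⟩ x hx, hloss le_rfl,
        mul_le_mul_of_nonneg_left (one_le_funnelOpening_self_mul_sq b₀ hr R s hxr) hH.le]
  · rw [hx]
    linarith [hm t ht x hx.le, hloss ht.1,
      mul_le_mul_of_nonneg_left (one_le_funnelOpening_mul_sq b₀ r hR s t) hH.le]

/-- The drift contracts `B_R` into `B_r` exponentially fast. -/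
lemma IsDriftSol.add_half_le_of_add_le (hu : IsDriftSol θ ε b Ω u) (hθ : 0 < θ) (hε : 0 < ε)
    (hb₀ : 0 < b₀) (hr : 0 < r) (hR : 0 < R) (hball : IsAttractingBall b₀ b Ω R) {s₁ m H : ℝ}
    (hH : 0 < H) (hs : 0 < s) (hss₁ : s ≤ s₁) (hcr : sinkRate n θ ε ≤ b₀ * r ^ 2 / 2)
    (hcR : sinkRate n θ ε * (s₁ - s) ≤ R ^ 2 / 16)
    (hexp : Real.exp (-(2 * b₀ * (s₁ - s))) * R ^ 2 ≤ r ^ 2 / 8)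
    (hm : ∀ t ∈ Icc s s₁, ∀ x, ‖x‖ ≤ R → m ≤ u x t)
    (hmH : ∀ x, ‖x‖ ≤ r → m + H ≤ u x s) :
    ∀ x, ‖x‖ ≤ R / 4 → m + H / 2 ≤ u x s₁ := by
  intro x hx
  have hxR : ‖x‖ ^ 2 ≤ R ^ 2 / 16 := by
    calc ‖x‖ ^ 2 ≤ (R / 4) ^ 2 := by gcongr
      _ = R ^ 2 / 16 := by ring
  have htotal := mul_le_mul_of_nonneg_left (mul_funnelLoss_add_funnelOpening_le hb₀
    (sinkRate_pos n hθ hε).le hr hR hcr hcR hexp hxR) hH.le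
  linarith [hu.funnelBarrier_le hθ hε hb₀ hr hR hball hH hs hss₁ hm hmH s₁ ⟨hss₁, le_rfl⟩ x
    (by linarith)]

end Funnel

end Local

/-- Whenever `u` has values in `[m, M]` on the ball of radius `(K + 6)√ε` during the times
`[s, s + 5]`, one of the two bounds improves by the fraction `η` on the ball of radius `K√ε` at
the final time. -/
def SqrtDichotomy (ε K η : ℝ) (u : Eu n → ℝ → ℝ) : Prop :=
  ∀ s m M, 0 < s → m < M →
    (∀ x, ‖x‖ ≤ (K + 6) * √ε → ∀ t ∈ Icc s (s + 5), u x t ∈ Icc m M) →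
    (∀ x, ‖x‖ ≤ K * √ε → m + η * (M - m) ≤ u x (s + 5)) ∨
      ∀ x, ‖x‖ ≤ K * √ε → u x (s + 5) ≤ M - η * (M - m)

section Oscillation

variable {θ ε b₀ C₀ L K η μ ρ s T d : ℝ} {b : Eu n → Eu n} {Ω : Set (Eu n)} {u : Eu n → ℝ → ℝ}

lemma IsDriftSol.comp_sqrt_smul (hu : IsDriftSol θ ε b Ω u) (hε : 0 < ε) (hL : 0 ≤ L)
    (hb : ∀ x, ‖b x‖ ≤ L * ‖x‖) (R s c k : ℝ) :
    IsNormalizedSol θ (L * R) {p | ‖p.1‖ < R ∧ (√ε • p.1, s + p.2) ∈ Ω ×ˢ Ioi 0}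
      fun y τ => c + k * u (√ε • y) (s + τ) := by
  have hsqrt : 0 < √ε := Real.sqrt_pos.2 hε
  have hball : IsOpen {p : Eu n × ℝ | ‖p.1‖ < R} := isOpen_lt (by fun_prop) (by fun_prop)
  have hscale : Continuous fun p : Eu n × ℝ => (√ε • p.1, s + p.2) := by fun_prop
  have hopen : IsOpen {p : Eu n × ℝ | ‖p.1‖ < R ∧ (√ε • p.1, s + p.2) ∈ Ω ×ˢ Ioi 0} :=
    hball.inter (hu.isOpen.preimage hscale)
  have hsol := hu.comp_affine (l := √ε) (m := 1) (ε' := 1)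
    (B' := fun _ _ => closedBall 0 (L * R)) 0 s c k (by rw [Real.sq_sqrt hε.le]) hopen
    (fun p hp => by simpa using hp.2) fun y τ hy β hβ => ?_
  · simpa using hsol
  obtain rfl : β = b (√ε • y) := by simpa using hβ
  refine ⟨(√ε)⁻¹ • b (√ε • y), mem_closedBall_zero_iff.2 ?_, by
    rw [smul_inv_smul₀ hsqrt.ne', one_smul]⟩
  calc ‖(√ε)⁻¹ • b (√ε • y)‖ = (√ε)⁻¹ * ‖b (√ε • y)‖ := by
        rw [norm_smul, Real.norm_of_nonneg (by positivity)]
    _ ≤ (√ε)⁻¹ * (L * ‖√ε • y‖) := by gcongr; exact hb _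
    _ = L * ‖y‖ := by
        rw [norm_smul, Real.norm_of_nonneg hsqrt.le]
        field_simp
    _ ≤ L * R := by gcongr; exact hy.1.le

theorem exists_sqrtDichotomy (n : ℕ) (hθ : 0 < θ) (hL : 0 ≤ L) (hK : 0 ≤ K) :
    ∃ η ∈ Ioc (0 : ℝ) 1, ∀ ε > 0, ∀ (b : Eu n → Eu n) (Ω : Set (Eu n)) (u : Eu n → ℝ → ℝ),
      (∀ x, ‖b x‖ ≤ L * ‖x‖) → closedBall 0 ((K + 6) * √ε) ⊆ Ω → IsDriftSol θ ε b Ω u →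
      SqrtDichotomy ε K η u := by
  obtain ⟨η, hη, hdich⟩ := exists_le_or_le_one_sub n hθ (Λ := L * (K + 7)) (by positivity) hK
  refine ⟨min η 1, ⟨lt_min hη one_pos, min_le_right _ _⟩,
    fun ε hε b Ω u hb hΩ hu s m M hs hmM hrange => ?_⟩
  have hsqrt : 0 < √ε := Real.sqrt_pos.2 hε
  have hwidth : 0 < M - m := sub_pos.2 hmM
  have hnormalize (r : ℝ) : -m / (M - m) + 1 / (M - m) * r = (r - m) / (M - m) := by ring
  have hη' : min η 1 * (M - m) ≤ η * (M - m) := by gcongr; exact min_le_left _ _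
  have hsmall {R : ℝ} {y : Eu n} (hy : ‖y‖ ≤ R) : ‖√ε • y‖ ≤ R * √ε := by
    rw [norm_smul, Real.norm_of_nonneg hsqrt.le, mul_comm]
    gcongr
  have hunscale {x : Eu n} (hx : ‖x‖ ≤ K * √ε) : ∃ y, ‖y‖ ≤ K ∧ √ε • y = x := by
    refine ⟨(√ε)⁻¹ • x, ?_, smul_inv_smul₀ hsqrt.ne' x⟩
    rwa [norm_smul, norm_inv, Real.norm_of_nonneg hsqrt.le, inv_mul_le_iff₀ hsqrt, mul_comm]
  refine (hdich _ _ (hu.comp_sqrt_smul hε hL hb (K + 7) s (-m / (M - m)) (1 / (M - m)))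
    fun y t hy ht => ?_).imp (fun h x hx => ?_) fun h x hx => ?_
  · have hu' := hrange _ (hsmall hy) (s + t) ⟨by linarith [ht.1], by linarith [ht.2]⟩
    refine ⟨⟨by simpa using hy.trans_lt (by linarith),
      hΩ (mem_closedBall_zero_iff.2 (hsmall hy)), add_pos_of_pos_of_nonneg hs ht.1⟩, ?_⟩
    rw [hnormalize]
    exact ⟨div_nonneg (by linarith [hu'.1]) hwidth.le, (div_le_one hwidth).2 (by linarith [hu'.2])⟩
  all_goals
    obtain ⟨y, hy, rfl⟩ := hunscale hx
    have hy' := h y hy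
    rw [hnormalize] at hy'
  · rw [le_div_iff₀ hwidth] at hy'
    linarith
  · rw [div_le_iff₀ hwidth] at hy'
    linarith

lemma IsDriftSol.oscLE_of_dichotomy (hu : IsDriftSol θ ε b Ω u) (hdich : SqrtDichotomy ε K η u)
    (hθ : 0 < θ) (hε : 0 < ε) (hb₀ : 0 < b₀) (hη : 0 < η) (hK : 0 < K)
    (hcK : sinkRate n θ 1 ≤ b₀ * K ^ 2 / 2) (hρ : IsAttractingBall b₀ b Ω ρ)
    (hKρ : (K + 6) * √ε ≤ ρ) (hs : 0 < s) (hT : 5 ≤ T) (hεT : sinkRate n θ ε * T ≤ ρ ^ 2 / 16)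
    (hexp : Real.exp (-(2 * b₀ * (T - 5))) * ρ ^ 2 ≤ K ^ 2 * ε / 8) {m M : ℝ} (hmM : m < M)
    (hrange : ∀ t ∈ Icc s (s + T), ∀ x, ‖x‖ ≤ ρ → u x t ∈ Icc m M) :
    OscLE u (ρ / 4) (s + T) ((1 - η / 2) * (M - m)) := by
  have hρ₀ : 0 < ρ := hKρ.trans_lt' (mul_pos (by linarith) (Real.sqrt_pos.2 hε))
  have hrate := sinkRate_pos n hθ hε
  have hr : (K * √ε) ^ 2 = K ^ 2 * ε := by rw [mul_pow, Real.sq_sqrt hε.le]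
  have hrate_r : sinkRate n θ ε ≤ b₀ * (K * √ε) ^ 2 / 2 := by
    calc sinkRate n θ ε = sinkRate n θ 1 * ε := by simp [sinkRate]
      _ ≤ b₀ * K ^ 2 / 2 * ε := by gcongr
      _ = b₀ * (K * √ε) ^ 2 / 2 := by rw [hr]; ring
  have hduration : s + T - (s + 5) = T - 5 := by ring
  have hrate_T : sinkRate n θ ε * (s + T - (s + 5)) ≤ ρ ^ 2 / 16 :=
    hεT.trans' (by gcongr; linarith)
  have hfunnel {v : Eu n → ℝ → ℝ} (hv : IsDriftSol θ ε b Ω v) {l : ℝ}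
      (hl : ∀ t ∈ Icc s (s + T), ∀ x, ‖x‖ ≤ ρ → l ≤ v x t)
      (hlη : ∀ x, ‖x‖ ≤ K * √ε → l + η * (M - m) ≤ v x (s + 5)) (x : Eu n) (hx : ‖x‖ ≤ ρ / 4) :
      l + η * (M - m) / 2 ≤ v x (s + T) :=
    hv.add_half_le_of_add_le hθ hε hb₀ (by positivity) hρ₀ hρ (mul_pos hη (sub_pos.2 hmM))
      (by linarith) (by linarith) hrate_r hrate_T (by rwa [hduration, hr])
      (fun t ht x hx => hl t ⟨by linarith [ht.1], ht.2⟩ x hx) hlη x hx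
  have hfinal {x : Eu n} (hx : ‖x‖ ≤ ρ / 4) : u x (s + T) ∈ Icc m M :=
    hrange _ ⟨by linarith, le_rfl⟩ x (hx.trans (by linarith))
  rcases hdich s m M hs hmM fun x hx t ht =>
    hrange t ⟨ht.1, ht.2.trans (by linarith)⟩ x (hx.trans hKρ) with hlow | hhigh
  · exact ⟨m + η * (M - m) / 2, M, by linarith, fun x hx =>
      ⟨hfunnel hu (fun t ht x hx => (hrange t ht x hx).1) hlow x hx, (hfinal hx).2⟩⟩
  · have hneg := hfunnel hu.neg (l := -M) (fun t ht x hx => neg_le_neg (hrange t ht x hx).2)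
      fun x hx => by linarith [hhigh x hx]
    exact ⟨m, M - η * (M - m) / 2, by linarith, fun x hx =>
      ⟨(hfinal hx).1, by linarith [hneg x hx]⟩⟩

lemma IsDriftSol.oscLE_step (hu : IsDriftSol θ ε b Ω u) (hdich : SqrtDichotomy ε K η u)
    (hbd : ∀ x ∈ Ω, ∀ t, 0 < t → |u x t| ≤ C₀) (hC₀ : 0 < C₀) (hθ : 0 < θ) (hε : 0 < ε)
    (hb₀ : 0 < b₀) (hη : η ∈ Ioc 0 1) (hK : 1 ≤ K) (hcK : sinkRate n θ 1 ≤ b₀ * K ^ 2 / 2)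
    (hρ₀ : 0 < ρ) (hρ : IsAttractingBall b₀ b Ω ρ) (hμ : μ ∈ Ioc 0 1)
    (hKρ : (K + 6) * √ε ≤ μ * ρ) (hs : 0 < s) (hT : 5 ≤ T)
    (hεT : sinkRate n θ ε * T ≤ (μ * ρ) ^ 2 / 16)
    (hexp : Real.exp (-(2 * b₀ * (T - 5))) * ρ ^ 2 ≤ ε / 8) (hosc : OscLE u ρ s d) :
    OscLE u (μ / 4 * ρ) (s + T) ((1 - η / 2) * (d + 8 * C₀ * μ ^ 2)) := by
  obtain ⟨m, M, hmd, hmM⟩ := hosc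
  have hzero : ‖(0 : Eu n)‖ ≤ ρ := by simpa using hρ₀.le
  have hle : m ≤ M := (hmM 0 hzero).1.trans (hmM 0 hzero).2
  have herr : 0 < C₀ * μ ^ 2 := mul_pos hC₀ (pow_pos hμ.1 2)
  have hμρ : μ * ρ ≤ ρ := mul_le_of_le_one_left hρ₀.le hμ.2
  have hexp' : Real.exp (-(2 * b₀ * (T - 5))) * (μ * ρ) ^ 2 ≤ K ^ 2 * ε / 8 :=
    calc Real.exp (-(2 * b₀ * (T - 5))) * (μ * ρ) ^ 2
        ≤ Real.exp (-(2 * b₀ * (T - 5))) * ρ ^ 2 := by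
          have := mul_pos hμ.1 hρ₀
          gcongr
      _ ≤ 1 * ε / 8 := by rwa [one_mul]
      _ ≤ K ^ 2 * ε / 8 := by gcongr; exact one_le_pow₀ hK
  obtain ⟨m', M', hwidth, hosc'⟩ := hu.oscLE_of_dichotomy hdich hθ hε hb₀ hη.1 (by linarith) hcK
    (hρ.mono hμρ) hKρ hs hT hεT hexp' (by linarith : m - 4 * C₀ * μ ^ 2 < M + 4 * C₀ * μ ^ 2)
    (hu.mem_Icc_of_mem_Icc_initial hθ hε hb₀.le hρ₀ hρ hC₀ hbd hμ.2 hs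
      (hεT.trans (by linarith [sq_nonneg (μ * ρ)])) hmM)
  refine ⟨m', M', hwidth.trans ?_, fun x hx => hosc' x (hx.trans_eq (by ring))⟩
  exact mul_le_mul_of_nonneg_left (by linarith) (by linarith [hη.2])

end Oscillation

section LocalContraction

variable {θ ε b₀ C₀ L K η μ ρ₀ T d B A : ℝ} {b : Eu n → Eu n} {Ω : Set (Eu n)}
  {u : Eu n → ℝ → ℝ}

lemma OscLE.mono {ρ s d' : ℝ} (h : OscLE u ρ s d) (hd : d ≤ d') : OscLE u ρ s d' :=
  let ⟨m, M, hwidth, hmM⟩ := h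
  ⟨m, M, hwidth.trans hd, hmM⟩

lemma IsDriftSol.oscLE_iterate (hu : IsDriftSol θ ε b Ω u) (hdich : SqrtDichotomy ε K η u)
    (hbd : ∀ x ∈ Ω, ∀ t, 0 < t → |u x t| ≤ C₀) (hC₀ : 0 < C₀) (hθ : 0 < θ) (hε : 0 < ε)
    (hb₀ : 0 < b₀) (hη : η ∈ Ioc 0 1) (hK : 1 ≤ K) (hcK : sinkRate n θ 1 ≤ b₀ * K ^ 2 / 2)
    (hρ₀ : 0 < ρ₀) (hball : IsAttractingBall b₀ b Ω ρ₀) (hμ : μ ∈ Ioc 0 1) {N : ℕ}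
    (hKρ : (K + 6) * √ε ≤ μ * ((μ / 4) ^ N * ρ₀)) (hT : 5 ≤ T)
    (hεT : sinkRate n θ ε * T ≤ (μ * ((μ / 4) ^ N * ρ₀)) ^ 2 / 16)
    (hexp : Real.exp (-(2 * b₀ * (T - 5))) * ρ₀ ^ 2 ≤ ε / 8) (hB : 0 ≤ B)
    (hBμ : (1 - η / 2) * (B + 8 * C₀ * μ ^ 2) ≤ B) {j : ℕ} (hj : j ≤ N) {s : ℝ}
    (hs : 1 + j * T ≤ s) :
    OscLE u ((μ / 4) ^ j * ρ₀) s ((1 - η / 2) ^ j * (2 * C₀) + B) := by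
  have hμ₀ := hμ.1
  have hμ₄ : μ / 4 ≤ 1 := by linarith [hμ.2]
  induction j generalizing s with
  | zero =>
    have hs₀ : 0 < s := by simp only [Nat.cast_zero, zero_mul, add_zero] at hs; linarith
    refine ⟨-C₀, C₀, by linarith, fun x hx => abs_le.1 (hbd x (hball.mem ?_) s hs₀)⟩
    simpa using hx
  | succ j ih =>
    have hjT : 0 ≤ j * T := by positivity
    rw [Nat.cast_succ] at hs
    have hNj : (μ / 4) ^ N * ρ₀ ≤ (μ / 4) ^ j * ρ₀ := by
      gcongr ?_ * ρ₀
      exact pow_le_pow_of_le_one (by positivity) hμ₄ (by lia)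
    have hj₀ : (μ / 4) ^ j * ρ₀ ≤ ρ₀ :=
      mul_le_of_le_one_left hρ₀.le (pow_le_one₀ (by positivity) hμ₄)
    have hstep := hu.oscLE_step hdich hbd hC₀ hθ hε hb₀ hη hK hcK
      (by positivity : 0 < (μ / 4) ^ j * ρ₀) (hball.mono hj₀) hμ (hKρ.trans (by gcongr))
      (by linarith : 0 < s - T) hT (hεT.trans (by gcongr)) (hexp.trans' (by gcongr))
      (ih (by lia) (by linarith))
    rw [sub_add_cancel, show μ / 4 * ((μ / 4) ^ j * ρ₀) = (μ / 4) ^ (j + 1) * ρ₀ by ring] at hstep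
    refine hstep.mono ?_
    calc (1 - η / 2) * ((1 - η / 2) ^ j * (2 * C₀) + B + 8 * C₀ * μ ^ 2)
        = (1 - η / 2) ^ (j + 1) * (2 * C₀) + (1 - η / 2) * (B + 8 * C₀ * μ ^ 2) := by ring
      _ ≤ (1 - η / 2) ^ (j + 1) * (2 * C₀) + B := by gcongr

lemma exists_contraction_parameters (hη : 0 < η) (hC₀ : 0 < C₀) (hd : 0 < d) :
    ∃ μ ∈ Ioc (0 : ℝ) 1, ∃ N : ℕ, (1 - η / 2) * (d / 2 + 8 * C₀ * μ ^ 2) ≤ d / 2 ∧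
      (1 - η / 2) ^ N * (2 * C₀) + d / 2 ≤ d := by
  obtain ⟨N, hN⟩ := exists_pow_lt_of_lt_one (by positivity : 0 < d / (4 * C₀))
    (by linarith : 1 - η / 2 < 1)
  rw [lt_div_iff₀ (by positivity)] at hN
  have hμ₀ : 0 < min 1 (d * η / (32 * C₀)) := by positivity
  have hμ₁ : min 1 (d * η / (32 * C₀)) ≤ 1 := min_le_left _ _
  have herr : 8 * C₀ * min 1 (d * η / (32 * C₀)) ^ 2 ≤ η / 2 * (d / 2) :=
    calc 8 * C₀ * min 1 (d * η / (32 * C₀)) ^ 2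
        ≤ 8 * C₀ * (d * η / (32 * C₀)) := by
          gcongr
          exact (pow_le_of_le_one hμ₀.le hμ₁ two_ne_zero).trans (min_le_right _ _)
      _ = η / 2 * (d / 2) := by field_simp; ring
  refine ⟨_, ⟨hμ₀, hμ₁⟩, N, ?_, by linarith⟩
  have herr₀ : 0 ≤ η / 2 * (8 * C₀ * min 1 (d * η / (32 * C₀)) ^ 2) := by positivity
  linarith

lemma eventually_le_abs_log (A : ℝ) : ∀ᶠ ε in 𝓝[>] (0 : ℝ), A ≤ |Real.log ε| :=
  (tendsto_abs_atBot_atTop.comp Real.tendsto_log_nhdsGT_zero).eventually_ge_atTop A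

lemma eventually_mul_sqrt_le (k : ℝ) (hA : 0 < A) : ∀ᶠ ε in 𝓝[>] (0 : ℝ), k * √ε ≤ A := by
  have hlim : Tendsto (fun ε => k * √ε) (𝓝 0) (𝓝 (k * √0)) :=
    Real.continuous_sqrt.continuousAt.const_mul k
  rw [Real.sqrt_zero, mul_zero] at hlim
  exact (hlim.mono_left nhdsWithin_le_nhds).eventually_le_const hA

lemma eventually_mul_mul_abs_log_le (k : ℝ) (hA : 0 < A) :
    ∀ᶠ ε in 𝓝[>] (0 : ℝ), k * (ε * |Real.log ε|) ≤ A := by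
  have hlim : Tendsto (fun ε : ℝ => k * |Real.log ε * ε|) (𝓝[>] 0) (𝓝 (k * |0|)) := by
    simpa only [Real.rpow_one] using
      ((tendsto_log_mul_rpow_nhdsGT_zero one_pos).abs.const_mul k)
  rw [abs_zero, mul_zero] at hlim
  filter_upwards [hlim.eventually_le_const hA, self_mem_nhdsWithin] with ε hle (hε : 0 < ε)
  rwa [abs_mul, abs_of_pos hε, mul_comm |_|] at hle

lemma eventually_exp_abs_log_le (hb₀ : 0 < b₀) (k : ℝ) (hA : 0 < A) :
    ∀ᶠ ε in 𝓝[>] (0 : ℝ),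
      Real.exp (-(2 * b₀ * (|Real.log ε| / b₀ - 5))) * k ≤ A * ε := by
  have hlim : Tendsto (fun ε : ℝ => ε * (Real.exp (10 * b₀) * k)) (𝓝 0)
      (𝓝 (0 * (Real.exp (10 * b₀) * k))) := tendsto_id.mul_const _
  rw [zero_mul] at hlim
  filter_upwards [(hlim.mono_left nhdsWithin_le_nhds).eventually_le_const hA,
    Ioo_mem_nhdsGT one_pos] with ε hle ⟨hε, hε₁⟩
  have hexponent : -(2 * b₀ * (|Real.log ε| / b₀ - 5))
      = Real.log ε + Real.log ε + 10 * b₀ := by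
    rw [abs_of_neg (Real.log_neg hε hε₁)]
    field_simp
    ring
  calc Real.exp (-(2 * b₀ * (|Real.log ε| / b₀ - 5))) * k
      = ε * (Real.exp (10 * b₀) * k) * ε := by
        rw [hexponent, Real.exp_add, Real.exp_add, Real.exp_log hε]
        ring
    _ ≤ A * ε := by gcongr

theorem exists_eventually_oscLE (hθ : 0 < θ) (hb₀ : 0 < b₀) (hC₀ : 0 < C₀) (hL : 0 ≤ L)
    (hρ₀ : 0 < ρ₀) (hb : ∀ x, ‖b x‖ ≤ L * ‖x‖) (hball : IsAttractingBall b₀ b Ω ρ₀)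
    (hd : 0 < d) :
    ∃ ρ > 0, ∃ C > 0, ∀ᶠ ε in 𝓝[>] (0 : ℝ), ∀ u, IsDriftSol θ ε b Ω u →
      (∀ x ∈ Ω, ∀ t, 0 < t → |u x t| ≤ C₀) →
      ∀ s, 1 + C * |Real.log ε| ≤ s → OscLE u ρ s d := by
  have hgrow : Tendsto (fun K : ℝ => b₀ * K ^ 2 / 2) atTop atTop :=
    ((tendsto_pow_atTop two_ne_zero).const_mul_atTop hb₀).atTop_div_const two_pos
  obtain ⟨K, hK, hcK⟩ :=
    ((eventually_ge_atTop 1).and (hgrow.eventually_ge_atTop (sinkRate n θ 1))).exists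
  obtain ⟨η, hη, hdich⟩ := exists_sqrtDichotomy n hθ hL (zero_le_one.trans hK)
  obtain ⟨μ, hμ, N, hBμ, hN⟩ := exists_contraction_parameters hη.1 hC₀ hd
  have hμ₀ := hμ.1
  have hr : 0 < (μ / 4) ^ N * ρ₀ := by positivity
  have hr_le : μ * ((μ / 4) ^ N * ρ₀) ≤ ρ₀ :=
    calc μ * ((μ / 4) ^ N * ρ₀) ≤ 1 * (1 * ρ₀) := by
          gcongr
          · exact hμ.2
          · exact pow_le_one₀ (by positivity) (by linarith [hμ.2])
      _ = ρ₀ := by ring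
  refine ⟨_, hr, (N + 1) / b₀, by positivity, ?_⟩
  filter_upwards [self_mem_nhdsWithin, eventually_le_abs_log (5 * b₀),
    eventually_mul_sqrt_le (K + 6) (mul_pos hμ₀ hr),
    eventually_mul_mul_abs_log_le (sinkRate n θ 1 / b₀)
      (by positivity : 0 < (μ * ((μ / 4) ^ N * ρ₀)) ^ 2 / 16),
    eventually_exp_abs_log_le hb₀ (ρ₀ ^ 2) (by norm_num : (0 : ℝ) < 1 / 8)]
    with ε (hε : 0 < ε) hlog hsqrt hεlog hexp u hu hbd s hs
  have hεT : sinkRate n θ ε * (|Real.log ε| / b₀)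
      = sinkRate n θ 1 / b₀ * (ε * |Real.log ε|) := by
    simp only [sinkRate]
    ring
  have htime : 1 + N * (|Real.log ε| / b₀) ≤ s :=
    calc 1 + N * (|Real.log ε| / b₀) ≤ 1 + (N + 1) * (|Real.log ε| / b₀) := by
          gcongr
          linarith
      _ ≤ s := by rwa [mul_div_assoc', ← div_mul_eq_mul_div]
  have hinner : closedBall 0 ((K + 6) * √ε) ⊆ Ω :=
    (closedBall_subset_closedBall (hsqrt.trans hr_le)).trans hball.subset
  exact (hu.oscLE_iterate (hdich ε hε b Ω u hb hinner hu) hbd hC₀ hθ hε hb₀ hη hK hcK hρ₀ hball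
    hμ hsqrt ((le_div_iff₀ hb₀).2 hlog) (hεT.trans_le hεlog) (by linarith) (by positivity) hBμ
    le_rfl htime).mono hN

end LocalContraction

/-! ### Transport along the flow of the drift -/

section Flow

variable {b : Eu n → Eu n} {X : ℝ → Eu n → Eu n} {K : NNReal} {Ω S : Set (Eu n)} {t T ρ : ℝ}

lemma dist_le_mul_exp_of_hasDerivAt (hb : LipschitzWith K b) {f g : ℝ → Eu n}
    (hf : ∀ t, HasDerivAt f (b (f t)) t) (hg : ∀ t, HasDerivAt g (b (g t)) t) (ht : 0 ≤ t) :
    dist (f t) (g t) ≤ dist (f 0) (g 0) * Real.exp (K * t) := by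
  simpa using dist_le_of_trajectories_ODE (v := fun _ => b) (a := 0) (b := t) (fun _ => hb)
    (fun s _ => (hf s).continuousAt.continuousWithinAt) (fun s _ => (hf s).hasDerivWithinAt)
    (fun s _ => (hg s).continuousAt.continuousWithinAt) (fun s _ => (hg s).hasDerivWithinAt)
    le_rfl t ⟨ht, le_rfl⟩

lemma GAS.continuous_left (hX : GAS b X) (x : Eu n) : Continuous fun t => X t x :=
  continuous_iff_continuousAt.2 fun t => (hX.2.1 x t).continuousAt

lemma GAS.add_apply (hX : GAS b X) (hb : LipschitzWith K b) (s : ℝ) (ht : 0 ≤ t) (x : Eu n) :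
    X (s + t) x = X t (X s x) := by
  have hdist := dist_le_mul_exp_of_hasDerivAt hb (f := fun t => X (s + t) x)
    (g := fun t => X t (X s x)) (fun t => (hX.2.1 x (s + t)).comp_const_add s t)
    (fun t => hX.2.1 _ t) ht
  simp only [add_zero, hX.1, dist_self, zero_mul] at hdist
  exact dist_le_zero.1 hdist

lemma GAS.lipschitzWith (hX : GAS b X) (hb : LipschitzWith K b) (ht : t ∈ Icc 0 T) :
    LipschitzWith (Real.toNNReal (Real.exp (K * T))) (X t) := by
  refine LipschitzWith.of_dist_le_mul fun x y => ?_
  calc dist (X t x) (X t y) ≤ dist x y * Real.exp (K * t) := by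
        simpa only [hX.1] using dist_le_mul_exp_of_hasDerivAt hb (hX.2.1 x) (hX.2.1 y) ht.1
    _ ≤ dist x y * Real.exp (K * T) := by gcongr; exact ht.2
    _ = Real.toNNReal (Real.exp (K * T)) * dist x y := by
        rw [Real.coe_toNNReal _ (Real.exp_pos _).le, mul_comm]

lemma GAS.isCompact_image (hX : GAS b X) (hb : LipschitzWith K b) (hS : IsCompact S) (T : ℝ) :
    IsCompact ((fun p : ℝ × Eu n => X p.1 p.2) '' (Icc 0 T ×ˢ S)) :=
  (isCompact_Icc.prod hS).image_of_continuousOn <|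
    continuousOn_prod_of_continuousOn_lipschitzOnWith' _ (Real.toNNReal (Real.exp (K * T)))
      (fun _ ht => (hX.lipschitzWith hb ht).lipschitzOnWith)
      fun x _ => (hX.continuous_left x).continuousOn

lemma GAS.exists_forall_norm_le (hX : GAS b X) (hb : LipschitzWith K b) (hS : IsCompact S)
    (hρ : 0 < ρ) : ∃ T > 0, ∀ x ∈ S, ‖X T x‖ ≤ ρ := by
  obtain ⟨d, hd, hstable⟩ := hX.2.2.2 ρ hρ
  have hcont (N : ℕ) : Continuous (X N) :=
    (hX.lipschitzWith hb ⟨N.cast_nonneg, le_rfl⟩).continuous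
  have hcover : S ⊆ ⋃ N : ℕ, {x | ‖X N x‖ < d} := fun x _ => by
    have hlim : Tendsto (fun N : ℕ => ‖X N x‖) atTop (𝓝 0) := by
      simpa using ((hX.2.2.1 x).comp tendsto_natCast_atTop_atTop).norm
    exact mem_iUnion.2 (hlim.eventually_lt_const hd).exists
  obtain ⟨F, hF⟩ := hS.elim_finite_subcover _
    (fun N => isOpen_lt (hcont N).norm continuous_const) hcover
  refine ⟨(F.sup id : ℕ) + 1, by positivity, fun x hx => ?_⟩
  obtain ⟨N, hN, hxN⟩ := mem_iUnion₂.1 (hF hx)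
  have hle : (N : ℝ) ≤ (F.sup id : ℕ) := Nat.cast_le.2 (Finset.le_sup (f := id) hN)
  have hflow := hX.add_apply hb N (by linarith : 0 ≤ ((F.sup id : ℕ) + 1 - N : ℝ)) x
  rw [add_sub_cancel] at hflow
  rw [hflow]
  exact (hstable _ hxN _ (by linarith)).le

lemma exists_first_nonneg {f : ℝ → ℝ} (hf : Continuous f) (hf₀ : f 0 < 0) (ht : 0 ≤ t)
    (hft : 0 ≤ f t) : ∃ τ, 0 ≤ f τ ∧ ∀ᶠ s in 𝓝[<] τ, f s < 0 := by
  have hcompact : IsCompact (Icc 0 t ∩ f ⁻¹' Ici 0) :=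
    isCompact_Icc.inter_right (isClosed_Ici.preimage hf)
  obtain ⟨τ, ⟨hτ, hfτ⟩, hleast⟩ := hcompact.exists_isLeast ⟨t, ⟨ht, le_rfl⟩, hft⟩
  have hτ₀ : 0 < τ := hτ.1.lt_of_ne (by rintro rfl; exact hf₀.not_ge hfτ)
  refine ⟨τ, hfτ, ?_⟩
  filter_upwards [Ioo_mem_nhdsLT hτ₀] with s hs
  by_contra! hfs
  exact hs.2.not_ge (hleast ⟨⟨hs.1.le, hs.2.le.trans hτ.2⟩, hfs⟩)

lemma nonneg_of_hasDerivAt_of_neg_left {f : ℝ → ℝ} {f' τ : ℝ} (hf : HasDerivAt f f' τ)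
    (hτ : 0 ≤ f τ) (hneg : ∀ᶠ s in 𝓝[<] τ, f s < 0) : 0 ≤ f' := by
  have hslope : Tendsto (slope f τ) (𝓝[<] τ) (𝓝 f') :=
    (hasDerivAt_iff_tendsto_slope.1 hf).mono_left (nhdsWithin_mono _ fun s hs => ne_of_lt hs)
  refine ge_of_tendsto hslope ?_
  filter_upwards [hneg, self_mem_nhdsWithin] with s hs (hsτ : s < τ)
  rw [slope_def_field]
  exact div_nonneg_of_nonpos (by linarith) (by linarith)

lemma inner_gradient_neg_of_dotp_neg {ν : Eu n → Eu n} {φ : Eu n → ℝ} {x p : Eu n}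
    (hν : ν x = ‖gradient φ x‖⁻¹ • gradient φ x) (hp : dotp p (ν x) < 0) :
    inner ℝ (gradient φ x) p < 0 := by
  rw [dotp_eq_inner, hν, inner_smul_right, real_inner_comm] at hp
  exact neg_of_mul_neg_right hp (by positivity)

lemma GAS.mem_of_mem (hX : GAS b X) {ν : Eu n → Eu n} (hdom : IsBdC1With Ω ν)
    (hin : ∀ x ∈ frontier Ω, dotp (b x) (ν x) < 0) {x : Eu n} (hx : x ∈ Ω) (ht : 0 ≤ t) :
    X t x ∈ Ω := by
  obtain ⟨hopen, -, φ, hφ, rfl, hν⟩ := hdom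
  by_contra hexit
  have hcont := hX.continuous_left x
  obtain ⟨τ, hτ, hneg⟩ := exists_first_nonneg (hφ.continuous.comp hcont)
    ((congrArg φ (hX.1 x)).trans_lt hx) ht (not_lt.1 hexit)
  have hfrontier : X τ x ∈ frontier {y | φ y < 0} := by
    rw [hopen.frontier_eq]
    exact ⟨mem_closure_of_tendsto (hcont.continuousAt.mono_left nhdsWithin_le_nhds) hneg,
      not_lt.2 hτ⟩
  have hderiv : HasDerivAt (φ ∘ fun s => X s x) (inner ℝ (gradient φ (X τ x)) (b (X τ x))) τ := by
    simpa using (hφ.differentiable one_ne_zero (X τ x)).hasGradientAt.hasFDerivAt.comp_hasDerivAt τ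
      (hX.2.1 x τ)
  exact (nonneg_of_hasDerivAt_of_neg_left hderiv hτ hneg).not_gt
    (inner_gradient_neg_of_dotp_neg (hν _ hfrontier).2 (hin _ hfrontier))

lemma GAS.exists_tube_subset (hX : GAS b X) (hb : LipschitzWith K b) {ν : Eu n → Eu n}
    (hdom : IsBdC1With Ω ν) (hin : ∀ x ∈ frontier Ω, dotp (b x) (ν x) < 0) (hS : IsCompact S)
    (hSΩ : S ⊆ Ω) (T : ℝ) :
    ∃ r > 0, ∀ x ∈ S, ∀ t ∈ Icc 0 T, closedBall (X t x) r ⊆ Ω := by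
  obtain ⟨r, hr, hthick⟩ := (hX.isCompact_image hb hS T).exists_cthickening_subset_open hdom.1 <| by
    rintro _ ⟨⟨t, x⟩, ⟨ht, hx⟩, rfl⟩
    exact hX.mem_of_mem hdom hin (hSΩ hx) ht.1
  exact ⟨r, hr, fun x hx t ht => (closedBall_subset_cthickening
    (mem_image_of_mem (fun p : ℝ × Eu n => X p.1 p.2) (mk_mem_prod ht hx)) r).trans hthick⟩

end Flow

section Transport

variable {θ ε C₀ r k t : ℝ} {b : Eu n → Eu n} {X : ℝ → Eu n → Eu n} {K : NNReal} {Ω S : Set (Eu n)}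
  {u : Eu n → ℝ → ℝ}

lemma inner_sub_le_of_lipschitzWith (hb : LipschitzWith K b) (x y : Eu n) :
    inner ℝ (b x - b y) (x - y) ≤ K * ‖x - y‖ ^ 2 :=
  calc inner ℝ (b x - b y) (x - y) ≤ ‖b x - b y‖ * ‖x - y‖ := real_inner_le_norm _ _
    _ ≤ K * ‖x - y‖ * ‖x - y‖ := by gcongr; exact hb.norm_sub_le x y
    _ = K * ‖x - y‖ ^ 2 := by ring

/-- The opening after time `t` of the paraboloids that are carried along a tube of radius `r`
around a trajectory of a `K`-Lipschitz drift, for solutions bounded by `C₀`. Its exponential growth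
absorbs the variation of the drift across the tube. -/
def tubeOpening (C₀ r K t : ℝ) : ℝ := 2 * C₀ / r ^ 2 * Real.exp (2 * K * t)

lemma tubeOpening_pos (hC₀ : 0 < C₀) (hr : 0 < r) (k t : ℝ) : 0 < tubeOpening C₀ r k t := by
  unfold tubeOpening
  positivity

lemma monotone_tubeOpening (hC₀ : 0 ≤ C₀) (hk : 0 ≤ k) : Monotone (tubeOpening C₀ r k) :=
  fun _ _ h => by unfold tubeOpening; gcongr

lemma two_mul_le_tubeOpening_mul_sq (hC₀ : 0 ≤ C₀) (hr : r ≠ 0) (hk : 0 ≤ k) (ht : 0 ≤ t) :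
    2 * C₀ ≤ tubeOpening C₀ r k t * r ^ 2 :=
  calc 2 * C₀ = tubeOpening C₀ r k 0 * r ^ 2 := by simp [tubeOpening, hr]
    _ ≤ tubeOpening C₀ r k t * r ^ 2 := by gcongr; exact monotone_tubeOpening hC₀ hk ht

lemma hasDerivAt_tubeOpening (C₀ r k t : ℝ) :
    HasDerivAt (tubeOpening C₀ r k) (2 * k * tubeOpening C₀ r k t) t := by
  have hexponent : HasDerivAt (fun t => 2 * k * t) (2 * k) t := by
    simpa using (hasDerivAt_id t).const_mul (2 * k)
  exact (hexponent.exp.const_mul (2 * C₀ / r ^ 2)).congr_deriv (by unfold tubeOpening; ring)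

-- The barrier follows the trajectory backwards, with centre `X (s + T - t) x` at time `t`, because
-- the equation carries information against the drift.
lemma IsDriftSol.le_along_flow (hu : IsDriftSol θ ε b Ω u)
    (hbd : ∀ x ∈ Ω, ∀ t, 0 < t → |u x t| ≤ C₀) (hC₀ : 0 < C₀) (hθ : 0 < θ) (hε : 0 < ε)
    (hb : LipschitzWith K b) (hX : GAS b X) {x : Eu n} {T s m : ℝ} (hr : 0 < r) (hT : 0 ≤ T)
    (htube : ∀ t ∈ Icc 0 T, closedBall (X t x) r ⊆ Ω) (hs : 0 < s) (hm : m ≤ C₀)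
    (hinit : ∀ y, ‖y - X T x‖ ≤ r → m ≤ u y s) :
    m - sinkRate n θ ε * tubeOpening C₀ r K T * T ≤ u x (s + T) := by
  have hK : (0 : ℝ) ≤ K := K.2
  have hrate := sinkRate_pos n hθ hε
  have hopening := tubeOpening_pos hC₀ hr K
  set sink := sinkRate n θ ε * tubeOpening C₀ r K T
  have hsink₀ : 0 < sink := mul_pos hrate (hopening T)
  have hmemΩ {t : ℝ} (ht : t ∈ Icc s (s + T)) {y : Eu n} (hy : ‖y - X (s + T - t) x‖ ≤ r) :
      y ∈ Ω := htube _ ⟨by linarith [ht.2], by linarith [ht.1]⟩ (mem_closedBall_iff_norm.2 hy)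
  have hheight (t : ℝ) : HasDerivAt (fun t => m - sink * (t - s)) (-sink) t := by
    simpa using (((hasDerivAt_id t).sub_const s).const_mul sink).const_sub m
  have hbarrier := IsParabolicSol.quadBarrier_le hu (s := s) (s₁ := s + T) (R := r) hθ.le hε
    (fun t _ => hheight t) (fun t _ => (hasDerivAt_tubeOpening C₀ r K (t - s)).comp_sub_const t s)
    (fun t _ => (hX.2.1 x (s + T - t)).comp_const_sub (s + T) t) (fun t _ => hopening _)
    (fun p hp => ⟨hmemΩ hp.1 hp.2, hs.trans_le hp.1.1⟩) (fun t ht => ?_)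
    (fun t _ y _ p hp => ?_) (fun y hy => ?_) (fun t ht y hy => ?_) (s + T)
    ⟨by linarith, le_rfl⟩ x (by simp [hX.1, hr.le])
  · simpa [quadBarrier, hX.1] using hbarrier
  · have hmono : tubeOpening C₀ r K (t - s) ≤ tubeOpening C₀ r K T :=
      monotone_tubeOpening hC₀.le hK (by linarith [ht.2])
    linarith [mul_le_mul_of_nonneg_left hmono hrate.le]
  · obtain rfl : p = b y := hp
    rw [← sub_eq_add_neg]
    linarith [mul_le_mul_of_nonneg_left (inner_sub_le_of_lipschitzWith hb y (X (s + T - t) x))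
      (hopening (t - s)).le]
  · have hy' : m ≤ u y s := hinit y (by simpa using hy)
    have hquad := mul_nonneg (hopening (s - s)).le (sq_nonneg ‖y - X (s + T - s) x‖)
    simp only [quadBarrier]
    linarith
  · have hlow := (abs_le.1 (hbd y (hmemΩ ht hy.le) t (hs.trans_le ht.1))).1
    have hlateral := two_mul_le_tubeOpening_mul_sq hC₀.le hr.ne' hK (sub_nonneg.2 ht.1)
    have hdrop := mul_nonneg hsink₀.le (sub_nonneg.2 ht.1)
    simp only [quadBarrier, hy]
    linarith

theorem GAS.exists_abs_sub_le (hX : GAS b X) (hb : LipschitzWith K b) {ν : Eu n → Eu n}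
    (hdom : IsBdC1With Ω ν) (hin : ∀ x ∈ frontier Ω, dotp (b x) (ν x) < 0) (hS : IsCompact S)
    (hSΩ : S ⊆ Ω) (hθ : 0 < θ) (hC₀ : 0 < C₀) (h0 : 0 ∈ Ω) {ρ : ℝ}
    (hρ : 0 < ρ) :
    ∃ T > 0, ∃ c, ∀ ε > 0, ∀ u, IsDriftSol θ ε b Ω u →
      (∀ x ∈ Ω, ∀ t, 0 < t → |u x t| ≤ C₀) → ∀ s > 0, ∀ d, OscLE u ρ s d →
      ∀ x ∈ S, ∀ y ∈ S, |u x (s + T) - u y (s + T)| ≤ d + c * ε := by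
  obtain ⟨T, hT, hTρ⟩ := hX.exists_forall_norm_le hb hS (half_pos hρ)
  obtain ⟨r₁, hr₁, htube⟩ := hX.exists_tube_subset hb hdom hin hS hSΩ T
  have hr : 0 < min r₁ (ρ / 2) := lt_min hr₁ (half_pos hρ)
  set loss : ℝ → ℝ := fun ε => sinkRate n θ ε * tubeOpening C₀ (min r₁ (ρ / 2)) K T * T with hloss
  have hlow {ε : ℝ} (hε : 0 < ε) {u : Eu n → ℝ → ℝ} (hu : IsDriftSol θ ε b Ω u)
      (hbd : ∀ x ∈ Ω, ∀ t, 0 < t → |u x t| ≤ C₀) {s m : ℝ} (hs : 0 < s)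
      (hm : ∀ x, ‖x‖ ≤ ρ → m ≤ u x s) {x : Eu n} (hx : x ∈ S) : m - loss ε ≤ u x (s + T) := by
    have hzero : ‖(0 : Eu n)‖ ≤ ρ := by simpa using hρ.le
    have hmC : m ≤ C₀ := (hm 0 hzero).trans (abs_le.1 (hbd 0 h0 s hs)).2
    refine hu.le_along_flow hbd hC₀ hθ hε hb hX hr hT.le (fun t ht =>
      (closedBall_subset_closedBall (min_le_left _ _)).trans (htube x hx t ht)) hs hmC
      fun y hy => hm y ?_
    calc ‖y‖ = ‖y - X T x + X T x‖ := by rw [sub_add_cancel]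
      _ ≤ ‖y - X T x‖ + ‖X T x‖ := norm_add_le _ _
      _ ≤ ρ / 2 + ρ / 2 := add_le_add (hy.trans (min_le_right _ _)) (hTρ x hx)
      _ = ρ := add_halves ρ
  refine ⟨T, hT, 2 * loss 1, fun ε hε u hu hbd s hs d ⟨m, M, hwidth, hmM⟩ => ?_⟩
  have hscale : loss ε = loss 1 * ε := by simp only [hloss, sinkRate]; ring
  have hrange {x : Eu n} (hx : x ∈ S) : u x (s + T) ∈ Icc (m - loss ε) (M + loss ε) :=
    ⟨hlow hε hu hbd hs (fun y hy => (hmM y hy).1) hx, by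
      linarith [hlow hε hu.neg (fun y hy t ht => (abs_neg _).trans_le (hbd y hy t ht)) hs
        (fun y hy => neg_le_neg (hmM y hy).2) hx]⟩
  intro x hx y hy
  rw [abs_le]
  constructor <;> linarith [(hrange hx).1, (hrange hx).2, (hrange hy).1, (hrange hy).2]

end Transport

lemma isDriftSol_of_solveL {θ ε : ℝ} {Ω : Set (Eu n)} (hΩ : IsOpen Ω) {b : Eu n → Eu n}
    {A : Eu n → ℝ → Matrix (Fin n) (Fin n) ℝ} (hA : MatC θ A Ω ⊤) {u : Eu n → ℝ → ℝ}
    (hu : Classical21 u Ω ⊤) (hL : SolveL ε A b u Ω ⊤) : IsDriftSol θ ε b Ω u where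
  isOpen := hΩ.prod isOpen_Ioi
  continuousOn := hu.1.mono fun _ hp => ⟨subset_closure hp.1, le_of_lt hp.2, le_top⟩
  continuousOn_tD := hu.2.2.1.mono fun _ hp => ⟨hp.1, hp.2, ENNReal.ofReal_lt_top⟩
  contDiffAt h := (hu.2.1 _ h.1 _ h.2 ENNReal.ofReal_lt_top).1
  differentiableAt h := (hu.2.1 _ h.1 _ h.2 ENNReal.ofReal_lt_top).2
  exists_eq h := ⟨_, _, hA.2 (_, _) ⟨subset_closure h.1, le_of_lt h.2, le_top⟩,
    mem_singleton _, hL _ h.1 _ h.2 ENNReal.ofReal_lt_top⟩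

lemma isAttractingBall_half {b₀ r₀ : ℝ} {b : Eu n → Eu n} {Ω : Set (Eu n)} (hr₀ : 0 < r₀)
    (hsub : closedBall 0 r₀ ⊆ Ω) (hco : ∀ x ∈ ball 0 r₀, dotp (b x) x ≤ -b₀ * ‖x‖ ^ 2) :
    IsAttractingBall b₀ b Ω (r₀ / 2) where
  subset := (closedBall_subset_closedBall (half_le_self hr₀.le)).trans hsub
  inner_le x hx := by
    rw [← dotp_eq_inner]
    exact hco x (mem_ball_zero_iff.2 (hx.trans_lt (half_lt_self hr₀)))

lemma exists_isCompact_Omd_subset {Ω : Set (Eu n)} (hopen : IsOpen Ω)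
    (hbdd : Bornology.IsBounded Ω) {δ : ℝ} (hδ : 0 < δ) :
    ∃ S, IsCompact S ∧ Omd Ω δ ⊆ S ∧ S ⊆ Ω := by
  refine ⟨closure Ω ∩ {x | δ ≤ infDist x (frontier Ω)}, hbdd.isCompact_closure.inter_right
    (isClosed_le continuous_const (continuous_infDist_pt _)),
    fun x hx => ⟨subset_closure hx.1, hx.2.le⟩, fun x ⟨hx, hδx⟩ => ?_⟩
  by_contra hxΩ
  have hfrontier : x ∈ frontier Ω := hopen.frontier_eq ▸ ⟨hx, hxΩ⟩
  exact hδ.not_ge (hδx.trans_eq (infDist_zero_of_mem hfrontier))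

theorem stmt10_general {θ₀ : ℝ} (hθ : 0 < θ₀) {Ω : Set (Eu n)} {ν b : Eu n → Eu n} {b₀ r₀ : ℝ}
    (hdom : IsBdC1With Ω ν) (hbl : ∃ K : NNReal, LipschitzWith K b) (hb0 : b 0 = 0)
    (hgas : ∃ X : ℝ → Eu n → Eu n, GAS b X) (hin : ∀ x ∈ frontier Ω, dotp (b x) (ν x) < 0)
    (hb₀ : 0 < b₀) (hr₀ : 0 < r₀) (hsub : closedBall 0 r₀ ⊆ Ω)
    (hco : ∀ x ∈ ball 0 r₀, dotp (b x) x ≤ -b₀ * ‖x‖ ^ 2) {δ C₀ : ℝ} (hδ : 0 < δ)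
    (hC₀ : 0 < C₀) :
    ∃ ε₀ ∈ Ioo (0 : ℝ) 1, ∃ C > 0, ∀ ε ∈ Ioc 0 ε₀, ∀ u, IsDriftSol θ₀ ε b Ω u →
      (∀ x ∈ Ω, ∀ t, 0 < t → |u x t| ≤ C₀) →
      ∀ x ∈ Omd Ω δ, ∀ t, C * |Real.log ε| ≤ t → |u x t - u 0 t| ≤ δ := by
  obtain ⟨K, hb⟩ := hbl
  obtain ⟨X, hX⟩ := hgas
  have h0 : 0 ∈ Ω := hsub (mem_closedBall_self hr₀.le)
  have hb_le (x : Eu n) : ‖b x‖ ≤ K * ‖x‖ := by simpa [hb0] using hb.norm_sub_le x 0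
  obtain ⟨S, hS, hδS, hSΩ⟩ := exists_isCompact_Omd_subset hdom.1 hdom.2.1 hδ
  obtain ⟨ρ, hρ, C, hC, hlocal⟩ := exists_eventually_oscLE hθ hb₀ hC₀ K.2 (half_pos hr₀) hb_le
    (isAttractingBall_half hr₀ hsub hco) (half_pos hδ)
  obtain ⟨T, hT, c, htransport⟩ := hX.exists_abs_sub_le hb hdom hin (hS.insert 0)
    (insert_subset h0 hSΩ) hθ hC₀ h0 hρ
  have hsmall : ∀ᶠ ε in 𝓝[>] (0 : ℝ), c * ε < δ / 2 :=
    ((continuous_const_mul c).tendsto' 0 0 (mul_zero c)).eventually_lt_const (half_pos hδ)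
      |>.filter_mono nhdsWithin_le_nhds
  obtain ⟨ε₁, hε₁ : 0 < ε₁, hall⟩ := mem_nhdsGT_iff_exists_Ioc_subset.1
    ((hlocal.and hsmall).and (eventually_le_abs_log 1))
  refine ⟨min ε₁ (1 / 2), ⟨by positivity, (min_le_right _ _).trans_lt (by norm_num)⟩,
    1 + C + T, by positivity, fun ε hε u hu hbd x hx t ht => ?_⟩
  obtain ⟨⟨hosc, hcε⟩, hlog⟩ := hall ⟨hε.1, hε.2.trans (min_le_left _ _)⟩
  have hTlog : T ≤ T * |Real.log ε| := le_mul_of_one_le_right hT.le hlog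
  have htime : 1 + C * |Real.log ε| ≤ t - T := by linarith
  have hpos : 0 < t - T := htime.trans_lt' (by positivity)
  have hclose := htransport ε hε.1 u hu hbd (t - T) hpos _ (hosc u hu hbd _ htime)
    x (mem_insert_of_mem 0 (hδS hx)) 0 (mem_insert 0 S)
  rw [sub_add_cancel] at hclose
  linarith

/-- Theorem 2.8: uniform closeness of `u^ε(·,t)` to `u^ε(0,t)`. -/
theorem stmt10 {n : ℕ} (θ₀ : ℝ) (hθ : θ₀ ∈ Set.Ioc (0:ℝ) 1)
    (Ω : Set (Eu n)) (ν : Eu n → Eu n) (b : Eu n → Eu n) (b₀ r₀ : ℝ)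
    (hdom : IsBdC1With Ω ν) (h0 : (0 : Eu n) ∈ Ω)
    (hbl : ∃ K : NNReal, LipschitzWith K b) (hb0 : b 0 = 0)
    (hgas : ∃ X : ℝ → Eu n → Eu n, GAS b X)
    (hin : ∀ x ∈ frontier Ω, dotp (b x) (ν x) < 0)
    (hb₀ : 0 < b₀) (hr₀ : 0 < r₀) (hsub : closedBall (0 : Eu n) r₀ ⊆ Ω)
    (hco : ∀ x ∈ ball (0 : Eu n) r₀, dotp (b x) x ≤ -b₀ * ‖x‖ ^ 2)
    (δ C₀ : ℝ) (hδ : 0 < δ) (hC₀ : 0 < C₀) :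
    ∃ ε₀ ∈ Set.Ioo (0:ℝ) 1, ∃ C > (0:ℝ),
      ∀ ε ∈ Set.Ioc (0:ℝ) ε₀,
      ∀ A : Eu n → ℝ → Matrix (Fin n) (Fin n) ℝ, MatC θ₀ A Ω ⊤ →
      ∀ u : Eu n → ℝ → ℝ, Classical21 u Ω ⊤ → SolveL ε A b u Ω ⊤ →
      (∀ x ∈ Ω, ∀ t : ℝ, 0 ≤ t → |u x t| ≤ C₀) →
      ∀ x ∈ Omd Ω δ, ∀ t : ℝ, C * |Real.log ε| ≤ t → |u x t - u 0 t| ≤ δ := by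
  obtain ⟨ε₀, hε₀, C, hC, hclose⟩ :=
    stmt10_general hθ.1 hdom hbl hb0 hgas hin hb₀ hr₀ hsub hco hδ hC₀
  exact ⟨ε₀, hε₀, C, hC, fun ε hε A hA u hu hL hbd =>
    hclose ε hε u (isDriftSol_of_solveL hdom.1 hA hu hL) fun x hx t ht => hbd x hx t ht.le⟩
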